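/- arXiv:1912.05424 — 3 statements merged into one kernel-verified Lean document; each statement's English description precedes it below -/
import Mathlib

section
/- Let A be a commutative ring, n ≥ 3, and f ∈ A[x] a monic polynomial. Then the natural map GL_n(A[x])/E_n(A[x]) → GL_n(A[x]_f)/E_n(A[x]_f) induced by the localization A[x] → A[x]_f is injective; equivalently, if g ∈ GL_n(A[x]) becomes a product of elementary matrices over A[x]_f, then g ∈ E_n(A[x]). -/
/-- The elementary subgroup `E_n(R) ⊆ GL_n(R)`. -/
def elemGL (n : ℕ) (R : Type*) [CommRing R] : Subgroup (GL (Fin n) R) :=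
  Subgroup.closure {g | ∃ (i j : Fin n) (a : R), i ≠ j ∧
    (g : Matrix (Fin n) (Fin n) R) = Matrix.transvection i j a}

/-- The homomorphism `GL_n(R) → GL_n(S)` induced by a ring homomorphism. -/
def glMap {n : ℕ} {R S : Type*} [CommRing R] [CommRing S] (f : R →+* S) :
    GL (Fin n) R →* GL (Fin n) S := Units.map (RingHom.mapMatrix f).toMonoidHom

/-!
Replace `X` by `T⁻¹`. The reversed polynomial `F` of `f` has constant term `1`, so `X` and `F` are
coprime, and `A[T;T⁻¹]_F` is obtained from `A[X]` by inverting both. Since elementary matrices over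
`A[T;T⁻¹]_F` factor through the two localizations, patching turns the hypothesis into
`g(T) h(T⁻¹) ∈ E_n(A[T;T⁻¹])` for some `h ∈ GL_n(A[X])` with `h(0) = 1`.

By Quillen's local–global principle one may then assume that `A` is local. In that case every
element of `E_n(A[T;T⁻¹])` has the form `a(T) T^d κ b(T⁻¹)` with `a`, `b` elementary and `κ` a
product of two elementary matrices, in `T` and in `T⁻¹`, that are trivial modulo the maximal ideal.
Reducing modulo the maximal ideal forces `d = 0`, and comparing the parts in `T` and in `T⁻¹`
yields that `g` and `h` are elementary.

Throughout, `n ≥ 3` enters through Suslin's theorem that `1 + v ⊗ w` is elementary when `w` is an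
alternating image of `v`. Conjugating such a matrix, or substituting `X ↦ s X` into it, gives a
matrix of the same shape.
-/

open Matrix Polynomial
open scoped LaurentPolynomial Pointwise
open LaurentPolynomial (T trunc)

section Elementary

variable {n : ℕ} {R S R' : Type*} [CommRing R] [CommRing S] [CommRing R']

@[simp]
theorem coe_glMap (f : R →+* S) (g : GL (Fin n) R) : (glMap f g).val = g.val.map f := rfl

theorem glMap_glMap (f : R →+* S) (f' : S →+* R') (g : GL (Fin n) R) :
    glMap f' (glMap f g) = glMap (f'.comp f) g := rfl

@[simp]
theorem glMap_id (g : GL (Fin n) R) : glMap (RingHom.id R) g = g := rfl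

/-- The transvection `1 + c e_{ij}`, `i ≠ j`, as an element of `GL_n(R)`. -/
def transvectionGL {i j : Fin n} (h : i ≠ j) (c : R) : GL (Fin n) R where
  val := transvection i j c
  inv := transvection i j (-c)
  val_inv := by simp [transvection_mul_transvection_same _ _ h]
  inv_val := by simp [transvection_mul_transvection_same _ _ h]

section Transvection

variable {i j : Fin n} (h : i ≠ j)

theorem coe_transvectionGL (c : R) : (transvectionGL h c).val = 1 + single i j c := rfl

theorem transvectionGL_mem_elemGL (c : R) : transvectionGL h c ∈ elemGL n R :=
  Subgroup.subset_closure ⟨i, j, c, h, rfl⟩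

theorem transvectionGL_inv (c : R) : (transvectionGL h c)⁻¹ = transvectionGL h (-c) :=
  Units.ext rfl

theorem transvectionGL_add (c d : R) :
    transvectionGL h (c + d) = transvectionGL h c * transvectionGL h d :=
  Units.ext (transvection_mul_transvection_same _ _ h c d).symm

@[simp]
theorem transvectionGL_zero : transvectionGL h (0 : R) = 1 :=
  Units.ext (transvection_zero i j)

@[simp]
theorem glMap_transvectionGL (f : R →+* S) (c : R) :
    glMap f (transvectionGL h c) = transvectionGL h (f c) := by
  apply Units.ext
  simp [coe_transvectionGL, Matrix.map_add]

end Transvection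

@[elab_as_elim]
theorem elemGL_induction {P : ∀ g : GL (Fin n) R, g ∈ elemGL n R → Prop} (one : P 1 (one_mem _))
    (transvection_mul : ∀ i j (h : i ≠ j) c g (hg : g ∈ elemGL n R), P g hg →
      P (transvectionGL h c * g) (mul_mem (transvectionGL_mem_elemGL h c) hg))
    {g : GL (Fin n) R} (hg : g ∈ elemGL n R) : P g hg := by
  induction hg using Subgroup.closure_induction_left with
  | one => exact one
  | mul_left x hx y hy ih =>
    obtain ⟨i, j, a, h, hxa⟩ := hx
    obtain rfl : x = transvectionGL h a := Units.ext hxa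
    exact transvection_mul _ _ h a y hy ih
  | inv_mul_cancel x hx y hy ih =>
    obtain ⟨i, j, a, h, hxa⟩ := hx
    obtain rfl : x = transvectionGL h a := Units.ext hxa
    simp only [transvectionGL_inv]
    exact transvection_mul _ _ h (-a) y hy ih

theorem elemGL_le {H : Subgroup (GL (Fin n) R)}
    (hH : ∀ i j (h : i ≠ j) c, transvectionGL h c ∈ H) : elemGL n R ≤ H := fun g hg => by
  induction hg using elemGL_induction with
  | one => exact H.one_mem
  | transvection_mul i j h c g _ ih => exact H.mul_mem (hH i j h c) ih

theorem glMap_mem_elemGL (f : R →+* S) {g : GL (Fin n) R} (hg : g ∈ elemGL n R) :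
    glMap f g ∈ elemGL n S := by
  suffices elemGL n R ≤ (elemGL n S).comap (glMap f) from this hg
  refine elemGL_le fun i j h c => ?_
  rw [Subgroup.mem_comap, glMap_transvectionGL]
  exact transvectionGL_mem_elemGL h _

/-- The matrix `M` lies in `E_n(R)`. Having this as a predicate on matrices lets matrix identities
certify elementarity without exhibiting inverses. -/
def IsElementary (M : Matrix (Fin n) (Fin n) R) : Prop := ∃ g ∈ elemGL n R, g.val = M

namespace IsElementary

protected theorem one : IsElementary (1 : Matrix (Fin n) (Fin n) R) := ⟨1, one_mem _, rfl⟩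

protected theorem mul {M N : Matrix (Fin n) (Fin n) R} (hM : IsElementary M)
    (hN : IsElementary N) : IsElementary (M * N) := by
  obtain ⟨g, hg, rfl⟩ := hM
  obtain ⟨h, hh, rfl⟩ := hN
  exact ⟨g * h, mul_mem hg hh, rfl⟩

protected theorem transpose {M : Matrix (Fin n) (Fin n) R} (hM : IsElementary M) :
    IsElementary Mᵀ := by
  obtain ⟨g, hg, rfl⟩ := hM
  induction hg using elemGL_induction with
  | one => simpa using IsElementary.one
  | transvection_mul i j h c g _ ih =>
    rw [Units.val_mul, transpose_mul]
    exact ih.mul ⟨transvectionGL h.symm c, transvectionGL_mem_elemGL _ _, by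
      simp [coe_transvectionGL]⟩

end IsElementary

end Elementary

section RankOne

variable {ι R : Type*} [Fintype ι] [DecidableEq ι] [CommRing R]

theorem one_add_vecMulVec_mul_add_left {v v' w : ι → R} (h : w ⬝ᵥ v' = 0) :
    (1 + vecMulVec v w) * (1 + vecMulVec v' w) = 1 + vecMulVec (v + v') w := by
  simp only [mul_add, add_mul, mul_one, one_mul, vecMulVec_mul_vecMulVec, h, zero_smul,
    vecMulVec_zero, add_vecMulVec]
  abel

theorem one_add_vecMulVec_mul_add_right {v w w' : ι → R} (h : w ⬝ᵥ v = 0) :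
    (1 + vecMulVec v w) * (1 + vecMulVec v w') = 1 + vecMulVec v (w + w') := by
  simp only [mul_add, add_mul, mul_one, one_mul, vecMulVec_mul_vecMulVec, h, zero_smul,
    vecMulVec_zero, vecMulVec_add]
  abel

theorem one_add_vecMulVec_eq_commutator {v w e : ι → R}
    (hee : e ⬝ᵥ e = 1) (hev : e ⬝ᵥ v = 0) (hwe : w ⬝ᵥ e = 0) (hwv : w ⬝ᵥ v = 0) :
    1 + vecMulVec v w = (1 + vecMulVec v e) * (1 + vecMulVec e w) * (1 + vecMulVec (-v) e) *
      (1 + vecMulVec e (-w)) := by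
  simp only [mul_add, add_mul, mul_one, one_mul, neg_vecMulVec, vecMulVec_neg, mul_neg, neg_mul,
    vecMulVec_mul_vecMulVec, hee, hev, hwe, hwv, one_smul, zero_smul, vecMulVec_zero, zero_mul]
  abel

end RankOne

section SuslinMatrix

variable {n : ℕ} {R S : Type*} [CommRing R] [CommRing S]

theorem exists_mem_coe_eq_one_add_vecMulVec_single (H : Subgroup (GL (Fin n) R)) {k : Fin n}
    {v : Fin n → R} (hv : v k = 0) (hH : ∀ j (h : j ≠ k), transvectionGL h (v j) ∈ H) :
    ∃ g ∈ H, g.val = 1 + vecMulVec v (Pi.single k 1) := by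
  suffices ∀ s : Finset (Fin n), ∃ g ∈ H,
      g.val = 1 + vecMulVec (∑ j ∈ s, Pi.single j (v j)) (Pi.single k 1) by
    simpa [Finset.univ_sum_single] using this Finset.univ
  intro s
  induction s using Finset.induction_on with
  | empty => exact ⟨1, one_mem _, by simp⟩
  | insert a s ha ih =>
    obtain ⟨g, hg, hgv⟩ := ih
    rw [Finset.sum_insert ha]
    rcases eq_or_ne a k with rfl | hak
    · exact ⟨g, hg, by simpa [hv] using hgv⟩
    refine ⟨transvectionGL hak (v a) * g, mul_mem (hH a hak) hg, ?_⟩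
    have hsingle : single a k (v a) = vecMulVec (Pi.single a (v a)) (Pi.single k 1) := by
      ext; simp [single_apply, vecMulVec_apply, Pi.single_apply, ← ite_and, eq_comm, and_comm]
    rw [Units.val_mul, hgv, coe_transvectionGL, hsingle, one_add_vecMulVec_mul_add_left]
    simp +contextual [Finset.sum_apply, Pi.single_apply, hv]

namespace IsElementary

theorem one_add_vecMulVec_single {k : Fin n} {v : Fin n → R} (hv : v k = 0) :
    IsElementary (1 + vecMulVec v (Pi.single k 1)) :=
  exists_mem_coe_eq_one_add_vecMulVec_single _ hv fun _ _ => transvectionGL_mem_elemGL _ _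

theorem one_add_vecMulVec_single_left {k : Fin n} {w : Fin n → R} (hw : w k = 0) :
    IsElementary (1 + vecMulVec (Pi.single k 1) w) := by
  simpa [transpose_vecMulVec] using (one_add_vecMulVec_single hw).transpose

theorem one_add_vecMulVec_of_apply_eq_zero {v w : Fin n → R} {k : Fin n} (hw : w k = 0)
    (hwv : w ⬝ᵥ v = 0) : IsElementary (1 + vecMulVec v w) := by
  set e : Fin n → R := Pi.single k 1
  have hwe : w ⬝ᵥ e = 0 := by simp [e, hw]
  have hwv' : w ⬝ᵥ (v - v k • e) = 0 := by simp [dotProduct_sub, hwv, hwe]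
  have hsplit : 1 + vecMulVec v w =
      (1 + vecMulVec (v k • e) w) * (1 + vecMulVec (v - v k • e) w) := by
    rw [one_add_vecMulVec_mul_add_left hwv', add_sub_cancel]
  rw [hsplit, one_add_vecMulVec_eq_commutator (v := v - v k • e) (e := e) (by simp [e])
    (by simp [e]) hwe hwv', smul_vecMulVec, ← vecMulVec_smul]
  refine (one_add_vecMulVec_single_left ?_).mul
    ((((one_add_vecMulVec_single ?_).mul (one_add_vecMulVec_single_left hw)).mul
      (one_add_vecMulVec_single ?_)).mul (one_add_vecMulVec_single_left ?_)) <;> simp [e, hw]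

end IsElementary

/-- Suslin's unipotent matrix `1 + v ⊗ w`, where `w = (C - Cᵀ) v` is orthogonal to `v`
because `C - Cᵀ` is alternating. -/
def suslinMatrix (v : Fin n → R) (C : Matrix (Fin n) (Fin n) R) : Matrix (Fin n) (Fin n) R :=
  1 + vecMulVec v ((C - Cᵀ) *ᵥ v)

theorem suslinMatrix_congr {v : Fin n → R} {C D : Matrix (Fin n) (Fin n) R}
    (h : C - Cᵀ = D - Dᵀ) : suslinMatrix v C = suslinMatrix v D := by
  rw [suslinMatrix, h, suslinMatrix]

theorem suslinMatrix_map (φ : R →+* S) (v : Fin n → R) (C : Matrix (Fin n) (Fin n) R) :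
    (suslinMatrix v C).map φ = suslinMatrix (φ ∘ v) (C.map φ) := by
  ext i j
  simp [suslinMatrix, vecMulVec_apply, RingHom.map_mulVec, one_apply, apply_ite φ,
    Matrix.map_sub, transpose_map]

theorem suslinMatrix_smul (s : R) (v : Fin n → R) (C : Matrix (Fin n) (Fin n) R) :
    suslinMatrix (s • v) C = suslinMatrix v (s ^ 2 • C) := by
  simp only [suslinMatrix, transpose_smul, ← smul_sub, mulVec_smul, smul_mulVec, vecMulVec_smul,
    smul_vecMulVec, smul_smul, sq]

theorem sub_transpose_mulVec_dotProduct_self (C : Matrix (Fin n) (Fin n) R) (v : Fin n → R) :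
    (C - Cᵀ) *ᵥ v ⬝ᵥ v = 0 := by
  rw [sub_mulVec, sub_dotProduct, mulVec_transpose, ← dotProduct_mulVec, dotProduct_comm, sub_self]

theorem isElementary_suslinMatrix (hn : 3 ≤ n) (v : Fin n → R) (C : Matrix (Fin n) (Fin n) R) :
    IsElementary (suslinMatrix v C) := by
  induction C using Matrix.induction_on' with
  | h_zero => simpa [suslinMatrix] using IsElementary.one
  | h_add C D hC hD =>
    convert hC.mul hD using 1
    rw [suslinMatrix, suslinMatrix, suslinMatrix,
      one_add_vecMulVec_mul_add_right (sub_transpose_mulVec_dotProduct_self C v), ← add_mulVec,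
      transpose_add, add_sub_add_comm]
  | h_std_basis k l c =>
    obtain ⟨m, hmk, hml⟩ : ∃ m, m ≠ k ∧ m ≠ l := by
      obtain ⟨m, hm⟩ := Finset.exists_mem_notMem_of_card_lt_card (s := {k, l})
        (t := (Finset.univ : Finset (Fin n))) (by
          grw [Finset.card_le_two, Finset.card_fin]; exact hn)
      exact ⟨m, by simpa using hm⟩
    refine IsElementary.one_add_vecMulVec_of_apply_eq_zero (k := m) ?_
      (sub_transpose_mulVec_dotProduct_self _ _)
    simp [sub_mulVec, single_mulVec, hmk, hml]

theorem coe_conj_transvectionGL {i j : Fin n} (h : i ≠ j) (g : GL (Fin n) R) (c : R) :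
    (g * transvectionGL h c * g⁻¹).val =
      suslinMatrix (fun a => g.val a i) (c • vecMulVec (g⁻¹.val j) (g⁻¹.val i)) := by
  have hinv (k : Fin n) : (g⁻¹.val k ⬝ᵥ fun a => g.val a i) = (1 : Matrix _ _ R) k i := by
    rw [← Units.val_one, ← inv_mul_cancel g]; rfl
  have hconj : g.val * single i j c * g⁻¹.val =
      vecMulVec (fun a => g.val a i) (c • g⁻¹.val j) := by
    ext a b
    simp [mul_apply, single_apply, vecMulVec_apply, ite_and, mul_assoc]
  rw [Units.val_mul, Units.val_mul, coe_transvectionGL, mul_add, add_mul, mul_one, Units.mul_inv,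
    hconj, suslinMatrix, transpose_smul, transpose_vecMulVec, ← smul_sub, smul_mulVec, sub_mulVec,
    vecMulVec_mulVec, vecMulVec_mulVec, hinv, hinv, one_apply_eq, one_apply_ne h.symm]
  simp

end SuslinMatrix

section Substitution

variable {n : ℕ} {R S : Type*} [CommRing R] [CommRing S]

/-- The substitution `X ↦ s X`. -/
noncomputable def dilate (s : R) : R[X] →+* R[X] := compRingHom (C s * X)

@[simp]
theorem dilate_C (s r : R) : dilate s (C r) = C r := by simp [dilate]

@[simp]
theorem dilate_X (s : R) : dilate s X = C s * X := by simp [dilate]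

theorem coeff_dilate (s : R) (p : R[X]) (k : ℕ) : (dilate s p).coeff k = s ^ k * p.coeff k := by
  rw [dilate, coe_compRingHom, comp_C_mul_X_coeff, mul_comm]

theorem dilate_comp_dilate (s t : R) : (dilate t).comp (dilate s) = dilate (s * t) := by
  ext <;> simp [mul_assoc]

theorem dilate_comp_mapRingHom (f : R →+* S) (s : R) :
    (dilate (f s)).comp (mapRingHom f) = (mapRingHom f).comp (dilate s) := by
  ext <;> simp

theorem eval₂RingHom_comp_dilate (f : R →+* S) (s : R) (c : S) :
    (eval₂RingHom f c).comp (dilate s) = eval₂RingHom f (f s * c) := by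
  ext <;> simp

/-- The matrix `g(X + Y) g(X)⁻¹` over `R[X][Y]`. -/
noncomputable def increment (g : GL (Fin n) R[X]) : GL (Fin n) R[X][X] :=
  glMap (eval₂RingHom (C.comp C) (C X + X)) g * (glMap C g)⁻¹

theorem increment_mem_elemGL {g : GL (Fin n) R[X]} (hg : g ∈ elemGL n R[X]) :
    increment g ∈ elemGL n R[X][X] :=
  mul_mem (glMap_mem_elemGL _ hg) (inv_mem (glMap_mem_elemGL _ hg))

theorem glMap_mapRingHom_increment (f : R →+* S) (g : GL (Fin n) R[X]) :
    glMap (mapRingHom (mapRingHom f)) (increment g) = increment (glMap (mapRingHom f) g) := by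
  simp only [increment, map_mul, map_inv, glMap_glMap]
  congr 3 <;> ext <;> simp

theorem glMap_eval₂RingHom_increment (f : R →+* S) (u c : S) (g : GL (Fin n) R[X]) :
    glMap (eval₂RingHom (eval₂RingHom f u) c) (increment g) =
      glMap (eval₂RingHom f (u + c)) g * (glMap (eval₂RingHom f u) g)⁻¹ := by
  simp only [increment, map_mul, map_inv, glMap_glMap]
  congr 3 <;> ext <;> simp

theorem glMap_evalRingHom_zero_increment (g : GL (Fin n) R[X]) :
    glMap (evalRingHom 0) (increment g) = 1 := by
  have h : (evalRingHom 0).comp (eval₂RingHom (C.comp C) (C X + X)) =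
      (evalRingHom (0 : R[X])).comp C := by ext <;> simp
  rw [increment, map_mul, map_inv, glMap_glMap, glMap_glMap, h, mul_inv_cancel]

theorem glMap_evalRingHom_glMap_C (r : R) (g : GL (Fin n) R) :
    glMap (evalRingHom r) (glMap C g) = g := by
  rw [glMap_glMap, show (evalRingHom r).comp C = RingHom.id R by ext; simp, glMap_id]

theorem exists_path_of_mem_elemGL {e : GL (Fin n) R} (he : e ∈ elemGL n R) :
    ∃ p ∈ elemGL n R[X], glMap (evalRingHom 0) p = 1 ∧ glMap (evalRingHom 1) p = e := by
  induction he using elemGL_induction with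
  | one => exact ⟨1, one_mem _, map_one _, map_one _⟩
  | transvection_mul i j h c _ _ ih =>
    obtain ⟨p, hp, hp0, rfl⟩ := ih
    exact ⟨transvectionGL h (C c * X) * p, mul_mem (transvectionGL_mem_elemGL h _) hp,
      by simp [hp0], by simp⟩

theorem elemGL_induction_of_eval_zero {P : GL (Fin n) R[X] → Prop} (one : P 1)
    (mul : ∀ a b, P a → P b → P (a * b))
    (suslin : ∀ (q : GL (Fin n) R[X]) (v : Fin n → R) (D : Matrix (Fin n) (Fin n) R[X]),
      q.val = suslinMatrix (C ∘ v) ((X : R[X]) • D) → P q)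
    {p : GL (Fin n) R[X]} (hp : p ∈ elemGL n R[X]) (hp0 : glMap (evalRingHom 0) p = 1) : P p := by
  suffices ∀ g : GL (Fin n) R,
      P (glMap C g * (p * (glMap C (glMap (evalRingHom 0) p))⁻¹) * (glMap C g)⁻¹) by
    simpa [hp0] using this 1
  clear hp0
  induction hp using elemGL_induction with
  | one => simpa using one
  | transvection_mul i j h c p _ ih =>
    intro g
    set t : GL (Fin n) R := transvectionGL h (c.eval 0) with ht
    have hc : transvectionGL h c = transvectionGL h (X * c.divX) * glMap C t := by
      rw [ht, glMap_transvectionGL, ← transvectionGL_add, ← coeff_zero_eq_eval_zero,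
        X_mul_divX_add]
    have hc0 : glMap (evalRingHom 0) (transvectionGL h c) = t := glMap_transvectionGL h _ c
    have hsplit : glMap C g * (transvectionGL h c * p *
          (glMap C (glMap (evalRingHom 0) (transvectionGL h c * p)))⁻¹) * (glMap C g)⁻¹ =
        (glMap C g * transvectionGL h (X * c.divX) * (glMap C g)⁻¹) *
          (glMap C (g * t) * (p * (glMap C (glMap (evalRingHom 0) p))⁻¹) *
            (glMap C (g * t))⁻¹) := by
      have hmul : glMap (evalRingHom 0) (transvectionGL h c * p) =
          t * glMap (evalRingHom 0) p := by rw [map_mul, hc0]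
      rw [hmul, hc]
      simp only [map_mul]
      group
    rw [hsplit]
    refine mul _ _ (suslin _ (fun a => g.val a i)
      (c.divX • vecMulVec ((glMap C g)⁻¹.val j) ((glMap C g)⁻¹.val i)) ?_) (ih (g * t))
    rw [coe_conj_transvectionGL, mul_smul]
    rfl

end Substitution

section Dilation

variable {n : ℕ} {R S : Type*} [CommRing R] [CommRing S] [Algebra R S]

attribute [local instance] Polynomial.algebra Polynomial.isLocalization

/-- The matrix `h(sX)` over `S[X]` lifts to `E_n(R[X])`. -/
def HasElementaryLift (s : R) (h : GL (Fin n) S[X]) : Prop :=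
  ∃ h' ∈ elemGL n R[X],
    glMap (mapRingHom (algebraMap R S)) h' = glMap (dilate (algebraMap R S s)) h

theorem HasElementaryLift.mul_right {s : R} {h : GL (Fin n) S[X]} (H : HasElementaryLift s h)
    (t : R) : HasElementaryLift (s * t) h := by
  obtain ⟨h', hh', e⟩ := H
  refine ⟨glMap (dilate t) h', glMap_mem_elemGL _ hh', ?_⟩
  rw [glMap_glMap, ← dilate_comp_mapRingHom, ← glMap_glMap, e, glMap_glMap, dilate_comp_dilate,
    map_mul]

variable (M : Submonoid R) [IsLocalization M S]

theorem exists_map_eq_C_smul (D : Matrix (Fin n) (Fin n) S[X]) :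
    ∃ s ∈ M, ∃ D' : Matrix (Fin n) (Fin n) R[X],
      D'.map (mapRingHom (algebraMap R S)) = C (algebraMap R S s) • D := by
  obtain ⟨⟨_, s, hs, rfl⟩, hD⟩ :=
    IsLocalization.exist_integer_multiples_of_finite (M.map C) (fun x : Fin n × Fin n => D x.1 x.2)
  choose D' hD' using hD
  refine ⟨s, hs, of fun i j => D' (i, j), ?_⟩
  ext1 i j
  exact (hD' (i, j)).trans (by simp [Algebra.smul_def])

theorem exists_hasElementaryLift_of_eq_suslinMatrix (hn : 3 ≤ n) {q : GL (Fin n) S[X]}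
    {v : Fin n → S} {D : Matrix (Fin n) (Fin n) S[X]}
    (hq : q.val = suslinMatrix (C ∘ v) ((X : S[X]) • D)) : ∃ s ∈ M, HasElementaryLift s q := by
  obtain ⟨⟨a, ha⟩, hv⟩ := IsLocalization.exist_integer_multiples_of_finite M v
  choose v' hv' using hv
  obtain ⟨b, hb, D', hD'⟩ := exists_map_eq_C_smul M D
  refine ⟨a ^ 2 * b, mul_mem (pow_mem ha 2) hb, ?_⟩
  set t := a ^ 2 * b with ht
  obtain ⟨q', hq', hq'v⟩ :=
    isElementary_suslinMatrix hn (C ∘ v') ((X : R[X]) • D'.map (dilate t))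
  refine ⟨q', hq', Units.ext ?_⟩
  have hv'' : mapRingHom (algebraMap R S) ∘ C ∘ v' = C (algebraMap R S a) • (C ∘ v) := by
    ext1 i; simp [hv', Algebra.smul_def]
  have hD'' : ((X : R[X]) • D'.map (dilate t)).map (mapRingHom (algebraMap R S)) =
      (X * C (algebraMap R S b)) • D.map (dilate (algebraMap R S t)) := by
    ext1 i j
    have h := congrArg (dilate (algebraMap R S t)) (congrFun₂ hD' i j)
    have hcomp := RingHom.congr_fun (dilate_comp_mapRingHom (algebraMap R S) t) (D' i j)
    simp only [RingHom.comp_apply] at hcomp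
    simp only [Matrix.map_apply, Matrix.smul_apply, smul_eq_mul, map_mul, dilate_C] at h ⊢
    rw [← hcomp, h, coe_mapRingHom, map_X, mul_assoc]
  rw [coe_glMap, coe_glMap, hq, hq'v, suslinMatrix_map, suslinMatrix_map, hv'', hD'',
    suslinMatrix_smul, smul_smul]
  congr 1
  · ext1 i; simp
  · ext1 i j; simp [ht]; ring

theorem exists_hasElementaryLift (hn : 3 ≤ n) {h : GL (Fin n) S[X]} (hh : h ∈ elemGL n S[X])
    (h0 : glMap (evalRingHom 0) h = 1) : ∃ s ∈ M, HasElementaryLift s h := by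
  refine elemGL_induction_of_eval_zero (P := fun h => ∃ s ∈ M, HasElementaryLift s h) (p := h)
    ⟨1, one_mem _, 1, one_mem _, by simp⟩ ?_
    (fun q v D hq => exists_hasElementaryLift_of_eq_suslinMatrix M hn hq) hh h0
  rintro a b ⟨s, hs, ha⟩ ⟨t, ht, hb⟩
  obtain ⟨a', ha', ea⟩ := ha.mul_right t
  obtain ⟨b', hb', eb⟩ := hb.mul_right s
  refine ⟨s * t, mul_mem hs ht, a' * b', mul_mem ha' hb', ?_⟩
  rw [map_mul, map_mul, ea, eb, mul_comm t s]

theorem exists_elementaryLift_eval_zero_eq_one (hn : 3 ≤ n) {h : GL (Fin n) S[X]}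
    (hh : h ∈ elemGL n S[X]) (h0 : glMap (evalRingHom 0) h = 1) :
    ∃ s ∈ M, ∃ h' ∈ elemGL n R[X], glMap (evalRingHom 0) h' = 1 ∧
      glMap (mapRingHom (algebraMap R S)) h' = glMap (dilate (algebraMap R S s)) h := by
  obtain ⟨s, hs, h', hh', e⟩ := exists_hasElementaryLift M hn hh h0
  have hC : (mapRingHom (algebraMap R S)).comp (C.comp (evalRingHom 0)) =
      (C.comp (evalRingHom 0)).comp (mapRingHom (algebraMap R S)) := by ext <;> simp
  have h0' : (C.comp (evalRingHom 0)).comp (dilate (algebraMap R S s)) =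
      C.comp (evalRingHom 0) := by ext <;> simp
  refine ⟨s, hs, h' * (glMap (C.comp (evalRingHom 0)) h')⁻¹,
    mul_mem hh' (inv_mem (glMap_mem_elemGL _ hh')), ?_, ?_⟩
  · rw [map_mul, map_inv, ← glMap_glMap, glMap_evalRingHom_glMap_C, mul_inv_cancel]
  · rw [map_mul, map_inv, glMap_glMap, hC, ← glMap_glMap, e, glMap_glMap, h0', ← glMap_glMap, h0,
      map_one, inv_one, mul_one]

theorem exists_glMap_dilate_eq {a b : GL (Fin n) R[X]}
    (h0 : glMap (evalRingHom 0) a = glMap (evalRingHom 0) b)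
    (h : glMap (mapRingHom (algebraMap R S)) a = glMap (mapRingHom (algebraMap R S)) b) :
    ∃ s ∈ M, glMap (dilate s) a = glMap (dilate s) b := by
  have hker (x : Fin n × Fin n) : ∃ s ∈ M, C s * a.val x.1 x.2 = C s * b.val x.1 x.2 := by
    obtain ⟨⟨_, s, hs, rfl⟩, e⟩ := IsLocalization.exists_of_eq (M := M.map C)
      (congrArg (fun g : GL (Fin n) S[X] => g.val x.1 x.2) h)
    exact ⟨s, hs, e⟩
  choose s hs e using hker
  refine ⟨∏ x, s x, prod_mem fun x _ => hs x, Units.ext ?_⟩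
  ext i j k
  obtain ⟨t, ht⟩ := Finset.dvd_prod_of_mem s (Finset.mem_univ (i, j))
  have e0 := congrArg (fun g : GL (Fin n) R => g.val i j) h0
  have ek := congrArg (coeff · k) (e (i, j))
  simp only [coe_glMap, Matrix.map_apply, coe_evalRingHom, ← coeff_zero_eq_eval_zero,
    coeff_C_mul, coeff_dilate] at e0 ek ⊢
  cases k with
  | zero => rw [e0]
  | succ k => linear_combination (∏ x, s x) ^ k * (ht * (a.val i j).coeff (k + 1)
      - ht * (b.val i j).coeff (k + 1) + t * ek)

theorem exists_mem_elemGL_glMap_eq_eval_mul_inv (hn : 3 ≤ n) {p : GL (Fin n) S[X]}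
    (hp : p ∈ elemGL n S[X]) :
    ∃ s ∈ M, ∀ u c : R, ∃ e ∈ elemGL n R, glMap (algebraMap R S) e =
      glMap (evalRingHom (algebraMap R S (u + s * c))) p *
        (glMap (evalRingHom (algebraMap R S u)) p)⁻¹ := by
  obtain ⟨_, ⟨s, hs, rfl⟩, h', hh', e⟩ := exists_hasElementaryLift (R := R[X]) (M.map C) hn
    (increment_mem_elemGL hp) (glMap_evalRingHom_zero_increment p)
  refine ⟨s, hs, fun u c => ⟨glMap (eval₂RingHom (evalRingHom u) c) h', glMap_mem_elemGL _ hh', ?_⟩⟩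
  have hcomm : (algebraMap R S).comp (eval₂RingHom (evalRingHom u) c) =
      (eval₂RingHom (evalRingHom (algebraMap R S u)) (algebraMap R S c)).comp
        (mapRingHom (algebraMap R[X] S[X])) := by
    ext <;> simp
  have halg : algebraMap R[X] S[X] (C s) = C (algebraMap R S s) := map_C _
  rw [glMap_glMap, hcomm, ← glMap_glMap, e, glMap_glMap, eval₂RingHom_comp_dilate, halg,
    coe_evalRingHom, eval_C, map_add, map_mul]
  exact glMap_eval₂RingHom_increment (RingHom.id S) _ _ p

theorem exists_forall_increment_mem_elemGL (hn : 3 ≤ n) {g : GL (Fin n) R[X]}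
    (hg : glMap (mapRingHom (algebraMap R S)) g ∈ elemGL n S[X]) :
    ∃ s ∈ M, ∀ u c : R[X], glMap (compRingHom (u + C s * c)) g * (glMap (compRingHom u) g)⁻¹ ∈
      elemGL n R[X] := by
  obtain ⟨_, ⟨s, hs, rfl⟩, h', hh', h0, e⟩ := exists_elementaryLift_eval_zero_eq_one (R := R[X])
    (M.map C) hn (increment_mem_elemGL hg) (glMap_evalRingHom_zero_increment _)
  have hd0 : (evalRingHom 0).comp (dilate (C s)) = evalRingHom (0 : R[X]) := by ext <;> simp
  obtain ⟨_, ⟨t, ht, rfl⟩, heq⟩ := exists_glMap_dilate_eq (S := S[X]) (M.map C) (a := h')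
    (b := glMap (dilate (C s)) (increment g))
    (by rw [h0, glMap_glMap, hd0, glMap_evalRingHom_zero_increment])
    (by rw [e, ← glMap_mapRingHom_increment, glMap_glMap, glMap_glMap, ← dilate_comp_mapRingHom]
        rfl)
  refine ⟨s * t, mul_mem hs ht, fun u c => ?_⟩
  have hev := glMap_eval₂RingHom_increment C u (C (s * t) * c) g
  have hcomm : (eval₂RingHom (eval₂RingHom C u) c).comp ((dilate (C t)).comp (dilate (C s))) =
      eval₂RingHom (eval₂RingHom C u) (C (s * t) * c) := by
    rw [dilate_comp_dilate, eval₂RingHom_comp_dilate]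
    simp
  rw [← hcomm, ← glMap_glMap, ← glMap_glMap, ← heq] at hev
  exact hev ▸ glMap_mem_elemGL _ (glMap_mem_elemGL _ hh')

end Dilation

section LocalGlobal

variable {n : ℕ} {A : Type*} [CommRing A]

/-- Quillen's ideal of the scalars `a` such that `g(u + a c) g(u)⁻¹` is elementary for all
`u` and `c`. -/
noncomputable def quillenIdeal (g : GL (Fin n) A[X]) : Ideal A where
  carrier := {a | ∀ u c : A[X],
    glMap (compRingHom (u + C a * c)) g * (glMap (compRingHom u) g)⁻¹ ∈ elemGL n A[X]}
  add_mem' {a b} ha hb u c := by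
    have h := mul_mem (hb (u + C a * c) c) (ha u c)
    rwa [mul_assoc, inv_mul_cancel_left, add_assoc, ← add_mul, ← C_add] at h
  zero_mem' u c := by simp
  smul_mem' r a ha u c := by
    have h := ha u (C r * c)
    rwa [← mul_assoc, ← C_mul, mul_comm a r] at h

theorem mem_quillenIdeal {g : GL (Fin n) A[X]} {a : A} :
    a ∈ quillenIdeal g ↔ ∀ u c : A[X],
      glMap (compRingHom (u + C a * c)) g * (glMap (compRingHom u) g)⁻¹ ∈ elemGL n A[X] :=
  Iff.rfl

theorem mul_inv_eval_zero_mem_elemGL_of_forall_isMaximal (hn : 3 ≤ n) {g : GL (Fin n) A[X]}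
    (H : ∀ (m : Ideal A) [m.IsMaximal],
      glMap (mapRingHom (algebraMap A (Localization.AtPrime m))) g ∈
        elemGL n (Localization.AtPrime m)[X]) :
    g * (glMap C (glMap (evalRingHom 0) g))⁻¹ ∈ elemGL n A[X] := by
  have htop : quillenIdeal g = ⊤ := by
    by_contra hne
    obtain ⟨m, hm, hle⟩ := Ideal.exists_le_maximal _ hne
    obtain ⟨s, hs, h⟩ := exists_forall_increment_mem_elemGL m.primeCompl hn (H m)
    exact hs (hle h)
  have h := mem_quillenIdeal.mp ((Ideal.eq_top_iff_one _).mp htop) 0 X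
  have hX : compRingHom (0 + C 1 * X) = RingHom.id A[X] := by ext <;> simp
  have h0 : compRingHom 0 = (C : A →+* A[X]).comp (evalRingHom 0) := by ext <;> simp
  rwa [hX, h0, glMap_id, ← glMap_glMap] at h

end LocalGlobal

section Gluing

variable {n : ℕ} {B R₁ R₂ S : Type*} [CommRing B] [CommRing R₁] [CommRing R₂] [CommRing S]
  [Algebra B R₁] [Algebra B R₂] [Algebra B S] [Algebra R₁ S] [Algebra R₂ S]
  [IsScalarTower B R₁ S] [IsScalarTower B R₂ S] {a b : B}

theorem exists_eq_mul_of_mem_elemGL (hn : 3 ≤ n) (hab : IsCoprime a b)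
    [IsLocalization.Away (algebraMap B R₁ b) S] [IsLocalization.Away (algebraMap B R₂ a) S]
    {e : GL (Fin n) S} (he : e ∈ elemGL n S) :
    ∃ e₁ ∈ elemGL n R₁, ∃ e₂ ∈ elemGL n R₂,
      e = glMap (algebraMap R₁ S) e₁ * glMap (algebraMap R₂ S) e₂ := by
  obtain ⟨p, hp, hp0, rfl⟩ := exists_path_of_mem_elemGL he
  obtain ⟨_, ⟨k, rfl⟩, h₁⟩ :=
    exists_mem_elemGL_glMap_eq_eval_mul_inv (.powers (algebraMap B R₁ b)) hn hp
  obtain ⟨_, ⟨l, rfl⟩, h₂⟩ :=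
    exists_mem_elemGL_glMap_eq_eval_mul_inv (.powers (algebraMap B R₂ a)) hn hp
  obtain ⟨r, t, hrt⟩ := hab.pow (m := l) (n := k)
  obtain ⟨e₁, he₁, hval₁⟩ := h₁ (algebraMap B R₁ (r * a ^ l)) (algebraMap B R₁ t)
  obtain ⟨e₂, he₂, hval₂⟩ := h₂ 0 (algebraMap B R₂ r)
  refine ⟨e₁, he₁, e₂, he₂, ?_⟩
  have hone : algebraMap R₁ S (algebraMap B R₁ (r * a ^ l) +
      algebraMap B R₁ b ^ k * algebraMap B R₁ t) = 1 := by
    rw [← map_pow, ← map_mul, ← map_add, mul_comm (b ^ k), hrt, map_one, map_one]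
  have hmid : algebraMap R₂ S (0 + algebraMap B R₂ a ^ l * algebraMap B R₂ r) =
      algebraMap R₁ S (algebraMap B R₁ (r * a ^ l)) := by
    rw [zero_add, ← map_pow, ← map_mul, mul_comm, ← IsScalarTower.algebraMap_apply,
      ← IsScalarTower.algebraMap_apply]
  rw [hval₁, hval₂, hone, hmid, map_zero, hp0, inv_one, mul_one, inv_mul_cancel_right]

end Gluing

section Patching

variable {n : ℕ} {B R₁ R₂ S : Type*} [CommRing B] [CommRing R₁] [CommRing R₂] [CommRing S]
  [Algebra B R₁] [Algebra B R₂] [Algebra B S] [Algebra R₁ S] [Algebra R₂ S]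
  [IsScalarTower B R₁ S] [IsScalarTower B R₂ S] {a b : B}
  [IsLocalization.Away a R₁] [IsLocalization.Away b R₂]
  [IsLocalization.Away (algebraMap B R₁ b) S]

theorem eq_of_algebraMap_eq {x y : B} (hab : IsCoprime a b)
    (h₁ : algebraMap B R₁ x = algebraMap B R₁ y) (h₂ : algebraMap B R₂ x = algebraMap B R₂ y) :
    x = y := by
  obtain ⟨k, hk⟩ := IsLocalization.Away.exists_of_eq a h₁
  obtain ⟨l, hl⟩ := IsLocalization.Away.exists_of_eq b h₂
  obtain ⟨r, t, hrt⟩ := hab.pow (m := k) (n := l)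
  linear_combination (y - x) * hrt + r * hk + t * hl

theorem exists_algebraMap_eq (hab : IsCoprime a b) {u : R₁} {v : R₂}
    (huv : algebraMap R₁ S u = algebraMap R₂ S v) :
    ∃ w : B, algebraMap B R₁ w = u ∧ algebraMap B R₂ w = v := by
  have : IsLocalization.Away (a * b) S := .mul' R₁ S a b
  obtain ⟨k, p, hp⟩ := IsLocalization.Away.surj a u
  obtain ⟨l, q, hq⟩ := IsLocalization.Away.surj b v
  have hS : algebraMap B S (p * b ^ l) = algebraMap B S (q * a ^ k) := by
    have hp' := congr(algebraMap R₁ S $hp)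
    have hq' := congr(algebraMap R₂ S $hq)
    simp only [map_mul, map_pow, ← IsScalarTower.algebraMap_apply] at hp' hq' ⊢
    rw [← hp', ← hq', huv]
    ring
  obtain ⟨N, hN⟩ := IsLocalization.Away.exists_of_eq (a * b) hS
  obtain ⟨r, t, hrt⟩ := hab.pow (m := k + N) (n := l + N)
  refine ⟨r * (p * a ^ N) + t * (q * b ^ N), ?_, ?_⟩
  · have hw : (r * (p * a ^ N) + t * (q * b ^ N)) * a ^ (k + N) = p * a ^ N := by
      linear_combination p * a ^ N * hrt - t * hN
    apply ((IsLocalization.Away.algebraMap_isUnit (S := R₁) a).pow (k + N)).mul_right_cancel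
    rw [← map_pow, ← map_mul, hw, map_mul, ← hp, map_pow, map_pow]
    ring
  · have hw : (r * (p * a ^ N) + t * (q * b ^ N)) * b ^ (l + N) = q * b ^ N := by
      linear_combination q * b ^ N * hrt + r * hN
    apply ((IsLocalization.Away.algebraMap_isUnit (S := R₂) b).pow (l + N)).mul_right_cancel
    rw [← map_pow, ← map_mul, hw, map_mul, ← hq, map_pow, map_pow]
    ring

theorem exists_matrix_map_eq (hab : IsCoprime a b) {M : Matrix (Fin n) (Fin n) R₁}
    {N : Matrix (Fin n) (Fin n) R₂} (h : M.map (algebraMap R₁ S) = N.map (algebraMap R₂ S)) :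
    ∃ W : Matrix (Fin n) (Fin n) B, W.map (algebraMap B R₁) = M ∧ W.map (algebraMap B R₂) = N := by
  choose W hM hN using fun i j => exists_algebraMap_eq hab congr($h i j)
  exact ⟨.of W, ext hM, ext hN⟩

theorem exists_glMap_eq (hab : IsCoprime a b) {M : GL (Fin n) R₁} {N : GL (Fin n) R₂}
    (h : glMap (algebraMap R₁ S) M = glMap (algebraMap R₂ S) N) :
    ∃ W : GL (Fin n) B, glMap (algebraMap B R₁) W = M ∧ glMap (algebraMap B R₂) W = N := by
  obtain ⟨W, hM, hN⟩ := exists_matrix_map_eq hab congr(($h).val)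
  obtain ⟨W', hM', hN'⟩ := exists_matrix_map_eq hab congr(($h)⁻¹.val)
  have hmul {P Q : Matrix (Fin n) (Fin n) B}
      (h₁ : P.map (algebraMap B R₁) * Q.map (algebraMap B R₁) = 1)
      (h₂ : P.map (algebraMap B R₂) * Q.map (algebraMap B R₂) = 1) : P * Q = 1 := by
    rw [← Matrix.map_mul] at h₁ h₂
    ext i j
    refine eq_of_algebraMap_eq (R₁ := R₁) (R₂ := R₂) hab ?_ ?_
    · simpa [Matrix.one_apply, apply_ite] using congr($h₁ i j)
    · simpa [Matrix.one_apply, apply_ite] using congr($h₂ i j)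
  exact ⟨⟨W, W', hmul (by simp [hM, hM']) (by simp [hN, hN']),
    hmul (by simp [hM, hM']) (by simp [hN, hN'])⟩, Units.ext hM, Units.ext hN⟩

theorem exists_eq_mul_glMap_of_mem_elemGL (hn : 3 ≤ n) (hab : IsCoprime a b) {g : GL (Fin n) R₁}
    (hg : glMap (algebraMap R₁ S) g ∈ elemGL n S) :
    ∃ e ∈ elemGL n R₁, ∃ w : GL (Fin n) B,
      g = e * glMap (algebraMap B R₁) w ∧ glMap (algebraMap B R₂) w ∈ elemGL n R₂ := by
  have : IsLocalization.Away (algebraMap B R₂ a) S := .commutes R₂ R₁ S b a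
  obtain ⟨e₁, he₁, e₂, he₂, h⟩ := exists_eq_mul_of_mem_elemGL (R₁ := R₁) (R₂ := R₂) hn hab hg
  obtain ⟨w, hw₁, hw₂⟩ := exists_glMap_eq (M := e₁⁻¹ * g) (N := e₂) hab (S := S) <| by
    rw [map_mul, h, map_inv, inv_mul_cancel_left]
  exact ⟨e₁, he₁, w, by rw [hw₁, mul_inv_cancel_left], hw₂ ▸ he₂⟩

end Patching

section Laurent

variable {n : ℕ} {A B : Type*} [CommRing A] [CommRing B]

/-- The automorphism `T ↦ T⁻¹` of the Laurent polynomial ring, as a ring homomorphism. -/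
noncomputable def invertHom (A : Type*) [CommRing A] : A[T;T⁻¹] →+* A[T;T⁻¹] :=
  RingHomClass.toRingHom (LaurentPolynomial.invert : A[T;T⁻¹] ≃ₐ[A] A[T;T⁻¹])

/-- The embedding `X ↦ T⁻¹` of polynomials into Laurent polynomials, opposite to `toLaurent`. -/
noncomputable def toLaurentInv : A[X] →+* A[T;T⁻¹] := (invertHom A).comp toLaurent

/-- The map of Laurent polynomial rings induced by `φ` on coefficients. -/
noncomputable def laurentMap (φ : A →+* B) : A[T;T⁻¹] →+* B[T;T⁻¹] :=
  AddMonoidAlgebra.mapRingHom ℤ φ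

@[simp]
theorem invertHom_C (a : A) : invertHom A (LaurentPolynomial.C a) = LaurentPolynomial.C a :=
  LaurentPolynomial.invert_C a

@[simp]
theorem invertHom_T (k : ℤ) : invertHom A (T k) = T (-k) := LaurentPolynomial.invert_T k

@[simp]
theorem toLaurentInv_C (a : A) : toLaurentInv (C a) = LaurentPolynomial.C a := by
  simp [toLaurentInv]

@[simp]
theorem toLaurentInv_X : toLaurentInv (X : A[X]) = T (-1) := by simp [toLaurentInv]

@[simp]
theorem laurentMap_C (φ : A →+* B) (a : A) :
    laurentMap φ (LaurentPolynomial.C a) = LaurentPolynomial.C (φ a) := by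
  rw [← LaurentPolynomial.single_eq_C, ← LaurentPolynomial.single_eq_C]
  simp [laurentMap, -LaurentPolynomial.single_eq_C_mul_T]

@[simp]
theorem laurentMap_T (φ : A →+* B) (k : ℤ) : laurentMap φ (T k) = T k := by
  simp [laurentMap, T, -LaurentPolynomial.single_eq_C_mul_T]

@[simp]
theorem glMap_toLaurent_glMap_C (g : GL (Fin n) A) :
    glMap toLaurent (glMap C g) = glMap LaurentPolynomial.C g := by
  rw [glMap_glMap]
  congr 2
  exact RingHom.ext toLaurent_C

@[simp]
theorem glMap_toLaurentInv_glMap_C (g : GL (Fin n) A) :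
    glMap toLaurentInv (glMap C g) = glMap LaurentPolynomial.C g := by
  rw [glMap_glMap]
  congr 2
  exact RingHom.ext toLaurentInv_C

@[simp]
theorem glMap_invertHom_invertHom (g : GL (Fin n) A[T;T⁻¹]) :
    glMap (invertHom A) (glMap (invertHom A) g) = g := by
  have h : (invertHom A).comp (invertHom A) = RingHom.id _ :=
    RingHom.ext fun f => LaurentPolynomial.involutive_invert f
  rw [glMap_glMap, h, glMap_id]

@[simp]
theorem glMap_invertHom_toLaurent (g : GL (Fin n) A[X]) :
    glMap (invertHom A) (glMap toLaurent g) = glMap toLaurentInv g := rfl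

@[simp]
theorem glMap_invertHom_toLaurentInv (g : GL (Fin n) A[X]) :
    glMap (invertHom A) (glMap toLaurentInv g) = glMap toLaurent g := by
  rw [← glMap_invertHom_toLaurent, glMap_invertHom_invertHom]

theorem glMap_laurentMap_toLaurent (φ : A →+* B) (g : GL (Fin n) A[X]) :
    glMap (laurentMap φ) (glMap toLaurent g) = glMap toLaurent (glMap (mapRingHom φ) g) := by
  rw [glMap_glMap, glMap_glMap]
  congr 2
  exact Polynomial.ringHom_ext (by simp) (by simp)

theorem glMap_laurentMap_toLaurentInv (φ : A →+* B) (g : GL (Fin n) A[X]) :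
    glMap (laurentMap φ) (glMap toLaurentInv g) = glMap toLaurentInv (glMap (mapRingHom φ) g) := by
  rw [glMap_glMap, glMap_glMap]
  congr 2
  exact Polynomial.ringHom_ext (by simp) (by simp)

theorem glMap_toLaurent_injective :
    Function.Injective (glMap toLaurent : GL (Fin n) A[X] →* GL (Fin n) A[T;T⁻¹]) :=
  Units.map_injective (Matrix.map_injective toLaurent_injective)

theorem trunc_toLaurentInv_mul_T {k : ℤ} (hk : k < 0) (q : A[X]) :
    trunc (toLaurentInv q * T k) = 0 := by
  induction q using Polynomial.induction_on' with
  | add p q hp hq => rw [map_add, add_mul, map_add, hp, hq, add_zero]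
  | monomial m a =>
    have h : toLaurentInv (monomial m a) * T k = LaurentPolynomial.C a * T (m * -1 + k) := by
      simp [← C_mul_X_pow_eq_monomial]
    rw [h, LaurentPolynomial.trunc_C_mul_T, if_neg (by lia)]

theorem trunc_toLaurentInv (q : A[X]) : trunc (toLaurentInv q) = C (q.eval 0) := by
  have h : toLaurentInv q =
      toLaurentInv q.divX * T (-1) + LaurentPolynomial.C (q.eval 0) := by
    conv_lhs => rw [← X_mul_divX_add q]
    simp [coeff_zero_eq_eval_zero]
  rw [h, map_add, trunc_toLaurentInv_mul_T (by decide), zero_add, ← toLaurent_C,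
    trunc_toLaurent]

theorem eq_glMap_C_of_toLaurent_eq_toLaurentInv {g h : GL (Fin n) A[X]}
    (e : glMap toLaurent g = glMap toLaurentInv h) : g = glMap C (glMap (evalRingHom 0) h) := by
  ext i j : 2
  have hij := congr(trunc ($(e).val i j))
  simpa [trunc_toLaurentInv] using hij

theorem eq_glMap_C_of_toLaurentInv_eq_toLaurent {g h : GL (Fin n) A[X]}
    (e : glMap toLaurentInv g = glMap toLaurent h) : g = glMap C (glMap (evalRingHom 0) h) := by
  apply eq_glMap_C_of_toLaurent_eq_toLaurentInv
  simpa using congr(glMap (invertHom A) $e)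

end Laurent

section DiagT

variable {n : ℕ} {A B : Type*} [CommRing A] [CommRing B]

/-- The diagonal matrix with entries `T ^ d i`. -/
noncomputable def diagT (d : Fin n → ℤ) : GL (Fin n) A[T;T⁻¹] where
  val := diagonal fun i => T (d i)
  inv := diagonal fun i => T (-d i)
  val_inv := by simp only [diagonal_mul_diagonal, ← LaurentPolynomial.T_add, add_neg_cancel,
    LaurentPolynomial.T_zero, diagonal_one]
  inv_val := by simp only [diagonal_mul_diagonal, ← LaurentPolynomial.T_add, neg_add_cancel,
    LaurentPolynomial.T_zero, diagonal_one]

theorem coe_diagT (d : Fin n → ℤ) :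
    (diagT d : GL (Fin n) A[T;T⁻¹]).val = diagonal fun i => T (d i) := rfl

theorem diagT_neg (d : Fin n → ℤ) : (diagT (-d) : GL (Fin n) A[T;T⁻¹]) = (diagT d)⁻¹ :=
  Units.ext rfl

theorem diagT_add (d e : Fin n → ℤ) :
    (diagT (d + e) : GL (Fin n) A[T;T⁻¹]) = diagT d * diagT e := by
  apply Units.ext
  simp only [Units.val_mul, coe_diagT, diagonal_mul_diagonal, Pi.add_apply, LaurentPolynomial.T_add]

@[simp]
theorem diagT_zero : (diagT 0 : GL (Fin n) A[T;T⁻¹]) = 1 := by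
  apply Units.ext
  simp [coe_diagT]

@[simp]
theorem glMap_invertHom_diagT (d : Fin n → ℤ) :
    glMap (invertHom A) (diagT d) = (diagT d)⁻¹ := by
  rw [← diagT_neg]
  apply Units.ext
  simp [coe_diagT, diagonal_map]

@[simp]
theorem glMap_laurentMap_diagT (φ : A →+* B) (d : Fin n → ℤ) :
    glMap (laurentMap φ) (diagT d) = diagT d := by
  apply Units.ext
  simp [coe_diagT, diagonal_map]

theorem diagT_const_mul (k : ℤ) (g : GL (Fin n) A[T;T⁻¹]) :
    diagT (fun _ => k) * g = g * diagT (fun _ => k) := by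
  ext i j
  rw [Units.val_mul, Units.val_mul, coe_diagT, diagonal_mul, mul_diagonal, mul_comm]

theorem diagT_mul_transvectionGL_mul_inv (d : Fin n → ℤ) {i j : Fin n} (h : i ≠ j)
    (c : A[T;T⁻¹]) :
    diagT d * transvectionGL h c * (diagT d)⁻¹ = transvectionGL h (c * T (d i - d j)) := by
  rw [← diagT_neg]
  ext a b
  simp only [Units.val_mul, coe_diagT, coe_transvectionGL, mul_diagonal, diagonal_mul,
    Matrix.add_apply, one_apply, single_apply, Pi.neg_apply]
  rcases eq_or_ne a b with rfl | hab
  · have hij : ¬(i = a ∧ j = a) := fun e => h (e.1.trans e.2.symm)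
    simp [hij, ← LaurentPolynomial.T_add, -LaurentPolynomial.T_mul]
  · rw [if_neg hab, zero_add, zero_add]
    split_ifs with e
    · rw [e.1, e.2, LaurentPolynomial.T_sub, mul_comm (T _) c, mul_assoc]
    · simp

theorem diagT_mem {H : Subgroup (GL (Fin n) A[T;T⁻¹])} (hH : ∀ i, diagT (Pi.single i 1) ∈ H)
    (d : Fin n → ℤ) : diagT d ∈ H := by
  let K : AddSubgroup (Fin n → ℤ) :=
    { carrier := {d | diagT d ∈ H}
      add_mem' := fun hd he => by
        simpa only [Set.mem_ofPred_eq, diagT_add] using H.mul_mem hd he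
      zero_mem' := by simpa only [Set.mem_ofPred_eq, diagT_zero] using H.one_mem
      neg_mem' := fun hd => by simpa only [Set.mem_ofPred_eq, diagT_neg] using H.inv_mem hd }
  suffices d ∈ K from this
  rw [← Finset.univ_sum_single d]
  refine sum_mem fun i _ => ?_
  rw [← mul_one (d i), ← smul_eq_mul, Pi.single_smul]
  exact K.zsmul_mem (hH i) _

end DiagT

section Shift

variable {n : ℕ} {A : Type*} [CommRing A]

theorem mul_suslinMatrix_mul_inv (g : GL (Fin n) A) (v : Fin n → A) (M : Matrix (Fin n) (Fin n) A) :
    g.val * suslinMatrix v M * g⁻¹.val =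
      suslinMatrix (g.val *ᵥ v) (g⁻¹.valᵀ * M * g⁻¹.val) := by
  have halt : g⁻¹.valᵀ * M * g⁻¹.val - (g⁻¹.valᵀ * M * g⁻¹.val)ᵀ =
      g⁻¹.valᵀ * (M - Mᵀ) * g⁻¹.val := by
    simp only [transpose_mul, transpose_transpose, mul_sub, sub_mul, mul_assoc]
  rw [suslinMatrix, suslinMatrix, halt, mulVec_mulVec, mul_assoc (_ * _), Units.inv_mul, mul_one,
    mul_add, mul_one, add_mul, Units.mul_inv, mul_vecMulVec, vecMulVec_mul, ← mulVec_mulVec,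
    mulVec_transpose]

theorem exists_toLaurent_eq_diagT_conj_of_eq_suslinMatrix (hn : 3 ≤ n) (i : Fin n)
    {p : GL (Fin n) A[X]} {v : Fin n → A} {D : Matrix (Fin n) (Fin n) A[X]}
    (hp : p.val = suslinMatrix (C ∘ v) ((X : A[X]) • D)) :
    ∃ q ∈ elemGL n A[X], glMap toLaurent q =
      diagT (Pi.single i 1) * glMap toLaurent p * (diagT (Pi.single i 1))⁻¹ := by
  obtain ⟨q, hq, hqv⟩ := isElementary_suslinMatrix hn
    (fun k => if k = i then X * C (v k) else C (v k))
    (of fun k l => if k = i ∨ l = i then D k l else X * D k l)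
  refine ⟨q, hq, Units.ext ?_⟩
  rw [Units.val_mul, Units.val_mul, coe_glMap, coe_glMap, hqv, hp, suslinMatrix_map,
    suslinMatrix_map, mul_suslinMatrix_mul_inv]
  have hv : (toLaurent ∘ fun k => if k = i then X * C (v k) else C (v k)) =
      (diagT (Pi.single i 1)).val *ᵥ (toLaurent ∘ C ∘ v) := by
    ext1 k
    rcases eq_or_ne k i with rfl | hk <;> simp [coe_diagT, mulVec_diagonal, *]
  rw [← hv]
  apply suslinMatrix_congr
  have hentry (k l : Fin n) (hkl : k ≠ l) :
      toLaurent (if k = i ∨ l = i then D k l else X * D k l) =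
        T (-(Pi.single i 1 : Fin n → ℤ) k) * toLaurent (X * D k l) *
          T (-(Pi.single i 1 : Fin n → ℤ) l) := by
    by_cases hk : k = i <;> by_cases hl : l = i <;> simp_all
  ext1 k l
  rw [← diagT_neg]
  simp only [Matrix.sub_apply, transpose_apply, Matrix.map_apply, of_apply, coe_diagT,
    diagonal_transpose, mul_diagonal, diagonal_mul, Matrix.smul_apply, smul_eq_mul, Pi.neg_apply]
  rcases eq_or_ne k l with rfl | hkl
  · rw [sub_self, sub_self]
  · rw [hentry k l hkl, hentry l k hkl.symm]

theorem exists_toLaurent_eq_diagT_conj (hn : 3 ≤ n) (i : Fin n) {p : GL (Fin n) A[X]}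
    (hp : p ∈ elemGL n A[X]) (hp0 : glMap (evalRingHom 0) p = 1) :
    ∃ q ∈ elemGL n A[X], glMap toLaurent q =
      diagT (Pi.single i 1) * glMap toLaurent p * (diagT (Pi.single i 1))⁻¹ := by
  refine elemGL_induction_of_eval_zero (P := fun p => ∃ q ∈ elemGL n A[X], glMap toLaurent q =
    diagT (Pi.single i 1) * glMap toLaurent p * (diagT (Pi.single i 1))⁻¹) (p := p)
    ⟨1, one_mem _, by simp⟩ ?_
    (fun _ _ _ => exists_toLaurent_eq_diagT_conj_of_eq_suslinMatrix hn i) hp hp0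
  rintro a b ⟨q, hq, hqa⟩ ⟨r, hr, hrb⟩
  refine ⟨q * r, mul_mem hq hr, ?_⟩
  rw [map_mul, map_mul, hqa, hrb]
  group

theorem exists_toLaurent_eq_diagT_inv_conj (hn : 3 ≤ n) (i : Fin n) {p : GL (Fin n) A[X]}
    (hp : p ∈ elemGL n A[X]) (hp0 : glMap (evalRingHom 0) p = 1) :
    ∃ q ∈ elemGL n A[X], glMap toLaurent q =
      (diagT (Pi.single i 1))⁻¹ * glMap toLaurent p * diagT (Pi.single i 1) := by
  obtain ⟨p', hp', hpv⟩ := IsElementary.transpose ⟨p, hp, rfl⟩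
  have hp0' : glMap (evalRingHom 0) p' = 1 := by
    apply Units.ext
    rw [coe_glMap, hpv, transpose_map, ← coe_glMap, hp0, Units.val_one, transpose_one]
  obtain ⟨q', hq', e⟩ := exists_toLaurent_eq_diagT_conj hn i hp' hp0'
  obtain ⟨q, hq, hqv⟩ := IsElementary.transpose ⟨q', hq', rfl⟩
  refine ⟨q, hq, Units.ext ?_⟩
  have et := congr(($(e).val)ᵀ)
  rw [← diagT_neg] at et ⊢
  simpa only [Units.val_mul, coe_glMap, transpose_mul, transpose_map, hpv, hqv, coe_diagT,
    diagonal_transpose, transpose_transpose, mul_assoc] using et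

end Shift

section ColumnReduction

variable {n : ℕ} {A : Type*} [CommRing A]

theorem exists_toLaurent_eq_diagT_mul_of_col {g : GL (Fin n) A} (hg : g ∈ elemGL n A)
    {i k : Fin n} {t : A} (ht : IsUnit t) (hcol : ∀ a, g.val a k = if a = i then t else 0) :
    ∃ s ∈ elemGL n A[X], glMap toLaurent s = diagT (Pi.single i 1) *
      glMap LaurentPolynomial.C g * (diagT (Pi.single k 1))⁻¹ := by
  obtain ⟨t', htt'⟩ := ht.exists_right_inv
  let w : Fin n → A[X] := fun b => if b = k then 0 else (X - 1) * C (t' * g.val i b)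
  obtain ⟨r, hr, hrw⟩ := IsElementary.one_add_vecMulVec_single_left (k := k) (w := w) (by simp [w])
  refine ⟨glMap C g * r, mul_mem (glMap_mem_elemGL _ hg) hr, ?_⟩
  have htt : C t * C t' = 1 := by rw [← map_mul, htt', map_one]
  have hentry (a b : Fin n) : (glMap C g * r).val a b =
      if b = k then C (g.val a k) else if a = i then X * C (g.val a b) else C (g.val a b) := by
    rw [Units.val_mul, hrw, coe_glMap, mul_add, mul_one, mul_vecMulVec, Matrix.add_apply,
      vecMulVec_apply, mulVec_single_one, col_apply, Matrix.map_apply, Matrix.map_apply, hcol a]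
    by_cases hb : b = k
    · simp [w, hb, hcol]
    by_cases ha : a = i
    · simp only [w, ha, hb, if_true, if_false, map_mul]
      linear_combination ((X - 1) * C (g.val i b)) * htt
    · simp [ha, hb]
  rw [eq_mul_inv_iff_mul_eq]
  apply Units.ext
  ext1 a b
  rw [Units.val_mul, Units.val_mul, coe_diagT, coe_diagT, mul_diagonal, diagonal_mul, coe_glMap,
    coe_glMap, Matrix.map_apply, Matrix.map_apply, hentry]
  by_cases hb : b = k <;> by_cases ha : a = i <;> simp [ha, hb, hcol]

theorem exists_mem_toLaurent_eq_diagT_mul (H : Subgroup (GL (Fin n) A)) {g : GL (Fin n) A}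
    (hg : g ∈ elemGL n A) {i k : Fin n} (hu : IsUnit (g⁻¹.val k i))
    (hH : ∀ j (h : j ≠ k) t, transvectionGL h (g⁻¹.val j i * t) ∈ H) :
    ∃ u ∈ elemGL n A ⊓ H, ∃ s ∈ elemGL n A[X], glMap toLaurent s = diagT (Pi.single i 1) *
      glMap LaurentPolynomial.C (g * u) * (diagT (Pi.single k 1))⁻¹ := by
  obtain ⟨t, ht⟩ := hu.exists_right_inv
  let v : Fin n → A := fun j => if j = k then 0 else g⁻¹.val j i * t
  obtain ⟨u, hu, huv⟩ := exists_mem_coe_eq_one_add_vecMulVec_single (elemGL n A ⊓ H) (k := k)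
    (v := v) (by simp [v]) fun j h =>
      ⟨transvectionGL_mem_elemGL h _, by simpa [v, h] using hH j h t⟩
  refine ⟨u, hu, exists_toLaurent_eq_diagT_mul_of_col (mul_mem hg hu.1)
    (IsUnit.of_mul_eq_one_right _ ht) fun a => ?_⟩
  have hucol (b : Fin n) : u.val b k = g⁻¹.val b i * t := by
    rw [huv, Matrix.add_apply, vecMulVec_apply, one_apply]
    by_cases hb : b = k
    · rw [hb, ht]
      simp [v]
    · simp [v, hb]
  simp only [Units.val_mul, mul_apply, hucol, ← mul_assoc]
  rw [← Finset.sum_mul, ← mul_apply, Units.mul_inv, one_apply, ite_mul, one_mul, zero_mul]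

end ColumnReduction

section CongruenceCell

variable {n : ℕ} {A : Type*} [CommRing A] [IsLocalRing A]

/-- The elementary matrices over `A[X]` that are trivial modulo the maximal ideal of `A`. -/
noncomputable def congruenceElemGL (n : ℕ) (A : Type*) [CommRing A] [IsLocalRing A] :
    Subgroup (GL (Fin n) A[X]) :=
  elemGL n A[X] ⊓ (glMap (mapRingHom (IsLocalRing.residue A))).ker

theorem mem_congruenceElemGL {p : GL (Fin n) A[X]} :
    p ∈ congruenceElemGL n A ↔
      p ∈ elemGL n A[X] ∧ glMap (mapRingHom (IsLocalRing.residue A)) p = 1 := Iff.rfl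

theorem transvectionGL_C_mul_mem_congruenceElemGL {i j : Fin n} (h : i ≠ j) {c : A}
    (hc : IsLocalRing.residue A c = 0) (p : A[X]) :
    transvectionGL h (C c * p) ∈ congruenceElemGL n A := by
  refine mem_congruenceElemGL.mpr ⟨transvectionGL_mem_elemGL h _, ?_⟩
  rw [glMap_transvectionGL]
  simp [hc]

theorem glMap_C_mem_congruenceElemGL {c : GL (Fin n) A} (hc : c ∈ elemGL n A)
    (hc1 : glMap (IsLocalRing.residue A) c = 1) : glMap C c ∈ congruenceElemGL n A := by
  refine mem_congruenceElemGL.mpr ⟨glMap_mem_elemGL _ hc, ?_⟩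
  rw [glMap_glMap, mapRingHom_comp_C, ← glMap_glMap, hc1, map_one]

theorem glMap_residue_glMap_evalRingHom {p : GL (Fin n) A[X]} (hp : p ∈ congruenceElemGL n A) :
    glMap (IsLocalRing.residue A) (glMap (evalRingHom 0) p) = 1 := by
  have h : (IsLocalRing.residue A).comp (evalRingHom 0) =
      (evalRingHom 0).comp (mapRingHom (IsLocalRing.residue A)) :=
    Polynomial.ringHom_ext (by simp) (by simp)
  rw [glMap_glMap, h, ← glMap_glMap, (mem_congruenceElemGL.mp hp).2, map_one]

theorem mem_congruenceElemGL_of_toLaurent_eq_conj {p q : GL (Fin n) A[X]}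
    (hp : p ∈ congruenceElemGL n A) (hq : q ∈ elemGL n A[X]) {x : GL (Fin n) A[T;T⁻¹]}
    (h : glMap toLaurent q = x * glMap toLaurent p * x⁻¹) : q ∈ congruenceElemGL n A := by
  refine mem_congruenceElemGL.mpr ⟨hq, glMap_toLaurent_injective ?_⟩
  rw [← glMap_laurentMap_toLaurent, h, map_mul, map_mul, map_inv, glMap_laurentMap_toLaurent,
    (mem_congruenceElemGL.mp hp).2, map_one, mul_one, mul_inv_cancel]

theorem exists_toLaurent_eq_diagT_conj_of_mem_congruenceElemGL (hn : 3 ≤ n) (i : Fin n)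
    {p : GL (Fin n) A[X]} (hp : p ∈ congruenceElemGL n A) (hp0 : glMap (evalRingHom 0) p = 1) :
    ∃ q ∈ congruenceElemGL n A, glMap toLaurent q =
      diagT (Pi.single i 1) * glMap toLaurent p * (diagT (Pi.single i 1))⁻¹ := by
  obtain ⟨q, hq, e⟩ := exists_toLaurent_eq_diagT_conj hn i hp.1 hp0
  exact ⟨q, mem_congruenceElemGL_of_toLaurent_eq_conj hp hq e, e⟩

theorem exists_toLaurentInv_eq_diagT_conj_of_mem_congruenceElemGL (hn : 3 ≤ n) (i : Fin n)
    {p : GL (Fin n) A[X]} (hp : p ∈ congruenceElemGL n A) (hp0 : glMap (evalRingHom 0) p = 1) :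
    ∃ q ∈ congruenceElemGL n A, glMap toLaurentInv q =
      diagT (Pi.single i 1) * glMap toLaurentInv p * (diagT (Pi.single i 1))⁻¹ := by
  obtain ⟨q, hq, e⟩ := exists_toLaurent_eq_diagT_inv_conj hn i hp.1 hp0
  refine ⟨q, mem_congruenceElemGL_of_toLaurent_eq_conj hp hq (x := (diagT (Pi.single i 1))⁻¹)
    (by rw [e, inv_inv]), ?_⟩
  simpa using congr(glMap (invertHom A) $e)

/-- The set `P₊P₋`, where `P₊` and `P₋` are the images in `GL n A[T;T⁻¹]` of
`congruenceElemGL n A` under `X ↦ T` and `X ↦ T⁻¹`. -/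
def congruenceCell (n : ℕ) (A : Type*) [CommRing A] [IsLocalRing A] :
    Set (GL (Fin n) A[T;T⁻¹]) :=
  {y | ∃ a ∈ congruenceElemGL n A, ∃ b ∈ congruenceElemGL n A,
    y = glMap toLaurent a * glMap toLaurentInv b}

theorem one_mem_congruenceCell : 1 ∈ congruenceCell n A :=
  ⟨1, one_mem _, 1, one_mem _, by simp⟩

theorem glMap_laurentMap_residue_eq_one {y : GL (Fin n) A[T;T⁻¹]} (hy : y ∈ congruenceCell n A) :
    glMap (laurentMap (IsLocalRing.residue A)) y = 1 := by
  obtain ⟨a, ha, b, hb, rfl⟩ := hy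
  rw [map_mul, glMap_laurentMap_toLaurent, glMap_laurentMap_toLaurentInv, ha.2, hb.2, map_one,
    map_one, one_mul]

theorem glMap_invertHom_inv_mem_congruenceCell {y : GL (Fin n) A[T;T⁻¹]}
    (hy : y ∈ congruenceCell n A) : glMap (invertHom A) y⁻¹ ∈ congruenceCell n A := by
  obtain ⟨a, ha, b, hb, rfl⟩ := hy
  exact ⟨b⁻¹, inv_mem hb, a⁻¹, inv_mem ha, by simp [_root_.mul_inv_rev]⟩

theorem glMap_C_conj_mem_congruenceCell {e : GL (Fin n) A} (he : e ∈ elemGL n A)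
    {y : GL (Fin n) A[T;T⁻¹]} (hy : y ∈ congruenceCell n A) :
    glMap LaurentPolynomial.C e * y * (glMap LaurentPolynomial.C e)⁻¹ ∈ congruenceCell n A := by
  obtain ⟨a, ha, b, hb, rfl⟩ := hy
  have hconj {p : GL (Fin n) A[X]} (hp : p ∈ congruenceElemGL n A) :
      glMap C e * p * (glMap C e)⁻¹ ∈ congruenceElemGL n A :=
    ⟨mul_mem (mul_mem (glMap_mem_elemGL _ he) hp.1)
        (inv_mem (s := elemGL n A[X]) (glMap_mem_elemGL _ he)),
      (MonoidHom.normal_ker _).conj_mem _ hp.2 _⟩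
  refine ⟨_, hconj ha, _, hconj hb, ?_⟩
  simp only [map_mul, map_inv, glMap_toLaurent_glMap_C, glMap_toLaurentInv_glMap_C]
  group

theorem diagT_conj_glMap_C_mem_congruenceCell (i : Fin n) {c : GL (Fin n) A}
    (hc : c ∈ elemGL n A) (hc1 : glMap (IsLocalRing.residue A) c = 1) :
    diagT (Pi.single i 1) * glMap LaurentPolynomial.C c * (diagT (Pi.single i 1))⁻¹ ∈
      congruenceCell n A := by
  let conjC : GL (Fin n) A →* GL (Fin n) A[T;T⁻¹] :=
    (MulAut.conj (diagT (Pi.single i 1))).toMonoidHom.comp (glMap LaurentPolynomial.C)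
  have hres (a b : Fin n) : IsLocalRing.residue A (c⁻¹.val a b) = if a = b then 1 else 0 := by
    have e : glMap (IsLocalRing.residue A) c⁻¹ = 1 := by rw [map_inv, hc1, inv_one]
    exact congr($(e).val a b).trans one_apply
  have hunit : IsUnit (c⁻¹.val i i) := by
    rw [← IsLocalRing.residue_ne_zero_iff_isUnit, hres]
    simp
  obtain ⟨u, ⟨hu, hu1, u', hu', hconj⟩, s, hs, hsu⟩ := exists_mem_toLaurent_eq_diagT_mul
    ((glMap (IsLocalRing.residue A)).ker ⊓
      ((congruenceElemGL n A).map (glMap toLaurentInv)).comap conjC) hc hunit fun j h t => by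
    have hzero : IsLocalRing.residue A (c⁻¹.val j i * t) = 0 := by
      rw [map_mul, hres, if_neg h, zero_mul]
    refine ⟨MonoidHom.mem_ker.mpr (by rw [glMap_transvectionGL, hzero, transvectionGL_zero]),
      transvectionGL h (C (c⁻¹.val j i * t) * X),
      transvectionGL_C_mul_mem_congruenceElemGL h hzero X, ?_⟩
    simp only [conjC, MonoidHom.comp_apply, MulEquiv.toMonoidHom_eq_coe, MonoidHom.coe_coe,
      MulAut.conj_apply, glMap_transvectionGL, diagT_mul_transvectionGL_mul_inv, map_mul,
      toLaurentInv_C, toLaurentInv_X]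
    simp [h]
  have hcu1 : glMap (IsLocalRing.residue A) (c * u) = 1 := by rw [map_mul, hc1, hu1, one_mul]
  refine ⟨s, mem_congruenceElemGL_of_toLaurent_eq_conj
    (glMap_C_mem_congruenceElemGL (mul_mem hc hu) hcu1) hs (by rw [hsu, glMap_toLaurent_glMap_C]),
    u'⁻¹, inv_mem hu', ?_⟩
  rw [map_inv, hconj, hsu, map_mul]
  simp only [conjC, MonoidHom.comp_apply, MulEquiv.toMonoidHom_eq_coe, MonoidHom.coe_coe,
      MulAut.conj_apply]
  group

theorem diagT_conj_mem_congruenceCell (hn : 3 ≤ n) (i : Fin n) {y : GL (Fin n) A[T;T⁻¹]}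
    (hy : y ∈ congruenceCell n A) :
    diagT (Pi.single i 1) * y * (diagT (Pi.single i 1))⁻¹ ∈ congruenceCell n A := by
  obtain ⟨a, ha, b, hb, rfl⟩ := hy
  set a₀ := glMap (evalRingHom 0) a with ha₀
  set b₀ := glMap (evalRingHom 0) b with hb₀
  have ha₀1 : glMap (IsLocalRing.residue A) a₀ = 1 := glMap_residue_glMap_evalRingHom ha
  have hb₀1 : glMap (IsLocalRing.residue A) b₀ = 1 := glMap_residue_glMap_evalRingHom hb
  have ha₀E : a₀ ∈ elemGL n A := glMap_mem_elemGL _ ha.1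
  have hb₀E : b₀ ∈ elemGL n A := glMap_mem_elemGL _ hb.1
  obtain ⟨q, hq, hqa⟩ := exists_toLaurent_eq_diagT_conj_of_mem_congruenceElemGL hn i
    (p := a * (glMap C a₀)⁻¹) (mul_mem ha (inv_mem (glMap_C_mem_congruenceElemGL ha₀E ha₀1)))
    (by rw [map_mul, map_inv, glMap_evalRingHom_glMap_C, ← ha₀, mul_inv_cancel])
  obtain ⟨r, hr, hrb⟩ := exists_toLaurentInv_eq_diagT_conj_of_mem_congruenceElemGL hn i
    (p := (glMap C b₀)⁻¹ * b) (mul_mem (inv_mem (glMap_C_mem_congruenceElemGL hb₀E hb₀1)) hb)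
    (by rw [map_mul, map_inv, glMap_evalRingHom_glMap_C, ← hb₀, inv_mul_cancel])
  obtain ⟨s, hs, t, ht, hst⟩ := diagT_conj_glMap_C_mem_congruenceCell i (mul_mem ha₀E hb₀E)
    (by rw [map_mul, ha₀1, hb₀1, one_mul])
  refine ⟨q * s, mul_mem hq hs, t * r, mul_mem ht hr, ?_⟩
  calc _ = glMap toLaurent q * (glMap toLaurent s * glMap toLaurentInv t) *
        glMap toLaurentInv r := by
        rw [hqa, hrb, ← hst]
        simp only [map_mul, map_inv, glMap_toLaurent_glMap_C, glMap_toLaurentInv_glMap_C]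
        group
    _ = _ := by simp only [map_mul, mul_assoc]

theorem diagT_inv_conj_mem_congruenceCell (hn : 3 ≤ n) (i : Fin n) {y : GL (Fin n) A[T;T⁻¹]}
    (hy : y ∈ congruenceCell n A) :
    (diagT (Pi.single i 1))⁻¹ * y * diagT (Pi.single i 1) ∈ congruenceCell n A := by
  have h := glMap_invertHom_inv_mem_congruenceCell
    (diagT_conj_mem_congruenceCell hn i (glMap_invertHom_inv_mem_congruenceCell hy))
  simpa [_root_.mul_inv_rev, mul_assoc] using h

theorem elemGL_laurent_le {A : Type*} [CommRing A] {H : Subgroup (GL (Fin n) A[T;T⁻¹])}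
    (hC : ∀ e ∈ elemGL n A, glMap LaurentPolynomial.C e ∈ H)
    (hT : ∀ i, diagT (Pi.single i 1) ∈ H) : elemGL n A[T;T⁻¹] ≤ H := by
  refine elemGL_le fun i j h c => ?_
  induction c using LaurentPolynomial.induction_on' with
  | add p q hp hq => exact transvectionGL_add h p q ▸ mul_mem hp hq
  | C_mul_T k a =>
    have hconj := diagT_mul_transvectionGL_mul_inv (Pi.single i k) h (LaurentPolynomial.C a)
    rw [Pi.single_eq_same, Pi.single_eq_of_ne h.symm, sub_zero] at hconj
    rw [← hconj, ← glMap_transvectionGL]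
    exact mul_mem (mul_mem (diagT_mem hT _) (hC _ (transvectionGL_mem_elemGL h a)))
      (inv_mem (diagT_mem hT _))

theorem mem_set_normalizer_of_conj_mem {G : Type*} [Group G] {S : Set G} {g : G}
    (h : ∀ y ∈ S, g * y * g⁻¹ ∈ S) (h' : ∀ y ∈ S, g⁻¹ * y * g ∈ S) : g ∈ Subgroup.normalizer S :=
  Subgroup.mem_set_normalizer_iff.mpr fun y =>
    ⟨h y, fun hy => by simpa [mul_assoc] using h' _ hy⟩

theorem glMap_C_mem_normalizer_congruenceCell {e : GL (Fin n) A} (he : e ∈ elemGL n A) :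
    glMap LaurentPolynomial.C e ∈ Subgroup.normalizer (congruenceCell n A) :=
  mem_set_normalizer_of_conj_mem (fun _ => glMap_C_conj_mem_congruenceCell he)
    fun _ hy => by simpa using glMap_C_conj_mem_congruenceCell (inv_mem he) hy

theorem diagT_mem_normalizer_congruenceCell (hn : 3 ≤ n) (d : Fin n → ℤ) :
    diagT d ∈ Subgroup.normalizer (congruenceCell n A) :=
  diagT_mem (fun i => mem_set_normalizer_of_conj_mem
    (fun _ => diagT_conj_mem_congruenceCell hn i)
    (fun _ => diagT_inv_conj_mem_congruenceCell hn i)) d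

theorem elemGL_le_normalizer_congruenceCell (hn : 3 ≤ n) :
    elemGL n A[T;T⁻¹] ≤ Subgroup.normalizer (congruenceCell n A) :=
  elemGL_laurent_le (fun _ => glMap_C_mem_normalizer_congruenceCell)
    fun _ => diagT_mem_normalizer_congruenceCell hn _

end CongruenceCell

section Birkhoff

variable {n : ℕ} {A : Type*} [CommRing A]

theorem mem_stabilizer_of_mul_mem {G : Type*} [Group G] {S : Set G} {x : G}
    (h : ∀ y ∈ S, x * y ∈ S) (h' : ∀ y ∈ S, x⁻¹ * y ∈ S) : x ∈ MulAction.stabilizer G S :=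
  MulAction.mem_stabilizer_set.mpr fun y => ⟨fun hy => by simpa using h' _ hy, h y⟩

theorem normalizer_le_normalizer_stabilizer {G : Type*} [Group G] (S : Set G) :
    Subgroup.normalizer S ≤ Subgroup.normalizer (MulAction.stabilizer G S : Set G) := by
  have hconj (g : G) (hg : g ∈ Subgroup.normalizer S) (x : G) (hx : x ∈ MulAction.stabilizer G S) :
      g * x * g⁻¹ ∈ MulAction.stabilizer G S := by
    refine MulAction.mem_stabilizer_set.mpr fun y => ?_
    rw [smul_eq_mul, Subgroup.mem_set_normalizer_iff''.mp hg,
      Subgroup.mem_set_normalizer_iff''.mp hg y, ← MulAction.mem_stabilizer_set.mp hx (g⁻¹ * y * g)]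
    simp only [smul_eq_mul, mul_assoc, inv_mul_cancel_left]
  exact fun g hg => mem_set_normalizer_of_conj_mem (hconj g hg)
    fun y hy => by simpa using hconj g⁻¹ (inv_mem hg) y hy

theorem exists_isUnit_apply [IsLocalRing A] (g : GL (Fin n) A) (i : Fin n) :
    ∃ k, IsUnit (g.val k i) := by
  by_contra! hg
  have h : (g⁻¹ * g).val i i ∈ IsLocalRing.maximalIdeal A := by
    rw [Units.val_mul, mul_apply]
    exact sum_mem fun k _ => Ideal.mul_mem_left _ _ ((IsLocalRing.mem_maximalIdeal _).mpr (hg k))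
  rw [inv_mul_cancel, Units.val_one, one_apply_eq] at h
  exact (Ideal.ne_top_iff_one _).mp (IsLocalRing.maximalIdeal.isMaximal A).ne_top h

variable [IsLocalRing A]

/-- The subgroup of `GL n A[T;T⁻¹]` preserving `congruenceCell n A` under left translation. -/
noncomputable def cellStabilizer (n : ℕ) (A : Type*) [CommRing A] [IsLocalRing A] :
    Subgroup (GL (Fin n) A[T;T⁻¹]) :=
  MulAction.stabilizer (GL (Fin n) A[T;T⁻¹]) (congruenceCell n A)

theorem mem_congruenceCell_of_mem_cellStabilizer {x : GL (Fin n) A[T;T⁻¹]}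
    (hx : x ∈ cellStabilizer n A) : x ∈ congruenceCell n A := by
  have h := (MulAction.mem_stabilizer_set.mp hx 1).mpr one_mem_congruenceCell
  rwa [smul_eq_mul, mul_one] at h

theorem glMap_toLaurent_mem_cellStabilizer {p : GL (Fin n) A[X]}
    (hp : p ∈ congruenceElemGL n A) : glMap toLaurent p ∈ cellStabilizer n A := by
  have hmul {q : GL (Fin n) A[X]} (hq : q ∈ congruenceElemGL n A) (y : GL (Fin n) A[T;T⁻¹])
      (hy : y ∈ congruenceCell n A) : glMap toLaurent q * y ∈ congruenceCell n A := by
    obtain ⟨a, ha, b, hb, rfl⟩ := hy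
    exact ⟨q * a, mul_mem hq ha, b, hb, by rw [map_mul, mul_assoc]⟩
  exact mem_stabilizer_of_mul_mem (hmul hp) fun y hy => map_inv (glMap toLaurent) p ▸
    hmul (inv_mem hp) y hy

theorem elemGL_le_normalizer_cellStabilizer (hn : 3 ≤ n) :
    elemGL n A[T;T⁻¹] ≤ Subgroup.normalizer (cellStabilizer n A : Set (GL (Fin n) A[T;T⁻¹])) :=
  (elemGL_le_normalizer_congruenceCell hn).trans (normalizer_le_normalizer_stabilizer _)

/-- The subgroup generated by the elementary matrices over `A[T⁻¹]` and by `cellStabilizer n A`. -/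
noncomputable def oppositeElemGL (n : ℕ) (A : Type*) [CommRing A] [IsLocalRing A] :
    Subgroup (GL (Fin n) A[T;T⁻¹]) :=
  cellStabilizer n A ⊔ (elemGL n A[X]).map (glMap toLaurentInv)

theorem exists_eq_mul_of_mem_oppositeElemGL (hn : 3 ≤ n) {x : GL (Fin n) A[T;T⁻¹]}
    (hx : x ∈ oppositeElemGL n A) :
    ∃ κ ∈ cellStabilizer n A, ∃ b ∈ elemGL n A[X], x = κ * glMap toLaurentInv b := by
  have hle : (elemGL n A[X]).map (glMap toLaurentInv) ≤
      Subgroup.normalizer (cellStabilizer n A : Set (GL (Fin n) A[T;T⁻¹])) :=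
    (Subgroup.map_le_iff_le_comap.mpr fun _ => glMap_mem_elemGL _).trans
      (elemGL_le_normalizer_cellStabilizer hn)
  rw [← SetLike.mem_coe, oppositeElemGL, Subgroup.coe_mul_of_right_le_normalizer_left _ _ hle] at hx
  obtain ⟨κ, hκ, _, ⟨b, hb, rfl⟩, rfl⟩ := hx
  exact ⟨κ, hκ, b, hb, rfl⟩

theorem diagT_inv_conj_transvectionGL_mem_oppositeElemGL (hn : 3 ≤ n) (d : Fin n → ℤ)
    {j k : Fin n} (h : j ≠ k) {c : A} (hc : IsUnit c → d k ≤ d j) :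
    (diagT d)⁻¹ * glMap LaurentPolynomial.C (transvectionGL h c) * diagT d ∈
      oppositeElemGL n A := by
  by_cases hu : IsUnit c
  · refine le_sup_right (a := cellStabilizer n A)
      ⟨transvectionGL h (C c * X ^ (d j - d k).toNat), transvectionGL_mem_elemGL h _, ?_⟩
    have hT : toLaurentInv (C c * X ^ (d j - d k).toNat) =
        LaurentPolynomial.C c * T ((-d) j - (-d) k) := by
      rw [map_mul, map_pow, toLaurentInv_C, toLaurentInv_X, LaurentPolynomial.T_pow,
        Int.toNat_of_nonneg (by linarith [hc hu])]
      congr 2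
      simp only [Pi.neg_apply]
      ring
    rw [glMap_transvectionGL, glMap_transvectionGL, hT, ← diagT_mul_transvectionGL_mul_inv,
      diagT_neg, inv_inv]
  · have hres : IsLocalRing.residue A c = 0 :=
      (IsLocalRing.residue_eq_zero_iff c).mpr ((IsLocalRing.mem_maximalIdeal c).mpr hu)
    have hstab : glMap LaurentPolynomial.C (transvectionGL h c) ∈ cellStabilizer n A := by
      rw [← glMap_toLaurent_glMap_C, glMap_transvectionGL, ← mul_one (C c)]
      exact glMap_toLaurent_mem_cellStabilizer (transvectionGL_C_mul_mem_congruenceElemGL h hres 1)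
    exact le_sup_left (b := (elemGL n A[X]).map (glMap toLaurentInv))
      ((Subgroup.mem_set_normalizer_iff''.mp (normalizer_le_normalizer_stabilizer _
        (diagT_mem_normalizer_congruenceCell hn d)) _).mp hstab)

/-- The union of the double cosets `E_n(A[T]) · T ^ d · oppositeElemGL n A`, `d : Fin n → ℤ`, as in
the Birkhoff decomposition. -/
def birkhoffSet (n : ℕ) (A : Type*) [CommRing A] [IsLocalRing A] : Set (GL (Fin n) A[T;T⁻¹]) :=
  {z | ∃ a ∈ elemGL n A[X], ∃ d, ∃ x ∈ oppositeElemGL n A, z = glMap toLaurent a * diagT d * x}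

theorem glMap_C_mul_mem_birkhoffSet {e : GL (Fin n) A} (he : e ∈ elemGL n A)
    {z : GL (Fin n) A[T;T⁻¹]} (hz : z ∈ birkhoffSet n A) :
    glMap LaurentPolynomial.C e * z ∈ birkhoffSet n A := by
  obtain ⟨a, ha, d, x, hx, rfl⟩ := hz
  refine ⟨glMap C e * a, mul_mem (glMap_mem_elemGL _ he) ha, d, x, hx, ?_⟩
  rw [map_mul, glMap_toLaurent_glMap_C]
  group

theorem diagT_const_mul_mem_birkhoffSet (k : ℤ) {z : GL (Fin n) A[T;T⁻¹]}
    (hz : z ∈ birkhoffSet n A) : diagT (fun _ => k) * z ∈ birkhoffSet n A := by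
  obtain ⟨a, ha, d, x, hx, rfl⟩ := hz
  refine ⟨a, ha, (fun _ => k) + d, x, hx, ?_⟩
  rw [diagT_add, ← mul_assoc, ← mul_assoc, ← mul_assoc, diagT_const_mul]

theorem diagT_single_mul_mem_birkhoffSet (hn : 3 ≤ n) (i : Fin n) {z : GL (Fin n) A[T;T⁻¹]}
    (hz : z ∈ birkhoffSet n A) : diagT (Pi.single i 1) * z ∈ birkhoffSet n A := by
  classical
  obtain ⟨a, ha, d, x, hx, rfl⟩ := hz
  set a₀ := glMap (evalRingHom 0) a with ha₀
  have ha₀E : a₀ ∈ elemGL n A := glMap_mem_elemGL _ ha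
  obtain ⟨q, hq, hqa⟩ := exists_toLaurent_eq_diagT_conj hn i (p := a * (glMap C a₀)⁻¹)
    (mul_mem ha (inv_mem (glMap_mem_elemGL _ ha₀E)))
    (by rw [map_mul, map_inv, glMap_evalRingHom_glMap_C, ← ha₀, mul_inv_cancel])
  obtain ⟨k, hk, hmin⟩ := Finset.exists_min_image {k | IsUnit (a₀⁻¹.val k i)} d
    ((exists_isUnit_apply a₀⁻¹ i).imp fun k hk => by simpa using hk)
  simp only [Finset.mem_filter, Finset.mem_univ, true_and] at hk hmin
  let conjC : GL (Fin n) A →* GL (Fin n) A[T;T⁻¹] :=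
    (MulAut.conj (diagT d)⁻¹).toMonoidHom.comp (glMap LaurentPolynomial.C)
  have hconjC (u : GL (Fin n) A) :
      conjC u = (diagT d)⁻¹ * glMap LaurentPolynomial.C u * diagT d := by
    simp [conjC]
  obtain ⟨u, ⟨-, hu⟩, s, hs, hsu⟩ := exists_mem_toLaurent_eq_diagT_mul
    ((oppositeElemGL n A).comap conjC) ha₀E hk fun j h t => by
    rw [Subgroup.mem_comap, hconjC]
    exact diagT_inv_conj_transvectionGL_mem_oppositeElemGL hn d h
      fun ht => hmin j (isUnit_of_mul_isUnit_left ht)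
  refine ⟨q * s, mul_mem hq hs, Pi.single k 1 + d, (conjC u)⁻¹ * x, mul_mem (inv_mem hu) hx, ?_⟩
  rw [map_mul, hqa, hsu, hconjC, diagT_add]
  simp only [map_mul, map_inv, glMap_toLaurent_glMap_C]
  group

theorem diagT_single_inv_mul_mem_birkhoffSet (hn : 3 ≤ n) (i : Fin n) {z : GL (Fin n) A[T;T⁻¹]}
    (hz : z ∈ birkhoffSet n A) : (diagT (Pi.single i 1))⁻¹ * z ∈ birkhoffSet n A := by
  have hsum (s : Finset (Fin n)) : diagT (∑ j ∈ s, Pi.single j 1) * z ∈ birkhoffSet n A := by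
    induction s using Finset.induction_on with
    | empty => simpa using hz
    | insert j s hj ih =>
      rw [Finset.sum_insert hj, diagT_add, mul_assoc]
      exact diagT_single_mul_mem_birkhoffSet hn j ih
  have hneg : -(Pi.single i 1 : Fin n → ℤ) =
      (fun _ => -1) + ∑ j ∈ Finset.univ.erase i, Pi.single j 1 := by
    ext k
    rw [Pi.neg_apply, Pi.add_apply, Finset.sum_apply, Finset.sum_pi_single, Pi.single_apply]
    split_ifs <;> simp_all
  rw [← diagT_neg, hneg, diagT_add, mul_assoc]
  exact diagT_const_mul_mem_birkhoffSet _ (hsum _)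

theorem mem_birkhoffSet_of_mem_elemGL (hn : 3 ≤ n) {z : GL (Fin n) A[T;T⁻¹]}
    (hz : z ∈ elemGL n A[T;T⁻¹]) : z ∈ birkhoffSet n A := by
  have hle : elemGL n A[T;T⁻¹] ≤ MulAction.stabilizer _ (birkhoffSet n A) :=
    elemGL_laurent_le
      (fun e he => mem_stabilizer_of_mul_mem (fun _ => glMap_C_mul_mem_birkhoffSet he)
        fun _ hy => map_inv (glMap LaurentPolynomial.C) e ▸
          glMap_C_mul_mem_birkhoffSet (inv_mem he) hy)
      fun i => mem_stabilizer_of_mul_mem (fun _ => diagT_single_mul_mem_birkhoffSet hn i)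
        fun _ => diagT_single_inv_mul_mem_birkhoffSet hn i
  have hone : 1 ∈ birkhoffSet n A := ⟨1, one_mem _, 0, 1, one_mem _, by simp⟩
  simpa using (MulAction.mem_stabilizer_set.mp (hle hz) 1).mpr hone

end Birkhoff

section LocalRing

variable {n : ℕ} {A : Type*} [CommRing A]

theorem nonneg_of_map_toLaurent_eq_diagonal_mul [Nontrivial A] {d : Fin n → ℤ}
    {P Q : Matrix (Fin n) (Fin n) A[X]} (hP : IsUnit P)
    (h : P.map toLaurent = diagonal (fun i => T (d i)) * Q.map toLaurentInv) (i : Fin n) :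
    0 ≤ d i := by
  by_contra! hi
  have hrow (j : Fin n) : P i j = 0 := by
    have e := congr(trunc ($h i j))
    rwa [diagonal_mul, Matrix.map_apply, Matrix.map_apply, trunc_toLaurent, mul_comm,
      trunc_toLaurentInv_mul_T hi] at e
  exact not_isUnit_zero (det_eq_zero_of_row_eq_zero i hrow ▸ (isUnit_iff_isUnit_det P).mp hP)

theorem eq_zero_of_diagT_eq_toLaurent_mul_toLaurentInv [Nontrivial A] {d : Fin n → ℤ}
    {P Q : GL (Fin n) A[X]} (h : diagT d = glMap toLaurent P * glMap toLaurentInv Q) : d = 0 := by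
  have hP : glMap toLaurent P = diagT d * glMap toLaurentInv Q⁻¹ := by
    rw [h, map_inv, mul_inv_cancel_right]
  have hP' : glMap toLaurent P⁻¹ = glMap toLaurentInv Q * diagT (-d) := by
    rw [diagT_neg, h, map_inv, _root_.mul_inv_rev, mul_inv_cancel_left]
  have hd (i : Fin n) : 0 ≤ d i :=
    nonneg_of_map_toLaurent_eq_diagonal_mul P.isUnit congr(($hP).val) i
  have hd' (i : Fin n) : 0 ≤ (-d) i := by
    refine nonneg_of_map_toLaurent_eq_diagonal_mul (P := P⁻¹.valᵀ) (Q := Q.valᵀ)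
      ((isUnit_transpose _).mpr P⁻¹.isUnit) ?_ i
    have e := congr(($hP').valᵀ)
    rwa [Units.val_mul, transpose_mul, coe_diagT, diagonal_transpose] at e
  ext i
  exact le_antisymm (neg_nonneg.mp (hd' i)) (hd i)

theorem mem_elemGL_of_toLaurent_mul_toLaurentInv_eq {g h a b : GL (Fin n) A[X]}
    (ha : a ∈ elemGL n A[X]) (hb : b ∈ elemGL n A[X]) (hh : glMap (evalRingHom 0) h = 1)
    (e : glMap toLaurent g * glMap toLaurentInv h = glMap toLaurent a * glMap toLaurentInv b) :
    g ∈ elemGL n A[X] ∧ h ∈ elemGL n A[X] := by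
  have e' : glMap toLaurent (a⁻¹ * g) = glMap toLaurentInv (b * h⁻¹) := by
    rw [map_mul, map_inv, map_mul, map_inv, eq_mul_inv_iff_mul_eq, mul_assoc, e,
      inv_mul_cancel_left]
  have hg : a⁻¹ * g ∈ elemGL n A[X] := by
    rw [eq_glMap_C_of_toLaurent_eq_toLaurentInv e', map_mul, map_inv, hh, inv_one, mul_one]
    exact glMap_mem_elemGL _ (glMap_mem_elemGL _ hb)
  have hbh : b * h⁻¹ ∈ elemGL n A[X] := by
    rw [eq_glMap_C_of_toLaurentInv_eq_toLaurent e'.symm]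
    exact glMap_mem_elemGL _ (glMap_mem_elemGL _ hg)
  exact ⟨(Subgroup.mul_mem_cancel_left _ (inv_mem ha)).mp hg,
    inv_mem_iff.mp ((Subgroup.mul_mem_cancel_left _ hb).mp hbh)⟩

theorem mem_elemGL_of_toLaurent_mul_toLaurentInv_mem_of_isLocalRing [IsLocalRing A] (hn : 3 ≤ n)
    {g h : GL (Fin n) A[X]} (hh : glMap (evalRingHom 0) h = 1)
    (hgh : glMap toLaurent g * glMap toLaurentInv h ∈ elemGL n A[T;T⁻¹]) :
    g ∈ elemGL n A[X] ∧ h ∈ elemGL n A[X] := by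
  obtain ⟨a, ha, d, x, hx, e⟩ := mem_birkhoffSet_of_mem_elemGL hn hgh
  obtain ⟨κ, hκ, b, hb, rfl⟩ := exists_eq_mul_of_mem_oppositeElemGL hn hx
  have hκ := mem_congruenceCell_of_mem_cellStabilizer hκ
  have hd : d = 0 := by
    let red : GL (Fin n) A[X] →* GL (Fin n) (IsLocalRing.ResidueField A)[X] :=
      glMap (mapRingHom (IsLocalRing.residue A))
    refine eq_zero_of_diagT_eq_toLaurent_mul_toLaurentInv
      (P := (red a)⁻¹ * red g) (Q := red h * (red b)⁻¹) ?_
    have ered : glMap toLaurent (red g) * glMap toLaurentInv (red h) =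
        glMap toLaurent (red a) * diagT d * glMap toLaurentInv (red b) := by
      simpa only [map_mul, glMap_laurentMap_residue_eq_one hκ, one_mul, glMap_laurentMap_diagT,
        glMap_laurentMap_toLaurent, glMap_laurentMap_toLaurentInv] using
        congr(glMap (laurentMap (IsLocalRing.residue A)) $e)
    calc _ = (glMap toLaurent (red a))⁻¹ * (glMap toLaurent (red g) * glMap toLaurentInv (red h)) *
          (glMap toLaurentInv (red b))⁻¹ := by
          rw [ered]
          group
      _ = _ := by simp only [map_mul, map_inv, mul_assoc]
  obtain ⟨p, hp, r, hr, rfl⟩ := hκ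
  refine mem_elemGL_of_toLaurent_mul_toLaurentInv_eq (mul_mem ha hp.1) (mul_mem hr.1 hb) hh ?_
  rw [e, hd, diagT_zero, mul_one, map_mul, map_mul]
  group

end LocalRing

section MonicInversion

variable {n : ℕ} {A : Type*} [CommRing A] {g h : GL (Fin n) A[X]}

theorem eval_one_mul_eval_one_mem_elemGL
    (hgh : glMap toLaurent g * glMap toLaurentInv h ∈ elemGL n A[T;T⁻¹]) :
    glMap (evalRingHom 1) g * glMap (evalRingHom 1) h ∈ elemGL n A := by
  let ε : A[T;T⁻¹] →+* A := LaurentPolynomial.eval₂ (RingHom.id A) 1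
  have hpos : ε.comp toLaurent = evalRingHom 1 := Polynomial.ringHom_ext (by simp [ε]) (by simp [ε])
  have hneg : ε.comp toLaurentInv = evalRingHom 1 :=
    Polynomial.ringHom_ext (by simp [ε]) (by simp [ε])
  simpa only [map_mul, glMap_glMap, hpos, hneg] using glMap_mem_elemGL ε hgh

theorem glMap_mapRingHom_mem_elemGL {B : Type*} [CommRing B] [IsLocalRing B] (φ : A →+* B)
    (hn : 3 ≤ n) (hh : glMap (evalRingHom 0) h = 1)
    (hgh : glMap toLaurent g * glMap toLaurentInv h ∈ elemGL n A[T;T⁻¹]) :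
    glMap (mapRingHom φ) g ∈ elemGL n B[X] ∧ glMap (mapRingHom φ) h ∈ elemGL n B[X] := by
  refine mem_elemGL_of_toLaurent_mul_toLaurentInv_mem_of_isLocalRing hn ?_ ?_
  · have hφ : (evalRingHom 0).comp (mapRingHom φ) = φ.comp (evalRingHom 0) :=
      Polynomial.ringHom_ext (by simp) (by simp)
    rw [glMap_glMap, hφ, ← glMap_glMap, hh, map_one]
  · simpa only [map_mul, glMap_laurentMap_toLaurent, glMap_laurentMap_toLaurentInv] using
      glMap_mem_elemGL (laurentMap φ) hgh

theorem mem_elemGL_of_mul_inv_eval_zero_mem {r : A} (hr : glMap (evalRingHom r) g ∈ elemGL n A)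
    (hg : g * (glMap C (glMap (evalRingHom 0) g))⁻¹ ∈ elemGL n A[X]) : g ∈ elemGL n A[X] := by
  have h0 : glMap (evalRingHom 0) g ∈ elemGL n A := by
    have hq := glMap_mem_elemGL (evalRingHom r) hg
    rw [map_mul, map_inv, glMap_evalRingHom_glMap_C, Subgroup.mul_mem_cancel_left _ hr] at hq
    exact inv_mem_iff.mp hq
  exact (Subgroup.mul_mem_cancel_right _ (inv_mem (glMap_mem_elemGL C h0))).mp hg

theorem mul_inv_eval_zero_mem_elemGL_of_toLaurent_mul_toLaurentInv_mem (hn : 3 ≤ n)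
    (hh : glMap (evalRingHom 0) h = 1)
    (hgh : glMap toLaurent g * glMap toLaurentInv h ∈ elemGL n A[T;T⁻¹]) :
    g * (glMap C (glMap (evalRingHom 0) g))⁻¹ ∈ elemGL n A[X] :=
  mul_inv_eval_zero_mem_elemGL_of_forall_isMaximal hn fun m _ =>
    (glMap_mapRingHom_mem_elemGL (algebraMap A (Localization.AtPrime m)) hn hh hgh).1

theorem right_mem_elemGL_of_toLaurent_mul_toLaurentInv_mem (hn : 3 ≤ n)
    (hh : glMap (evalRingHom 0) h = 1)
    (hgh : glMap toLaurent g * glMap toLaurentInv h ∈ elemGL n A[T;T⁻¹]) : h ∈ elemGL n A[X] := by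
  have hq := mul_inv_eval_zero_mem_elemGL_of_forall_isMaximal hn fun m _ =>
    (glMap_mapRingHom_mem_elemGL (algebraMap A (Localization.AtPrime m)) hn hh hgh).2
  rwa [hh, map_one, inv_one, mul_one] at hq

theorem left_mem_elemGL_of_toLaurent_mul_toLaurentInv_mem (hn : 3 ≤ n)
    (hh : glMap (evalRingHom 0) h = 1)
    (hgh : glMap toLaurent g * glMap toLaurentInv h ∈ elemGL n A[T;T⁻¹]) : g ∈ elemGL n A[X] := by
  have hh_one := glMap_mem_elemGL (evalRingHom 1)
    (right_mem_elemGL_of_toLaurent_mul_toLaurentInv_mem hn hh hgh)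
  have hg_one := (Subgroup.mul_mem_cancel_right _ hh_one).mp (eval_one_mul_eval_one_mem_elemGL hgh)
  exact mem_elemGL_of_mul_inv_eval_zero_mem hg_one
    (mul_inv_eval_zero_mem_elemGL_of_toLaurent_mul_toLaurentInv_mem hn hh hgh)

theorem isCoprime_X_of_coeff_zero_eq_one {F : A[X]} (hF : F.coeff 0 = 1) : IsCoprime X F := by
  refine ⟨-F.divX, 1, ?_⟩
  have hdiv := F.divX_mul_X_add
  rw [hF, C_1] at hdiv
  linear_combination -hdiv

theorem exists_eq_mul_glMap_toLaurent (hn : 3 ≤ n) {F : A[X]} (hF : F.coeff 0 = 1)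
    {x : GL (Fin n) A[T;T⁻¹]}
    (hx : glMap (algebraMap _ (Localization.Away (toLaurent F))) x ∈ elemGL n _) :
    ∃ e ∈ elemGL n A[T;T⁻¹], ∃ w : GL (Fin n) A[X],
      x = e * glMap toLaurent w ∧ glMap (evalRingHom 0) w = 1 := by
  let S := Localization.Away (toLaurent F)
  have hu : IsUnit (algebraMap A[X] S F) :=
    IsLocalization.Away.algebraMap_isUnit (S := S) (toLaurent F)
  let : Algebra (Localization.Away F) S := (IsLocalization.Away.lift F hu).toAlgebra
  have : IsScalarTower A[X] (Localization.Away F) S :=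
    .of_algebraMap_eq' (IsLocalization.Away.lift_comp F hu).symm
  have : IsLocalization.Away (algebraMap A[X] A[T;T⁻¹] F) S :=
    inferInstanceAs (IsLocalization.Away (toLaurent F) (Localization.Away (toLaurent F)))
  obtain ⟨e, he, w, rfl, hw⟩ := exists_eq_mul_glMap_of_mem_elemGL (R₂ := Localization.Away F) hn
    (isCoprime_X_of_coeff_zero_eq_one hF) hx
  have hF0 : IsUnit (evalRingHom 0 F) := by
    rw [coe_evalRingHom, ← coeff_zero_eq_eval_zero, hF]
    exact isUnit_one
  have hw0 : glMap (evalRingHom 0) w ∈ elemGL n A := by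
    have h := glMap_mem_elemGL (IsLocalization.Away.lift F hF0) hw
    rwa [glMap_glMap, IsLocalization.Away.lift_comp] at h
  let c := glMap C (glMap (evalRingHom 0) w)
  have hc : glMap toLaurent c ∈ elemGL n A[T;T⁻¹] := glMap_mem_elemGL _ (glMap_mem_elemGL C hw0)
  refine ⟨e * glMap toLaurent c, mul_mem he hc, c⁻¹ * w, ?_, ?_⟩
  · rw [map_mul, map_inv, mul_assoc, mul_inv_cancel_left]
    rfl
  · rw [map_mul, map_inv, glMap_evalRingHom_glMap_C, inv_mul_cancel]

theorem toLaurentInv_mul_T_natDegree (f : A[X]) :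
    toLaurentInv f * T f.natDegree = toLaurent f.reverse :=
  (LaurentPolynomial.toLaurent_reverse f).symm

theorem glMap_toLaurentInv_mem_elemGL {f : A[X]}
    (hg : glMap (algebraMap A[X] (Localization.Away f)) g ∈ elemGL n _) :
    glMap (algebraMap _ (Localization.Away (toLaurent f.reverse))) (glMap toLaurentInv g) ∈
      elemGL n _ := by
  have hu : IsUnit (((algebraMap _ (Localization.Away (toLaurent f.reverse))).comp
      toLaurentInv) f) := by
    refine isUnit_of_mul_isUnit_left (y := algebraMap A[T;T⁻¹] _ (T f.natDegree)) ?_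
    rw [RingHom.comp_apply, ← map_mul, toLaurentInv_mul_T_natDegree]
    exact IsLocalization.Away.algebraMap_isUnit _
  have hlift := glMap_mem_elemGL (IsLocalization.Away.lift f hu) hg
  rwa [glMap_glMap, IsLocalization.Away.lift_comp, ← glMap_glMap] at hlift

end MonicInversion

/-- If `g ∈ GL_n(A[x])` becomes elementary over the localization `A[x]_f` at a monic
polynomial `f`, then `g` is elementary over `A[x]`; i.e. `K_1(A[x]) → K_1(A[x]_f)`
is injective. -/
theorem K1_inj_monic_localization (n : ℕ) (hn : 3 ≤ n) (A : Type*) [CommRing A]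
    (f : Polynomial A) (hf : f.Monic) (g : GL (Fin n) (Polynomial A))
    (h : glMap (algebraMap (Polynomial A) (Localization.Away f)) g ∈
      elemGL n (Localization.Away f)) :
    g ∈ elemGL n (Polynomial A) := by
  have hcoeff : f.reverse.coeff 0 = 1 := by rw [coeff_zero_reverse, hf.leadingCoeff]
  obtain ⟨e, he, w, hew, hw⟩ :=
    exists_eq_mul_glMap_toLaurent hn hcoeff (glMap_toLaurentInv_mem_elemGL h)
  refine left_mem_elemGL_of_toLaurent_mul_toLaurentInv_mem (h := w⁻¹) hn
    (by rw [map_inv, hw, inv_one]) ?_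
  have hinv : glMap toLaurent g * glMap toLaurentInv w⁻¹ = glMap (invertHom A) e := by
    rw [map_inv, mul_inv_eq_iff_eq_mul, ← glMap_invertHom_toLaurentInv, hew, map_mul,
      glMap_invertHom_toLaurent]
  rw [hinv]
  exact glMap_mem_elemGL _ he
end

section
/- Let A be a commutative ring and n ≥ 3. Let g(X) ∈ GL_n(A[X]) be such that g(0) ∈ E_n(A) and for every maximal ideal m of A the image of g(X) in GL_n(A_m[X]) lies in E_n(A_m[X]). Then g(X) ∈ E_n(A[X]). -/
/-!
Following Quillen, attach to `g(X)` the ideal of those `s` for which `g(a + sc) g(a)⁻¹` is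
elementary for all polynomials `a` and `c`. Once this ideal contains `1`, taking `a = 0` and
`c = X` shows that `g(X) g(0)⁻¹` is elementary, so it suffices to find an element of the ideal
outside each maximal ideal `m`.

Over `A_m` the matrix `g(Y + Z) g(Y)⁻¹` is elementary and trivial at `Z = 0`, hence a product of
conjugates of transvections with entries divisible by `Z`. As `n ≥ 3`, a transvection is a
commutator of two others, so that conjugation by an elementary matrix over the localization only
costs a denominator. Substituting `sZ` for `Z` with a suitable `s ∉ m` therefore clears all
denominators, and `g(Y + sZ) g(Y)⁻¹` is elementary over `A[Y][Z]`.
-/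

namespace SuslinLocalGlobal

open Matrix Polynomial
open scoped commutatorElement

section Transvections

variable {ι R S : Type*} [Fintype ι] [DecidableEq ι] [CommRing R] [CommRing S]

/-- The transvection `1 + a E_{ij}` as an element of `GL ι R`. -/
def transvectionGL {i j : ι} (hij : i ≠ j) (a : R) : GL ι R :=
  SpecialLinearGroup.toGL (SpecialLinearGroup.transvection hij a)

lemma coe_transvectionGL {i j : ι} (hij : i ≠ j) (a : R) :
    (transvectionGL hij a : Matrix ι ι R) = transvection i j a := rfl

lemma transvectionGL_add {i j : ι} (hij : i ≠ j) (a b : R) :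
    transvectionGL hij (a + b) = transvectionGL hij a * transvectionGL hij b := by
  simp only [transvectionGL, SpecialLinearGroup.transvection_add, map_mul]

lemma transvectionGL_inv {i j : ι} (hij : i ≠ j) (a : R) :
    (transvectionGL hij a)⁻¹ = transvectionGL hij (-a) := by
  simp only [transvectionGL, ← map_inv, SpecialLinearGroup.transvection_inv]

lemma map_transvectionGL (f : R →+* S) {i j : ι} (hij : i ≠ j) (a : R) :
    GeneralLinearGroup.map f (transvectionGL hij a) = transvectionGL hij (f a) := by
  ext k l
  simp [coe_transvectionGL, transvection, single_apply, one_apply, apply_ite f]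

lemma commute_transvectionGL {i j k l : ι} (hkl : k ≠ l) (hij : i ≠ j) (hli : l ≠ i)
    (hjk : j ≠ k) (a b : R) : Commute (transvectionGL hkl a) (transvectionGL hij b) := by
  refine Units.ext ?_
  simp only [Units.val_mul, coe_transvectionGL, transvection, add_mul, mul_add, one_mul, mul_one,
    single_mul_single_of_ne _ _ _ _ hli, single_mul_single_of_ne _ _ _ _ hjk]
  abel

lemma commutator_transvectionGL {i j k : ι} (hij : i ≠ j) (hjk : j ≠ k) (hik : i ≠ k) (a b : R) :
    ⁅transvectionGL hij a, transvectionGL hjk b⁆ = transvectionGL hik (a * b) := by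
  rw [commutatorElement_def, mul_inv_eq_iff_eq_mul, mul_inv_eq_iff_eq_mul]
  refine Units.ext ?_
  simp only [Units.val_mul, coe_transvectionGL, transvection, add_mul, mul_add, one_mul, mul_one,
    single_mul_single_same, single_mul_single_of_ne _ _ _ _ hik.symm,
    single_mul_single_of_ne _ _ _ _ hjk.symm, zero_mul]
  abel

variable (ι) in
/-- The subgroup of `GL ι R` generated by the transvections with off-diagonal entry in `J`.
(For an ideal `J` this is not the relative elementary group, which is its normal closure.) -/
def transvectionSubgroup (J : Set R) : Subgroup (GL ι R) :=
  Subgroup.closure {g | ∃ (i j : ι) (hij : i ≠ j), ∃ a ∈ J, transvectionGL hij a = g}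

variable (ι R) in
/-- The elementary subgroup of `GL ι R`, for an arbitrary finite index type `ι`. -/
abbrev elementarySubgroup : Subgroup (GL ι R) := transvectionSubgroup ι Set.univ

lemma elemGL_eq_elementarySubgroup (n : ℕ) : elemGL n R = elementarySubgroup (Fin n) R := by
  refine congrArg Subgroup.closure (Set.ext fun g => ?_)
  constructor
  · rintro ⟨i, j, a, hij, hg⟩
    exact ⟨i, j, hij, a, trivial, Units.ext hg.symm⟩
  · rintro ⟨i, j, hij, a, -, rfl⟩
    exact ⟨i, j, a, hij, rfl⟩

lemma transvectionGL_mem {J : Set R} {i j : ι} (hij : i ≠ j) {a : R} (ha : a ∈ J) :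
    transvectionGL hij a ∈ transvectionSubgroup ι J :=
  Subgroup.subset_closure ⟨i, j, hij, a, ha, rfl⟩

lemma transvectionSubgroup_le {J : Set R} {H : Subgroup (GL ι R)} :
    transvectionSubgroup ι J ≤ H ↔
      ∀ (i j : ι) (hij : i ≠ j), ∀ a ∈ J, transvectionGL hij a ∈ H := by
  rw [transvectionSubgroup, Subgroup.closure_le]
  constructor
  · exact fun h i j hij a ha => h ⟨i, j, hij, a, ha, rfl⟩
  · rintro h _ ⟨i, j, hij, a, ha, rfl⟩
    exact h i j hij a ha

lemma map_transvectionSubgroup (f : R →+* S) (J : Set R) :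
    (transvectionSubgroup ι J).map (GeneralLinearGroup.map f) =
      transvectionSubgroup ι (f '' J) := by
  apply le_antisymm
  · rw [Subgroup.map_le_iff_le_comap, transvectionSubgroup_le]
    intro i j hij a ha
    rw [Subgroup.mem_comap, map_transvectionGL]
    exact transvectionGL_mem hij ⟨a, ha, rfl⟩
  · rw [transvectionSubgroup_le]
    rintro i j hij _ ⟨a, ha, rfl⟩
    exact ⟨_, transvectionGL_mem hij ha, map_transvectionGL f hij a⟩

lemma map_mem_elementarySubgroup (f : R →+* S) {g : GL ι R} (hg : g ∈ elementarySubgroup ι R) :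
    GeneralLinearGroup.map f g ∈ elementarySubgroup ι S := by
  have hmap : GeneralLinearGroup.map f g ∈ transvectionSubgroup ι (f '' Set.univ) :=
    map_transvectionSubgroup (ι := ι) f Set.univ ▸ Subgroup.mem_map_of_mem _ hg
  exact transvectionSubgroup_le.2 (fun _ _ hij _ _ => transvectionGL_mem hij trivial) hmap

lemma conj_transvectionGL_mem {J : Set R} {i j k l : ι} (hkl : k ≠ l) (hij : i ≠ j)
    (hne : ¬(k = j ∧ l = i)) {a x : R} (hx : x ∈ J) (hax : a * x ∈ J) :
    transvectionGL hkl a * transvectionGL hij x * (transvectionGL hkl a)⁻¹ ∈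
      transvectionSubgroup ι J := by
  suffices hcomm : ⁅transvectionGL hkl a, transvectionGL hij x⁆ ∈ transvectionSubgroup ι J by
    simpa [commutatorElement_def] using mul_mem hcomm (transvectionGL_mem hij hx)
  by_cases hli : l = i
  · subst hli
    have hkj : k ≠ j := fun hkj => hne ⟨hkj, rfl⟩
    rw [commutator_transvectionGL hkl hij hkj]
    exact transvectionGL_mem hkj hax
  by_cases hjk : j = k
  · subst hjk
    rw [← commutatorElement_inv, commutator_transvectionGL hij hkl (Ne.symm hli), mul_comm]
    exact inv_mem (transvectionGL_mem _ hax)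
  · rw [commutatorElement_eq_one_iff_commute.2 (commute_transvectionGL hkl hij hli hjk a x)]
    exact one_mem _

/- The generator `e_{lk}(xy)` opposite to `e_{kl}(a)` is handled by writing it, with a third index
`m`, as the commutator of `e_{lm}(x)` and `e_{mk}(y)`, neither of which is opposite to it. -/
lemma conj_transvectionGL_mul_mem (hι : 3 ≤ Fintype.card ι) (J : Subsemigroup R) {i j k l : ι}
    (hkl : k ≠ l) (hij : i ≠ j) {a x y : R} (hx : x ∈ J) (hax : a * x ∈ J) (hy : y ∈ J)
    (hay : a * y ∈ J) :
    transvectionGL hkl a * transvectionGL hij (x * y) * (transvectionGL hkl a)⁻¹ ∈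
      transvectionSubgroup ι (J : Set R) := by
  by_cases hopp : k = j ∧ l = i
  · obtain ⟨m, hmi, hmj⟩ : ∃ m, m ≠ i ∧ m ≠ j :=
      ENat.exists_ne_ne_of_three_le (by simpa using mod_cast hι) i j
    have hxm := conj_transvectionGL_mem (i := i) (j := m) (J := (J : Set R)) hkl hmi.symm
      (fun h => hmj (h.1.symm.trans hopp.1)) hx hax
    have hym := conj_transvectionGL_mem (i := m) (j := j) (J := (J : Set R)) hkl hmj
      (fun h => hmi (h.2.symm.trans hopp.2)) hy hay
    rw [← commutator_transvectionGL hmi.symm hmj hij, ← MulAut.conj_apply, map_commutatorElement]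
    exact mul_mem (mul_mem (mul_mem hxm hym) (inv_mem hxm)) (inv_mem hym)
  · refine conj_transvectionGL_mem hkl hij hopp (mul_mem hx hy) ?_
    rw [← mul_assoc]
    exact mul_mem hax hy

end Transvections

section Denominators

variable {ι R S : Type*} [Fintype ι] [DecidableEq ι] [CommRing R] [CommRing S] [Algebra R S]

variable (S) in
/-- The image in an `R`-algebra `S` of the principal ideal `uR`. Only its closure under
multiplication matters, so it is recorded as a subsemigroup. -/
def imageMultiples (u : R) : Subsemigroup S where
  carrier := {x | ∃ r, algebraMap R S (u * r) = x}
  mul_mem' := by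
    rintro _ _ ⟨r, rfl⟩ ⟨r', rfl⟩
    exact ⟨r * (u * r'), by rw [← map_mul, mul_assoc]⟩

lemma transvectionSubgroup_imageMultiples_one :
    transvectionSubgroup ι (imageMultiples S (1 : R) : Set S) =
      (elementarySubgroup ι R).map (GeneralLinearGroup.map (algebraMap R S)) := by
  rw [map_transvectionSubgroup]
  congr 1
  ext x
  simp [imageMultiples]

/- If `t` clears the denominator of `a`, then conjugation by `e_{kl}(a)` maps the generators with
entry in `(tu)²R = (tu)R · (tu)R` into the subgroup attached to `uR`. -/
lemma exists_conj_transvectionGL_mem (hι : 3 ≤ Fintype.card ι) (M : Submonoid R)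
    [IsLocalization M S] {k l : ι} (hkl : k ≠ l) (a : S) {u : R} (hu : u ∈ M) :
    ∃ v ∈ M, ∀ x ∈ transvectionSubgroup ι (imageMultiples S v : Set S),
      transvectionGL hkl a * x * (transvectionGL hkl a)⁻¹ ∈
        transvectionSubgroup ι (imageMultiples S u : Set S) := by
  obtain ⟨⟨p, t⟩, hp⟩ := IsLocalization.surj M a
  have mem_multiples (r : R) : algebraMap R S (t * u * r) ∈ imageMultiples S u :=
    ⟨t * r, by ring_nf⟩
  have mul_mem_multiples (r : R) : a * algebraMap R S (t * u * r) ∈ imageMultiples S u :=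
    ⟨p * r, by simp only [map_mul, ← hp]; ring⟩
  refine ⟨t * u * (t * u), mul_mem (mul_mem t.2 hu) (mul_mem t.2 hu), fun x hx => ?_⟩
  suffices hle : transvectionSubgroup ι (imageMultiples S (t * u * (t * u)) : Set S) ≤
      (transvectionSubgroup ι (imageMultiples S u : Set S)).comap
        (MulAut.conj (transvectionGL hkl a)).toMonoidHom from hle hx
  rw [transvectionSubgroup_le]
  rintro i j hij _ ⟨r, rfl⟩
  have hsplit : algebraMap R S (t * u * (t * u) * r) =
      algebraMap R S (t * u * 1) * algebraMap R S (t * u * r) := by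
    rw [← map_mul]; ring_nf
  rw [hsplit]
  exact conj_transvectionGL_mul_mem hι _ hkl hij (mem_multiples 1) (mul_mem_multiples 1)
    (mem_multiples r) (mul_mem_multiples r)

lemma exists_conj_mem (hι : 3 ≤ Fintype.card ι) (M : Submonoid R) [IsLocalization M S]
    {γ : GL ι S} (hγ : γ ∈ elementarySubgroup ι S) {u : R} (hu : u ∈ M) :
    ∃ v ∈ M, ∀ x ∈ transvectionSubgroup ι (imageMultiples S v : Set S),
      γ * x * γ⁻¹ ∈ transvectionSubgroup ι (imageMultiples S u : Set S) := by
  induction hγ using Subgroup.closure_induction'' generalizing u with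
  | mem _ h =>
    obtain ⟨k, l, hkl, a, -, rfl⟩ := h
    exact exists_conj_transvectionGL_mem hι M hkl a hu
  | inv_mem _ h =>
    obtain ⟨k, l, hkl, a, -, rfl⟩ := h
    rw [transvectionGL_inv]
    exact exists_conj_transvectionGL_mem hι M hkl (-a) hu
  | one => exact ⟨u, hu, by simp⟩
  | mul γ δ _ _ ihγ ihδ =>
    obtain ⟨v, hv, hγv⟩ := ihγ hu
    obtain ⟨w, hw, hδw⟩ := ihδ hv
    refine ⟨w, hw, fun x hx => ?_⟩
    simpa only [_root_.mul_inv_rev, mul_assoc] using hγv _ (hδw x hx)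

end Denominators

section Dilation

variable {ι R S : Type*} [Fintype ι] [DecidableEq ι] [CommRing R] [CommRing S]

/-- The substitution `p(X) ↦ p(wX)`. -/
noncomputable def dilate (w : R) : R[X] →+* R[X] := compRingHom (C w * X)

@[simp]
lemma dilate_C (w a : R) : dilate w (C a) = C a := by simp [dilate]

@[simp]
lemma dilate_X (w : R) : dilate w X = C w * X := by simp [dilate]

@[simp]
lemma coeff_dilate (w : R) (p : R[X]) (n : ℕ) : (dilate w p).coeff n = p.coeff n * w ^ n := by
  simp [dilate]

lemma dilate_comp_dilate (v w : R) : (dilate w).comp (dilate v) = dilate (v * w) := by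
  ext <;> simp [mul_assoc]

lemma dilate_comp_mapRingHom (f : R →+* S) (w : R) :
    (dilate (f w)).comp (mapRingHom f) = (mapRingHom f).comp (dilate w) := by
  ext <;> simp

/-- The matrix `g(0)` of constant terms of `g(X)`, seen as a matrix of constant polynomials. -/
noncomputable def constPart : GL ι R[X] →* GL ι R[X] :=
  GeneralLinearGroup.map (C.comp (evalRingHom 0))

lemma constPart_constPart (g : GL ι R[X]) : constPart (constPart g) = constPart g := by
  ext i j : 2
  simp [constPart]

lemma map_dilate_constPart (w : R) (g : GL ι R[X]) :
    GeneralLinearGroup.map (dilate w) (constPart g) = constPart g := by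
  ext i j : 2
  simp [constPart]

lemma constPart_map_dilate (w : R) (g : GL ι R[X]) :
    constPart (GeneralLinearGroup.map (dilate w) g) = constPart g := by
  ext i j : 2
  simp [constPart, ← coeff_zero_eq_eval_zero]

lemma constPart_map_mapRingHom (f : R →+* S) (g : GL ι R[X]) :
    constPart (GeneralLinearGroup.map (mapRingHom f) g) =
      GeneralLinearGroup.map (mapRingHom f) (constPart g) := by
  ext i j : 2
  simp [constPart, ← coeff_zero_eq_eval_zero]

lemma map_dilate_map_mapRingHom (f : R →+* S) (w : R) (g : GL ι R[X]) :
    GeneralLinearGroup.map (dilate (f w)) (GeneralLinearGroup.map (mapRingHom f) g) =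
      GeneralLinearGroup.map (mapRingHom f) (GeneralLinearGroup.map (dilate w) g) := by
  rw [← MonoidHom.comp_apply, ← GeneralLinearGroup.map_comp, dilate_comp_mapRingHom,
    GeneralLinearGroup.map_comp, MonoidHom.comp_apply]

lemma constPart_mem {g : GL ι R[X]} (hg : g ∈ elementarySubgroup ι R[X]) :
    constPart g ∈ elementarySubgroup ι R[X] :=
  map_mem_elementarySubgroup _ hg

attribute [local instance] Polynomial.algebra Polynomial.isLocalization

variable [Algebra R S]

variable (ι S) in
/-- The matrices `x(X)` over `S[X]` such that, for every `u ∈ M`, the dilation `x(wX)` is a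
product of transvections with entries in `u R[X]` as soon as `w` is divisible by a suitable
element of `M`. -/
def dilationSubgroup (M : Submonoid R) : Subgroup (GL ι S[X]) where
  carrier := {x | ∀ u ∈ M, ∃ v ∈ M, ∀ w, v ∣ w →
    GeneralLinearGroup.map (dilate (algebraMap R S w)) x ∈
      transvectionSubgroup ι (imageMultiples S[X] (C u) : Set S[X])}
  one_mem' _ _ := ⟨1, one_mem M, fun w _ => by rw [map_one]; exact one_mem _⟩
  mul_mem' {x y} hx hy u hu := by
    obtain ⟨v, hv, hxv⟩ := hx u hu
    obtain ⟨v', hv', hyv'⟩ := hy u hu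
    refine ⟨v * v', mul_mem hv hv', fun w hw => ?_⟩
    rw [map_mul]
    exact mul_mem (hxv w (dvd_of_mul_right_dvd hw)) (hyv' w (dvd_of_mul_left_dvd hw))
  inv_mem' {x} hx u hu := by
    obtain ⟨v, hv, hxv⟩ := hx u hu
    refine ⟨v, hv, fun w hw => ?_⟩
    rw [map_inv]
    exact inv_mem (hxv w hw)

variable (M : Submonoid R) [IsLocalization M S]

lemma transvectionGL_X_mul_mem_dilationSubgroup {i j : ι} (hij : i ≠ j) (f : S[X]) :
    transvectionGL hij (X * f) ∈ dilationSubgroup ι S M := by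
  intro u hu
  obtain ⟨⟨p, ⟨_, t, ht, rfl⟩⟩, hp⟩ := IsLocalization.surj (M.map C) f
  refine ⟨t * u, mul_mem ht hu, ?_⟩
  rintro _ ⟨c, rfl⟩
  rw [map_transvectionGL]
  refine transvectionGL_mem hij ⟨C c * X * dilate (t * u * c) p, ?_⟩
  have hdilate := congrArg (dilate (algebraMap R S (t * u * c))) hp
  have hcomm := RingHom.congr_fun (dilate_comp_mapRingHom (algebraMap R S) (t * u * c)) p
  simp only [RingHom.comp_apply] at hcomm
  simp only [algebraMap_def] at hdilate ⊢
  rw [hcomm, map_mul] at hdilate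
  rw [← mul_assoc, map_mul, ← hdilate]
  simp only [coe_mapRingHom, map_C, map_X, map_mul, dilate_C, dilate_X]
  ring

lemma conj_constPart_mem_dilationSubgroup (hι : 3 ≤ Fintype.card ι) {γ x : GL ι S[X]}
    (hγ : γ ∈ elementarySubgroup ι S[X]) (hx : x ∈ dilationSubgroup ι S M) :
    constPart γ * x * (constPart γ)⁻¹ ∈ dilationSubgroup ι S M := by
  intro u hu
  obtain ⟨_, ⟨v, hv, rfl⟩, hconj⟩ :=
    exists_conj_mem hι (M.map (C : R →+* R[X])) (constPart_mem hγ) (Submonoid.mem_map_of_mem C hu)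
  obtain ⟨v', hv', hxv'⟩ := hx v hv
  refine ⟨v', hv', fun w hw => ?_⟩
  rw [map_mul, map_mul, map_inv, map_dilate_constPart]
  exact hconj _ (hxv' w hw)

lemma mul_inv_constPart_mem_dilationSubgroup (hι : 3 ≤ Fintype.card ι) {γ : GL ι S[X]}
    (hγ : γ ∈ elementarySubgroup ι S[X]) : γ * (constPart γ)⁻¹ ∈ dilationSubgroup ι S M := by
  induction hγ using Subgroup.closure_induction with
  | mem _ h =>
    obtain ⟨i, j, hij, f, -, rfl⟩ := h
    have hsplit : f + -C (f.eval 0) = X * f.divX := by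
      rw [← coeff_zero_eq_eval_zero]
      linear_combination -X_mul_divX_add f
    rw [constPart, map_transvectionGL, transvectionGL_inv, ← transvectionGL_add]
    simp only [RingHom.comp_apply, coe_evalRingHom, hsplit]
    exact transvectionGL_X_mul_mem_dilationSubgroup M hij _
  | one => simp
  | mul γ δ hγ _ ihγ ihδ =>
    convert mul_mem ihγ (conj_constPart_mem_dilationSubgroup M hι hγ ihδ) using 1
    rw [map_mul]
    group
  | inv γ hγ ih =>
    convert conj_constPart_mem_dilationSubgroup M hι (inv_mem hγ) (inv_mem ih) using 1
    rw [map_inv]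
    group

lemma exists_dilate_eq_of_map_eq {p q : R[X]} (h0 : p.eval 0 = q.eval 0)
    (hS : p.map (algebraMap R S) = q.map (algebraMap R S)) :
    ∃ t ∈ M, ∀ w, t ∣ w → dilate w p = dilate w q := by
  obtain ⟨⟨_, t, ht, rfl⟩, hpq⟩ := IsLocalization.exists_of_eq (M := M.map C) (S := S[X]) hS
  refine ⟨t, ht, ?_⟩
  rintro _ ⟨c, rfl⟩
  ext n
  rw [coeff_dilate, coeff_dilate]
  cases n with
  | zero => simpa [coeff_zero_eq_eval_zero] using h0
  | succ n =>
    have hcoeff : t * p.coeff (n + 1) = t * q.coeff (n + 1) := by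
      simpa using congrArg (coeff · (n + 1)) hpq
    linear_combination t ^ n * c ^ (n + 1) * hcoeff

lemma exists_map_dilate_eq_of_map_eq {g h : GL ι R[X]} (h0 : constPart g = constPart h)
    (hS : GeneralLinearGroup.map (mapRingHom (algebraMap R S)) g =
      GeneralLinearGroup.map (mapRingHom (algebraMap R S)) h) :
    ∃ t ∈ M, GeneralLinearGroup.map (dilate t) g = GeneralLinearGroup.map (dilate t) h := by
  have hentry (i j : ι) : ∃ t ∈ M, ∀ w, t ∣ w → dilate w (g i j) = dilate w (h i j) := by
    refine exists_dilate_eq_of_map_eq (S := S) M ?_ congr($hS i j)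
    simpa [constPart] using congr($h0 i j)
  choose t ht heq using hentry
  refine ⟨∏ i, ∏ j, t i j, prod_mem fun i _ => prod_mem fun j _ => ht i j, ?_⟩
  ext i j : 2
  exact heq i j _ ((Finset.dvd_prod_of_mem (t i) (Finset.mem_univ j)).trans
    (Finset.dvd_prod_of_mem (fun i => ∏ j, t i j) (Finset.mem_univ i)))

lemma exists_map_dilate_mem_of_map_mem_map {k : GL ι R[X]} (hk : constPart k = 1)
    (hS : GeneralLinearGroup.map (mapRingHom (algebraMap R S)) k ∈
      (elementarySubgroup ι R[X]).map (GeneralLinearGroup.map (mapRingHom (algebraMap R S)))) :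
    ∃ t ∈ M, GeneralLinearGroup.map (dilate t) k ∈ elementarySubgroup ι R[X] := by
  obtain ⟨ε, hε, hεk⟩ := hS
  have hε0 : GeneralLinearGroup.map (mapRingHom (algebraMap R S)) (constPart ε) = 1 := by
    rw [← constPart_map_mapRingHom, hεk, constPart_map_mapRingHom, hk, map_one]
  obtain ⟨t, ht, hkt⟩ :=
    exists_map_dilate_eq_of_map_eq (S := S) M (g := k) (h := ε * (constPart ε)⁻¹)
      (by rw [hk, map_mul, map_inv, constPart_constPart, mul_inv_cancel])
      (by rw [map_mul, map_inv, hε0, inv_one, mul_one, hεk])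
  refine ⟨t, ht, ?_⟩
  rw [hkt]
  exact map_mem_elementarySubgroup _ (mul_mem hε (inv_mem (constPart_mem hε)))

theorem exists_map_dilate_mul_inv_constPart_mem (hι : 3 ≤ Fintype.card ι) {h : GL ι R[X]}
    (hS : GeneralLinearGroup.map (mapRingHom (algebraMap R S)) h ∈ elementarySubgroup ι S[X]) :
    ∃ s ∈ M, GeneralLinearGroup.map (dilate s) h * (constPart h)⁻¹ ∈
      elementarySubgroup ι R[X] := by
  obtain ⟨v, hv, hdilate⟩ := mul_inv_constPart_mem_dilationSubgroup M hι hS 1 (one_mem M)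
  have hmem := hdilate v dvd_rfl
  rw [map_one, transvectionSubgroup_imageMultiples_one, algebraMap_def, constPart_map_mapRingHom,
    ← map_inv, ← map_mul, map_dilate_map_mapRingHom, map_mul, map_inv, map_dilate_constPart] at hmem
  obtain ⟨t, ht, hkt⟩ := exists_map_dilate_mem_of_map_mem_map M
    (by rw [map_mul, map_inv, constPart_map_dilate, constPart_constPart, mul_inv_cancel]) hmem
  refine ⟨v * t, mul_mem hv ht, ?_⟩
  rwa [map_mul, map_inv, map_dilate_constPart, ← MonoidHom.comp_apply,
    ← GeneralLinearGroup.map_comp, dilate_comp_dilate] at hkt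

end Dilation

section QuillenIdeal

variable {ι A B : Type*} [Fintype ι] [DecidableEq ι] [CommRing A] [CommRing B]

/-- The Quillen ideal of `g(X)`: those `s` such that `g(a)` and `g(b)` agree modulo elementary
matrices whenever the polynomials `a` and `b` are congruent modulo `s`. -/
def quillenIdeal (g : GL ι A[X]) : Ideal A where
  carrier := {s | ∀ a c : A[X], GeneralLinearGroup.map (compRingHom (a + C s * c)) g *
    (GeneralLinearGroup.map (compRingHom a) g)⁻¹ ∈ elementarySubgroup ι A[X]}
  zero_mem' a c := by simp
  add_mem' {s t} hs ht a c := by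
    convert mul_mem (hs (a + C t * c) c) (ht a c) using 1
    rw [show a + C (s + t) * c = a + C t * c + C s * c by rw [C_add]; ring]
    group
  smul_mem' r s hs a c := by
    rw [show a + C (r • s) * c = a + C s * (C r * c) by rw [smul_eq_mul, C_mul]; ring]
    exact hs a (C r * c)

/-- The substitution `p(Y) ↦ p(Y + Z)`, with `Y` the inner and `Z` the outer variable of
`A[X][X]`. -/
noncomputable def translate : A[X] →+* A[X][X] := eval₂RingHom (C.comp C) (C X + X)

lemma mapRingHom_comp_translate (f : A →+* B) :
    (mapRingHom (mapRingHom f)).comp translate = translate.comp (mapRingHom f) := by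
  ext <;> simp [translate]

lemma constPart_map_translate (g : GL ι A[X]) :
    constPart (GeneralLinearGroup.map translate g) = GeneralLinearGroup.map C g := by
  have hcomp : (C.comp (evalRingHom 0)).comp translate = (C : A[X] →+* A[X][X]) := by
    ext <;> simp [translate]
  rw [constPart, ← MonoidHom.comp_apply, ← GeneralLinearGroup.map_comp, hcomp]

attribute [local instance] Polynomial.algebra Polynomial.isLocalization

theorem exists_mem_quillenIdeal [Algebra A B] (hι : 3 ≤ Fintype.card ι) (M : Submonoid A)
    [IsLocalization M B] {g : GL ι A[X]}
    (hg : GeneralLinearGroup.map (mapRingHom (algebraMap A B)) g ∈ elementarySubgroup ι B[X]) :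
    ∃ s ∈ M, s ∈ quillenIdeal g := by
  have hmap : GeneralLinearGroup.map (mapRingHom (algebraMap A[X] B[X]))
      (GeneralLinearGroup.map translate g) ∈ elementarySubgroup ι B[X][X] := by
    rw [algebraMap_def, ← MonoidHom.comp_apply, ← GeneralLinearGroup.map_comp,
      mapRingHom_comp_translate]
    exact map_mem_elementarySubgroup translate hg
  obtain ⟨_, ⟨s, hs, rfl⟩, hmem⟩ :=
    exists_map_dilate_mul_inv_constPart_mem (M.map (C : A →+* A[X])) hι hmap
  refine ⟨s, hs, fun a c => ?_⟩
  let subst : A[X][X] →+* A[X] := eval₂RingHom (compRingHom a) c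
  have hYZ : (subst.comp (dilate (C s))).comp translate = compRingHom (a + C s * c) := by
    ext <;> simp [subst, translate]
  have hY : subst.comp C = compRingHom a := by
    ext <;> simp [subst]
  have := map_mem_elementarySubgroup subst hmem
  rwa [map_mul, map_inv, constPart_map_translate, ← MonoidHom.comp_apply,
    ← MonoidHom.comp_apply, ← MonoidHom.comp_apply, ← GeneralLinearGroup.map_comp,
    ← GeneralLinearGroup.map_comp, ← GeneralLinearGroup.map_comp, hYZ, hY] at this

theorem mul_inv_constPart_mem_of_quillenIdeal_eq_top {g : GL ι A[X]} (hg : quillenIdeal g = ⊤) :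
    g * (constPart g)⁻¹ ∈ elementarySubgroup ι A[X] := by
  have hone : (1 : A) ∈ quillenIdeal g := hg ▸ Submodule.mem_top
  have hX : compRingHom (0 + C 1 * X) = RingHom.id A[X] := by
    ext <;> simp
  have h0 : compRingHom 0 = C.comp (evalRingHom (0 : A)) := by
    ext <;> simp
  have hmem := hone 0 X
  rw [hX, h0, GeneralLinearGroup.map_id] at hmem
  exact hmem

end QuillenIdeal

end SuslinLocalGlobal

open SuslinLocalGlobal in
theorem suslin_local_global_general {ι A : Type*} [Fintype ι] [DecidableEq ι] [CommRing A]
    (hι : 3 ≤ Fintype.card ι) (g : GL ι (Polynomial A))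
    (hloc : ∀ (m : Ideal A) [m.IsMaximal],
      Matrix.GeneralLinearGroup.map
          (Polynomial.mapRingHom (algebraMap A (Localization.AtPrime m))) g ∈
        elementarySubgroup ι (Polynomial (Localization.AtPrime m))) :
    g * (constPart g)⁻¹ ∈ elementarySubgroup ι (Polynomial A) := by
  apply mul_inv_constPart_mem_of_quillenIdeal_eq_top
  by_contra hne
  obtain ⟨m, hm, hle⟩ := Ideal.exists_le_maximal _ hne
  obtain ⟨s, hsm, hs⟩ := exists_mem_quillenIdeal hι m.primeCompl (hloc m)
  exact hsm (hle hs)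

/-- Suslin's local-global principle: if `g(X) ∈ GL_n(A[X])` has `g(0) ∈ E_n(A)` and becomes
elementary over `A_m[X]` for every maximal ideal `m` of `A`, then `g(X) ∈ E_n(A[X])`. -/
theorem suslin_local_global (n : ℕ) (hn : 3 ≤ n) (A : Type*) [CommRing A]
    (g : GL (Fin n) (Polynomial A))
    (h0 : glMap (Polynomial.evalRingHom (0 : A)) g ∈ elemGL n A)
    (hloc : ∀ (m : Ideal A) (hm : m.IsMaximal),
      haveI : m.IsPrime := hm.isPrime
      glMap (Polynomial.mapRingHom (algebraMap A (Localization.AtPrime m))) g ∈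
        elemGL n (Polynomial (Localization.AtPrime m))) :
    g ∈ elemGL n (Polynomial A) := by
  simp only [SuslinLocalGlobal.elemGL_eq_elementarySubgroup] at h0 hloc ⊢
  have hconst : SuslinLocalGlobal.constPart g ∈ SuslinLocalGlobal.elementarySubgroup _ _ :=
    SuslinLocalGlobal.map_mem_elementarySubgroup Polynomial.C h0
  simpa using mul_mem (suslin_local_global_general (by simpa using hn) g fun m hm => hloc m hm)
    hconst
end

section
/- Let K be a field and n ≥ 3. Then SL_n(K[x_1,…,x_m]) = E_n(K[x_1,…,x_m]) for every m ≥ 0; in particular K_1^{SL_n}(K) = K_1^{SL_n}(K[x_1,…,x_m]) is trivial. -/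
/-- The elementary subgroup `E_n(R) ⊆ SL_n(R)`. -/
def elemSL (n : ℕ) (R : Type*) [CommRing R] :
    Subgroup (Matrix.SpecialLinearGroup (Fin n) R) :=
  Subgroup.closure {g | ∃ (i j : Fin n) (a : R), i ≠ j ∧
    (g : Matrix (Fin n) (Fin n) R) = Matrix.transvection i j a}

/-!
The argument is Suslin's, by induction on the number of variables. A change of variables makes any
nonzero polynomial have a unit as leading coefficient in the last variable. Quillen patching,
which rests on the stability of `E_n` under conjugation up to denominators for `n ≥ 3`, then reduces
a statement over `R[X]` to its counterparts over `R` and over `R_𝔪[X]` for the maximal ideals `𝔪`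
of `R`.

Applied to columns, with Horrocks' argument in the local case, this shows that `E_n` is transitive
on unimodular columns, so that clearing the first column descends from `SL_n` to `SL_{n-1}` and
finally to `SL_2` inside `SL_3`. There the class of a matrix depends only on its first row `(a, b)`
and is multiplicative in `a` (the Mennicke symbol), which settles the local case by induction on
the degree of a monic `a`.
-/

open Polynomial (C X)
open Matrix.SpecialLinearGroup (map transvection transvection_coe)
open scoped Matrix MatrixGroups Polynomial

namespace elemSL

section Transvection

variable {ι R S : Type*} [Fintype ι] [DecidableEq ι] [CommRing R] [CommRing S]

theorem map_transvection (f : R →+* S) {i j : ι} (h : i ≠ j) (a : R) :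
    map f (transvection h a) = transvection h (f a) := by
  apply Subtype.ext
  simp [transvection_coe, Matrix.map_add, Matrix.map_one]

theorem transvection_conj_of_ne {i j k l : ι} (hij : i ≠ j) (hkl : k ≠ l) (hli : l ≠ i)
    (hjk : j ≠ k) (a c : R) :
    transvection hkl c * transvection hij a * (transvection hkl c)⁻¹ = transvection hij a := by
  rw [mul_inv_eq_iff_eq_mul]
  apply Subtype.ext
  simp [transvection_coe, mul_add, add_mul, hli, hjk, add_left_comm, add_comm]

theorem transvection_conj_left {j k l : ι} (hlj : l ≠ j) (hkl : k ≠ l) (hkj : k ≠ j) (a c : R) :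
    transvection hkl c * transvection hlj a * (transvection hkl c)⁻¹ =
      transvection hkj (c * a) * transvection hlj a := by
  rw [mul_inv_eq_iff_eq_mul]
  apply Subtype.ext
  simp [transvection_coe, mul_add, add_mul, hlj.symm, hkj.symm, add_assoc, add_left_comm, add_comm]

theorem transvection_conj_right {i k l : ι} (hik : i ≠ k) (hkl : k ≠ l) (hil : i ≠ l) (a c : R) :
    transvection hkl c * transvection hik a * (transvection hkl c)⁻¹ =
      transvection hil (-(c * a)) * transvection hik a := by
  rw [← Matrix.SpecialLinearGroup.transvection_inv, mul_inv_eq_iff_eq_mul, mul_assoc,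
    eq_inv_mul_iff_mul_eq]
  apply Subtype.ext
  simp [transvection_coe, mul_add, add_mul, hkl.symm, hil.symm, mul_comm c, add_assoc,
    add_left_comm, add_comm]

open commutatorElement in
theorem transvection_mul_eq_commutator {i j k : ι} (hij : i ≠ j) (hjk : j ≠ k) (hik : i ≠ k)
    (a b : R) : transvection hik (a * b) = ⁅transvection hij a, transvection hjk b⁆ := by
  rw [commutatorElement_def, transvection_conj_left hjk hij hik, mul_inv_cancel_right]

end Transvection

section Elementary

variable {n : ℕ} {R S : Type*} [CommRing R] [CommRing S]

theorem transvection_mem {i j : Fin n} (h : i ≠ j) (a : R) : transvection h a ∈ elemSL n R :=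
  Subgroup.subset_closure ⟨i, j, a, h, rfl⟩

theorem le_iff {H : Subgroup SL(n, R)} :
    elemSL n R ≤ H ↔ ∀ (i j : Fin n) (h : i ≠ j) (a : R), transvection h a ∈ H := by
  refine ⟨fun hH i j h a => hH (transvection_mem h a), fun hH => (Subgroup.closure_le H).2 ?_⟩
  rintro g ⟨i, j, a, h, hg⟩
  rw [show g = transvection h a from Subtype.ext hg]
  exact hH i j h a

theorem map_mem (f : R →+* S) {g : SL(n, R)} (hg : g ∈ elemSL n R) : map f g ∈ elemSL n S := by
  have hle : elemSL n R ≤ (elemSL n S).comap (map f) := le_iff.2 fun i j h a => by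
    rw [Subgroup.mem_comap, map_transvection]
    exact transvection_mem h (f a)
  exact hle hg

end Elementary

section EntriesIn

variable {n : ℕ} {R : Type*} [CommRing R]

/-- The subgroup of `SL_n(R)` generated by the transvections with entry in `A`. -/
def entriesIn (n : ℕ) (A : Set R) : Subgroup SL(n, R) :=
  Subgroup.closure {g | ∃ (i j : Fin n) (h : i ≠ j), ∃ a ∈ A, g = transvection h a}

theorem transvection_mem_entriesIn {A : Set R} {i j : Fin n} (h : i ≠ j) {a : R} (ha : a ∈ A) :
    transvection h a ∈ entriesIn n A :=
  Subgroup.subset_closure ⟨i, j, h, a, ha, rfl⟩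

theorem entriesIn_le_iff {A : Set R} {H : Subgroup SL(n, R)} :
    entriesIn n A ≤ H ↔ ∀ (i j : Fin n) (h : i ≠ j), ∀ a ∈ A, transvection h a ∈ H := by
  refine ⟨fun hH i j h a ha => hH (transvection_mem_entriesIn h ha),
    fun hH => (Subgroup.closure_le H).2 ?_⟩
  rintro g ⟨i, j, h, a, ha, rfl⟩
  exact hH i j h a ha

theorem conj_transvection_mem_entriesIn_of_ne {B : AddSubgroup R} {i j k l : Fin n} (hij : i ≠ j)
    (hkl : k ≠ l) (hne : l ≠ i ∨ j ≠ k) {a c : R} (ha : a ∈ B) (hca : c * a ∈ B) :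
    transvection hkl c * transvection hij a * (transvection hkl c)⁻¹ ∈ entriesIn n (B : Set R) := by
  by_cases hli : l = i
  · subst hli
    rw [transvection_conj_left hij hkl (hne.resolve_left (by simp)).symm]
    exact mul_mem (transvection_mem_entriesIn _ hca) (transvection_mem_entriesIn _ ha)
  by_cases hjk : j = k
  · subst hjk
    rw [transvection_conj_right hij hkl (Ne.symm hli)]
    exact mul_mem (transvection_mem_entriesIn _ (neg_mem hca)) (transvection_mem_entriesIn _ ha)
  · rw [transvection_conj_of_ne hij hkl hli hjk]
    exact transvection_mem_entriesIn _ ha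

/-- An entry `x * y` in the position opposite to the conjugating transvection is written as a
commutator through a third index, so that each factor is conjugated in a harmless position. -/
theorem conj_transvection_mem_entriesIn (hn : 3 ≤ n) {B : AddSubgroup R} {i j k l : Fin n}
    (hij : i ≠ j) (hkl : k ≠ l) {c x y : R} (hx : x ∈ B) (hcx : c * x ∈ B) (hy : y ∈ B)
    (hcy : c * y ∈ B) (hxy : x * y ∈ B) (hcxy : c * (x * y) ∈ B) :
    transvection hkl c * transvection hij (x * y) * (transvection hkl c)⁻¹ ∈
      entriesIn n (B : Set R) := by
  by_cases hne : l ≠ i ∨ j ≠ k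
  · exact conj_transvection_mem_entriesIn_of_ne hij hkl hne hxy hcxy
  obtain ⟨rfl, rfl⟩ : l = i ∧ j = k := by simpa only [not_or, not_not] using hne
  obtain ⟨p, hpl, hpj⟩ := Fin.exists_ne_and_ne_of_two_lt l j hn
  have hconj_x := conj_transvection_mem_entriesIn_of_ne hpl.symm hkl (.inr hpj) hx hcx
  have hconj_y := conj_transvection_mem_entriesIn_of_ne hpj hkl (.inl hpl.symm) hy hcy
  rw [transvection_mul_eq_commutator hpl.symm hpj hij, conjugate_commutatorElement,
    commutatorElement_def]
  exact mul_mem (mul_mem (mul_mem hconj_x hconj_y) (inv_mem hconj_x)) (inv_mem hconj_y)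

end EntriesIn

section LocalizedEntries

variable {n : ℕ} {P : Type*} (Q : Type*) [CommRing P] [CommRing Q] [Algebra P Q]

/-- The image in `Q` of the principal ideal of `P` generated by `t`. -/
def spanImage (t : P) : AddSubgroup Q :=
  (Ideal.span {t}).toAddSubgroup.map (algebraMap P Q : P →+ Q)

variable {Q}

theorem mem_spanImage {t : P} {x : Q} : x ∈ spanImage Q t ↔ ∃ a, algebraMap P Q (t * a) = x := by
  simp only [spanImage, AddSubgroup.mem_map, Submodule.mem_toAddSubgroup,
    Ideal.mem_span_singleton', AddMonoidHom.coe_coe]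
  constructor
  · rintro ⟨_, ⟨a, rfl⟩, rfl⟩
    exact ⟨a, by rw [mul_comm]⟩
  · rintro ⟨a, rfl⟩
    exact ⟨_, ⟨a, mul_comm a t⟩, rfl⟩

theorem entriesIn_spanImage_one_le :
    entriesIn n (spanImage Q (1 : P) : Set Q) ≤ (elemSL n P).map (map (algebraMap P Q)) := by
  refine entriesIn_le_iff.2 fun i j h x hx => ?_
  obtain ⟨a, rfl⟩ := mem_spanImage.1 hx
  exact ⟨transvection h (1 * a), transvection_mem h _, map_transvection _ h _⟩

variable (S : Submonoid P) [IsLocalization S Q]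

theorem exists_conj_transvection_mem_entriesIn (hn : 3 ≤ n) {k l : Fin n} (hkl : k ≠ l) (c : Q)
    {t : P} (ht : t ∈ S) :
    ∃ s ∈ S, ∀ g ∈ entriesIn n (spanImage Q s : Set Q),
      transvection hkl c * g * (transvection hkl c)⁻¹ ∈ entriesIn n (spanImage Q t : Set Q) := by
  obtain ⟨⟨d, u, hu⟩, hd⟩ := IsLocalization.surj S c
  dsimp only at hd
  have htu : t * u ∈ S := mul_mem ht hu
  have hmem (a : P) : algebraMap P Q (t * u * a) ∈ spanImage Q t :=
    mem_spanImage.2 ⟨u * a, by rw [mul_assoc]⟩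
  have hcmem (a : P) : c * algebraMap P Q (t * u * a) ∈ spanImage Q t :=
    mem_spanImage.2 ⟨d * a, by simp only [map_mul, ← hd]; ring⟩
  refine ⟨t * u * (t * u), mul_mem htu htu, fun g hg => ?_⟩
  have hle : entriesIn n (spanImage Q (t * u * (t * u)) : Set Q) ≤
      (entriesIn n (spanImage Q t : Set Q)).comap
        (MulAut.conj (transvection hkl c)).toMonoidHom := by
    refine entriesIn_le_iff.2 fun i j hij x hx => ?_
    obtain ⟨a, rfl⟩ := mem_spanImage.1 hx
    have hsplit : algebraMap P Q (t * u * (t * u) * a) =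
        algebraMap P Q (t * u * 1) * algebraMap P Q (t * u * a) := by
      rw [← map_mul, mul_one, mul_assoc]
    have hprod : t * u * (t * u) * a = t * u * (t * u * a) := mul_assoc _ _ _
    rw [hsplit]
    refine conj_transvection_mem_entriesIn hn hij hkl (hmem 1) (hcmem 1) (hmem a) (hcmem a) ?_ ?_
    · rw [← hsplit, hprod]
      exact hmem _
    · rw [← hsplit, hprod]
      exact hcmem _
  exact hle hg

theorem exists_conj_mem_entriesIn (hn : 3 ≤ n) {g : SL(n, Q)} (hg : g ∈ elemSL n Q) :
    ∀ t ∈ S, ∃ s ∈ S, ∀ x ∈ entriesIn n (spanImage Q s : Set Q),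
      g * x * g⁻¹ ∈ entriesIn n (spanImage Q t : Set Q) := by
  induction hg using Subgroup.closure_induction'' with
  | mem g hg =>
    obtain ⟨i, j, a, h, hg⟩ := hg
    rw [show g = transvection h a from Subtype.ext hg]
    exact fun t ht => exists_conj_transvection_mem_entriesIn S hn h a ht
  | inv_mem g hg =>
    obtain ⟨i, j, a, h, hg⟩ := hg
    rw [show g = transvection h a from Subtype.ext hg, Matrix.SpecialLinearGroup.transvection_inv]
    exact fun t ht => exists_conj_transvection_mem_entriesIn S hn h (-a) ht
  | one => exact fun t ht => ⟨t, ht, fun x hx => by simpa only [one_mul, inv_one, mul_one] using hx⟩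
  | mul g₁ g₂ _ _ ih₁ ih₂ =>
    intro t ht
    obtain ⟨s, hs, h₁⟩ := ih₁ t ht
    obtain ⟨r, hr, h₂⟩ := ih₂ s hs
    refine ⟨r, hr, fun x hx => ?_⟩
    have hconj := h₁ _ (h₂ x hx)
    simpa only [mul_assoc, mul_inv_rev] using hconj

end LocalizedEntries

section Dilation

variable {R : Type*} [CommRing R]

/-- The substitution `X ↦ a X` of `R[X]`. -/
noncomputable def dilate (a : R) : R[X] →+* R[X] :=
  Polynomial.compRingHom (C a * X)

theorem dilate_C (a r : R) : dilate a (C r) = C r := by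
  simp [dilate]

theorem dilate_X (a : R) : dilate a X = C a * X := by
  simp [dilate]

theorem dilate_comp_C (a : R) : (dilate a).comp C = C :=
  RingHom.ext (dilate_C a)

theorem dilate_map {U : Type*} [CommRing U] (f : R →+* U) (a : R) (p : R[X]) :
    dilate (f a) (p.map f) = (dilate a p).map f := by
  simp [dilate, Polynomial.map_comp]

variable {n : ℕ} {U : Type*} [CommRing U] [Algebra R U]

/-- The matrices over `U[X]` which become images of elementary matrices over `R[X]` under
`X ↦ s X` for some `s ∈ S` and every multiple of it. The multiples make this a subgroup. -/
def dilatable (n : ℕ) (U : Type*) [CommRing U] [Algebra R U] (S : Submonoid R) :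
    Subgroup SL(n, U[X]) where
  carrier := {g | ∃ s ∈ S, ∀ t, map (dilate (algebraMap R U (s * t))) g ∈
    (elemSL n R[X]).map (map (Polynomial.mapRingHom (algebraMap R U)))}
  one_mem' := ⟨1, one_mem S, fun t => by simp only [map_one, one_mem]⟩
  mul_mem' := by
    rintro g h ⟨s, hs, hg⟩ ⟨r, hr, hh⟩
    refine ⟨s * r, mul_mem hs hr, fun t => ?_⟩
    rw [map_mul]
    refine mul_mem ?_ ?_
    · simpa only [mul_assoc] using hg (r * t)
    · simpa only [mul_comm s, mul_assoc] using hh (s * t)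
  inv_mem' := by
    rintro g ⟨s, hs, hg⟩
    exact ⟨s, hs, fun t => by simpa only [map_inv] using inv_mem (hg t)⟩

variable (S : Submonoid R) [IsLocalization S U]

attribute [local instance] Polynomial.algebra

theorem conj_transvection_X_mul_mem_dilatable (hn : 3 ≤ n) {g : SL(n, U)} (hg : g ∈ elemSL n U)
    {i j : Fin n} (h : i ≠ j) (p : U[X]) :
    map C g * transvection h (X * p) * (map C g)⁻¹ ∈ dilatable n U S := by
  have hloc : IsLocalization (S.map (C : R →+* R[X])) U[X] := Polynomial.isLocalization S U
  obtain ⟨⟨q, _, u, hu, rfl⟩, hq⟩ := IsLocalization.surj (S.map (C : R →+* R[X])) p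
  obtain ⟨_, ⟨s, hs, rfl⟩, hconj⟩ :=
    exists_conj_mem_entriesIn (S.map (C : R →+* R[X])) hn (map_mem C hg) 1 (one_mem _)
  refine ⟨s * u, mul_mem hs hu, fun t => ?_⟩
  apply entriesIn_spanImage_one_le (Q := U[X])
  rw [map_mul, map_mul, map_inv, map_transvection]
  rw [show map (dilate (algebraMap R U (s * u * t))) (map C g) = map C g from
    congrArg (map · g) (dilate_comp_C _)]
  refine hconj _ (transvection_mem_entriesIn h (mem_spanImage.2 ?_))
  refine ⟨C t * X * dilate (s * u * t) q, ?_⟩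
  have hdil := congrArg (dilate (algebraMap R U (s * u * t))) hq
  simp only [Polynomial.algebraMap_def, Polynomial.coe_mapRingHom, Polynomial.map_C, map_mul,
    dilate_C, dilate_X, Polynomial.map_X,
    ← dilate_map] at hdil ⊢
  rw [← hdil]
  ring

theorem conj_mul_constant_inv_mem_dilatable (hn : 3 ≤ n) {g : SL(n, U[X])}
    (hg : g ∈ elemSL n U[X]) :
    ∀ γ ∈ elemSL n U, map C γ * g * (map C (map (Polynomial.evalRingHom 0) g))⁻¹ * (map C γ)⁻¹ ∈
      dilatable n U S := by
  induction hg using Subgroup.closure_induction with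
  | mem g hg =>
    obtain ⟨i, j, p, h, hg⟩ := hg
    rw [show g = transvection h p from Subtype.ext hg]
    intro γ hγ
    have hp : p + -C (p.eval 0) = X * p.divX := by
      rw [← Polynomial.coeff_zero_eq_eval_zero, mul_comm, ← sub_eq_add_neg, sub_eq_iff_eq_add,
        p.divX_mul_X_add]
    rw [map_transvection, map_transvection, Matrix.SpecialLinearGroup.transvection_inv,
      Polynomial.coe_evalRingHom, mul_assoc (map C γ),
      ← Matrix.SpecialLinearGroup.transvection_add, hp]
    exact conj_transvection_X_mul_mem_dilatable S hn hγ h _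
  | one => exact fun γ _ => by simp only [map_one, inv_one, mul_one, mul_inv_cancel, one_mem]
  | mul g h hg _ ihg ihh =>
    intro γ hγ
    have hmem := mul_mem (ihg γ hγ) (ihh _ (mul_mem hγ (map_mem (Polynomial.evalRingHom 0) hg)))
    convert hmem using 1
    simp only [map_mul]
    group
  | inv g hg ih =>
    intro γ hγ
    have hmem := inv_mem (ih _ (mul_mem hγ (inv_mem (map_mem (Polynomial.evalRingHom 0) hg))))
    convert hmem using 1
    simp only [map_mul, map_inv]
    group

theorem exists_map_dilate_mem (hn : 3 ≤ n) {g : SL(n, U[X])} (hg : g ∈ elemSL n U[X])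
    (hg₀ : map (Polynomial.evalRingHom 0) g = 1) :
    ∃ s ∈ S, map (dilate (algebraMap R U s)) g ∈
      (elemSL n R[X]).map (map (Polynomial.mapRingHom (algebraMap R U))) := by
  have hmem := conj_mul_constant_inv_mem_dilatable S hn hg 1 (one_mem _)
  simp only [hg₀, map_one, inv_one, one_mul, mul_one] at hmem
  obtain ⟨s, hs, h⟩ := hmem
  exact ⟨s, hs, by simpa only [mul_one] using h 1⟩

end Dilation

section RowEquiv

variable {n : ℕ} {ι R S : Type*} [CommRing R] [CommRing S]

/-- Equivalence of matrices with `n` rows under the row operations in `E_n(R)`. -/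
def RowEquiv (A B : Matrix (Fin n) ι R) : Prop :=
  ∃ g ∈ elemSL n R, A = g.1 * B

namespace RowEquiv

variable {A B D : Matrix (Fin n) ι R}

theorem refl (A : Matrix (Fin n) ι R) : RowEquiv A A :=
  ⟨1, one_mem _, by rw [Matrix.SpecialLinearGroup.coe_one, Matrix.one_mul]⟩

theorem symm (h : RowEquiv A B) : RowEquiv B A := by
  obtain ⟨g, hg, rfl⟩ := h
  refine ⟨g⁻¹, inv_mem hg, ?_⟩
  rw [← Matrix.mul_assoc, ← Matrix.SpecialLinearGroup.coe_mul, inv_mul_cancel,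
    Matrix.SpecialLinearGroup.coe_one, Matrix.one_mul]

theorem trans (h₁ : RowEquiv A B) (h₂ : RowEquiv B D) : RowEquiv A D := by
  obtain ⟨g, hg, rfl⟩ := h₁
  obtain ⟨h, hh, rfl⟩ := h₂
  exact ⟨g * h, mul_mem hg hh, by rw [Matrix.SpecialLinearGroup.coe_mul, Matrix.mul_assoc]⟩

theorem map (h : RowEquiv A B) (f : R →+* S) : RowEquiv (A.map f) (B.map f) := by
  obtain ⟨g, hg, rfl⟩ := h
  exact ⟨_, map_mem f hg, by rw [Matrix.map_mul]; rfl⟩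

theorem of_add_smul_row {i j : Fin n} (h : i ≠ j) (a : R)
    (hi : ∀ l, A i l = B i l + a * B j l) (hk : ∀ k, k ≠ i → ∀ l, A k l = B k l) :
    RowEquiv A B := by
  refine ⟨_, transvection_mem h a, ?_⟩
  change A = Matrix.transvection i j a * B
  ext k l
  obtain rfl | hki := eq_or_ne k i
  · rw [Matrix.transvection_mul_apply_same, hi]
  · rw [Matrix.transvection_mul_apply_of_ne _ _ _ _ hki, hk k hki]

theorem of_add_smul_row_all (B : Matrix (Fin n) ι R) (i : Fin n) (c : Fin n → R) (hc : c i = 0) :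
    RowEquiv (Matrix.of fun k l => B k l + c k * B i l) B := by
  have hpartial (s : Finset (Fin n)) (hi : i ∉ s) :
      RowEquiv (Matrix.of fun k l => B k l + (if k ∈ s then c k else 0) * B i l) B := by
    induction s using Finset.induction_on with
    | empty =>
      convert refl B using 1
      ext k l
      simp
    | insert a s ha ih =>
      obtain ⟨hia, his⟩ : i ≠ a ∧ i ∉ s := by simpa only [Finset.mem_insert, not_or] using hi
      refine (of_add_smul_row hia.symm (c a) (fun l => ?_) fun k hk l => ?_).trans (ih his)
      · simp [ha, his]
      · simp [hk]
  convert hpartial (Finset.univ.erase i) (by simp) using 6 with k l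
  obtain rfl | hki := eq_or_ne k i
  · simp [hc]
  · simp [hki]

theorem of_updateRow_add {p : Fin n} {x : ι → R} (hx : x ∈ Submodule.span R (B '' {p}ᶜ)) :
    RowEquiv (B.updateRow p (B p + x)) B := by
  suffices ∀ (r : R) y, RowEquiv (B.updateRow p (y + r • x)) (B.updateRow p y) by
    simpa only [one_smul, Matrix.updateRow_eq_self] using this 1 (B p)
  induction hx using Submodule.span_induction with
  | mem x hx =>
    obtain ⟨j, hj, rfl⟩ := hx
    have hjp : j ≠ p := hj
    refine fun r y => .of_add_smul_row hjp.symm r (fun l => ?_) fun k hk l => ?_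
    · simp [hjp]
    · simp [hk]
  | zero =>
    intro r y
    rw [smul_zero, add_zero]
    exact .refl _
  | add x₁ x₂ _ _ h₁ h₂ =>
    intro r y
    rw [smul_add, ← add_assoc]
    exact (h₂ r _).trans (h₁ r y)
  | smul a x _ h =>
    intro r y
    rw [← mul_smul]
    exact h (r * a) y

end RowEquiv

end RowEquiv

section Patching

variable {n : ℕ} {ι R : Type*} [CommRing R]

/-- The elements `c` such that substituting polynomials congruent modulo `c` into `A` gives row
equivalent matrices. This is the ideal of Quillen's patching argument. -/
def patchingIdeal (A : Matrix (Fin n) ι R[X]) : Ideal R where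
  carrier := {c | ∀ x y : R[X],
    RowEquiv (A.map fun p => p.comp (x + C c * y)) (A.map fun p => p.comp x)}
  zero_mem' x y := by
    simp only [map_zero, zero_mul, add_zero]
    exact .refl _
  add_mem' {c d} hc hd x y := by
    have hsum := (hd (x + C c * y) y).trans (hc x y)
    rwa [add_assoc, ← add_mul, ← map_add] at hsum
  smul_mem' r c hc x y := by
    have hmul := hc x (C r * y)
    rwa [← mul_assoc, ← map_mul, mul_comm c r] at hmul

/-- The substitution `X ↦ X + c Y` from `R[X]` to `R[X][Y]`. -/
noncomputable def translate (c : R) : R[X] →+* R[X][X] :=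
  Polynomial.eval₂RingHom (C.comp C) (C X + C (C c) * X)

theorem translate_C (c r : R) : translate c (C r) = C (C r) := by
  simp [translate]

theorem translate_X (c : R) : translate c X = C X + C (C c) * X := by
  simp [translate]

theorem eval_zero_translate (c : R) (p : R[X]) : (translate c p).eval 0 = p := by
  have hcomp : (Polynomial.evalRingHom (0 : R[X])).comp (translate c) = RingHom.id _ :=
    Polynomial.ringHom_ext (by simp [translate_C]) (by simp [translate_X])
  exact congrArg (fun f => f p) hcomp

theorem dilate_translate_one (c : R) (p : R[X]) :
    dilate (C c) (translate 1 p) = translate c p := by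
  have hcomp : (dilate (C c)).comp (translate 1) = translate c :=
    Polynomial.ringHom_ext (by simp [translate_C, dilate_C])
      (by simp [translate_X, dilate_C, dilate_X])
  exact congrArg (fun f => f p) hcomp

theorem map_map_translate {L : Type*} [CommRing L] (φ : R →+* L) (c : R) (p : R[X]) :
    (translate c p).map (Polynomial.mapRingHom φ) = translate (φ c) (p.map φ) := by
  have hcomp : (Polynomial.mapRingHom (Polynomial.mapRingHom φ)).comp (translate c) =
      (translate (φ c)).comp (Polynomial.mapRingHom φ) :=
    Polynomial.ringHom_ext (by simp [translate_C]) (by simp [translate_X])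
  exact congrArg (fun f => f p) hcomp

theorem eval₂_compRingHom_translate (c : R) (x y p : R[X]) :
    (translate c p).eval₂ (Polynomial.compRingHom x) y = p.comp (x + C c * y) := by
  have hcomp : (Polynomial.eval₂RingHom (Polynomial.compRingHom x) y).comp (translate c) =
      Polynomial.compRingHom (x + C c * y) :=
    Polynomial.ringHom_ext (by simp [translate_C]) (by simp [translate_X])
  exact congrArg (fun f => f p) hcomp

theorem map_translate_eq_mul {g : SL(n, R[X])} {A : Matrix (Fin n) ι R[X]}
    {A₀ : Matrix (Fin n) ι R} (hA : A = g.1 * A₀.map C) (c : R) :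
    A.map (translate c) = (map (translate c) g * (map C g)⁻¹).1 * A.map C := by
  have htranslate : A.map (translate c) = (map (translate c) g).1 *
      A₀.map (C.comp C : R →+* R[X][X]) := by
    rw [hA, Matrix.map_mul, Matrix.map_map, show translate c ∘ C = C.comp C from
      funext (translate_C c)]
    rfl
  have hconst : A.map C = (map C g).1 * A₀.map (C.comp C : R →+* R[X][X]) := by
    rw [hA, Matrix.map_mul, Matrix.map_map]
    rfl
  rw [htranslate, hconst, ← Matrix.mul_assoc, ← Matrix.SpecialLinearGroup.coe_mul,
    inv_mul_cancel_right]

variable {L : Type*} [CommRing L] [Algebra R L] (S : Submonoid R) [IsLocalization S L]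

attribute [local instance] Polynomial.algebra

theorem exists_map_eq_translate_mul_inv (hn : 3 ≤ n) {g : SL(n, L[X])} (hg : g ∈ elemSL n L[X]) :
    ∃ s ∈ S, ∃ e ∈ elemSL n R[X][X],
      map (Polynomial.mapRingHom (Polynomial.mapRingHom (algebraMap R L))) e =
        map (translate (algebraMap R L s)) g * (map C g)⁻¹ := by
  have hloc : IsLocalization (S.map (C : R →+* R[X])) L[X] := Polynomial.isLocalization S L
  have htranslate : (Polynomial.evalRingHom (0 : L[X])).comp (translate 1) = RingHom.id _ :=
    RingHom.ext (eval_zero_translate 1)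
  have hconst : (Polynomial.evalRingHom (0 : L[X])).comp C = RingHom.id _ :=
    RingHom.ext fun p => Polynomial.eval_C
  obtain ⟨_, ⟨s, hs, rfl⟩, e, he, hmap⟩ := exists_map_dilate_mem (S.map (C : R →+* R[X])) hn
    (mul_mem (map_mem (translate 1) hg) (inv_mem (map_mem C hg))) (by
      rw [map_mul, map_inv]
      change map ((Polynomial.evalRingHom (0 : L[X])).comp (translate 1)) g *
        (map ((Polynomial.evalRingHom (0 : L[X])).comp C) g)⁻¹ = 1
      rw [htranslate, hconst, mul_inv_cancel])
  refine ⟨s, hs, e, he, hmap.trans ?_⟩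
  have hdilate : (dilate (C (algebraMap R L s))).comp (translate 1) =
      translate (algebraMap R L s) := RingHom.ext (dilate_translate_one _)
  rw [Polynomial.algebraMap_def, Polynomial.coe_mapRingHom, Polynomial.map_C, map_mul, map_inv]
  change map ((dilate (C (algebraMap R L s))).comp (translate 1)) g *
    (map ((dilate (C (algebraMap R L s))).comp C) g)⁻¹ = _
  rw [hdilate, dilate_comp_C]

theorem exists_mem_patchingIdeal (hn : 3 ≤ n) (hS : S ≤ nonZeroDivisors R)
    (A : Matrix (Fin n) ι R[X]) (A₀ : Matrix (Fin n) ι L)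
    (hA : RowEquiv (A.map (Polynomial.mapRingHom (algebraMap R L))) (A₀.map C)) :
    ∃ s ∈ S, s ∈ patchingIdeal A := by
  obtain ⟨g, hg, hA⟩ := hA
  obtain ⟨s, hs, e, he, hmap⟩ := exists_map_eq_translate_mul_inv S hn hg
  refine ⟨s, hs, fun x y => ?_⟩
  suffices hrow : RowEquiv (A.map (translate s)) (A.map C) by
    have hsub := hrow.map (Polynomial.eval₂RingHom (Polynomial.compRingHom x) y)
    simpa only [Matrix.map_map, Function.comp_def, Polynomial.coe_eval₂RingHom,
      eval₂_compRingHom_translate, Polynomial.eval₂_C, Polynomial.coe_compRingHom_apply] using hsub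
  refine ⟨e, he, ?_⟩
  set φ := algebraMap R L
  have hφ : Function.Injective φ := IsLocalization.injective L hS
  let Φ := Polynomial.mapRingHom (Polynomial.mapRingHom φ)
  have hΦ : Function.Injective Φ :=
    Polynomial.map_injective (Polynomial.mapRingHom φ) (Polynomial.map_injective φ hφ)
  have htranslate : (A.map (translate s)).map Φ =
      (A.map (Polynomial.mapRingHom φ)).map (translate (φ s)) := by
    simp only [Matrix.map_map, Function.comp_def, Φ, map_map_translate, Polynomial.coe_mapRingHom]
  have hconst : (A.map C).map Φ = (A.map (Polynomial.mapRingHom φ)).map C := by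
    simp only [Matrix.map_map, Function.comp_def, Φ, Polynomial.map_C, Polynomial.coe_mapRingHom]
  apply Matrix.map_injective hΦ
  calc (A.map (translate s)).map Φ
      = (map (translate (φ s)) g * (map C g)⁻¹).1 * (A.map C).map Φ := by
        rw [htranslate, hconst, map_translate_eq_mul hA]
    _ = (e.1 * A.map C).map Φ := by
        rw [← hmap, Matrix.map_mul]
        rfl

theorem rowEquiv_constant_of_localization [IsDomain R] (hn : 3 ≤ n) (A : Matrix (Fin n) ι R[X])
    (hA : ∀ (m : Ideal R) [m.IsMaximal], ∃ A₀ : Matrix (Fin n) ι (Localization.AtPrime m),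
      RowEquiv (A.map (Polynomial.mapRingHom (algebraMap R (Localization.AtPrime m))))
        (A₀.map C)) :
    RowEquiv A (A.map fun p => C (p.eval 0)) := by
  have htop : patchingIdeal A = ⊤ := by
    by_contra hne
    obtain ⟨m, hm, hle⟩ := Ideal.exists_le_maximal _ hne
    obtain ⟨A₀, hA₀⟩ := hA m
    obtain ⟨s, hs, hmem⟩ :=
      exists_mem_patchingIdeal m.primeCompl hn m.primeCompl_le_nonZeroDivisors A A₀ hA₀
    exact hs (hle hmem)
  have hone : (1 : R) ∈ patchingIdeal A := htop ▸ Submodule.mem_top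
  simpa using hone 0 X

end Patching

section Columns

open Matrix (replicateCol)

variable {n : ℕ} {R S : Type*} [CommRing R] [CommRing S] {v w : Fin n → R}

/-- A column is unimodular if its entries generate the unit ideal. -/
def Unimodular (v : Fin n → R) : Prop :=
  ∃ w, w ⬝ᵥ v = 1

theorem Unimodular.map (hv : Unimodular v) (f : R →+* S) : Unimodular (f ∘ v) := by
  obtain ⟨w, hw⟩ := hv
  exact ⟨f ∘ w, by rw [← f.map_dotProduct, hw, map_one]⟩

theorem Unimodular.of_rowEquiv (hw : Unimodular w)
    (h : RowEquiv (replicateCol Unit v) (replicateCol Unit w)) : Unimodular v := by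
  obtain ⟨g, -, hg⟩ := h.symm
  rw [← Matrix.replicateCol_mulVec, Matrix.replicateCol_inj] at hg
  obtain ⟨x, hx⟩ := hw
  exact ⟨x ᵥ* g.1, by rw [← Matrix.dotProduct_mulVec, ← hg, hx]⟩

theorem Unimodular.exists_ne_zero [Nontrivial R] (hv : Unimodular v) : ∃ i, v i ≠ 0 := by
  obtain ⟨w, hw⟩ := hv
  obtain ⟨i, -, hi⟩ := Finset.exists_ne_zero_of_sum_ne_zero (ne_of_eq_of_ne hw one_ne_zero)
  exact ⟨i, right_ne_zero_of_mul hi⟩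

theorem unimodular_col (g : SL(n, R)) (j : Fin n) : Unimodular fun i => g i j := by
  refine ⟨g⁻¹ j, ?_⟩
  have hinv : (g⁻¹ * g) j j = 1 := by simp
  rwa [Matrix.SpecialLinearGroup.coe_mul, Matrix.mul_apply] at hinv

theorem rowEquiv_update_add {p : Fin n} {x : R} (hx : x ∈ Ideal.span (v '' {p}ᶜ)) :
    RowEquiv (replicateCol Unit (Function.update v p (v p + x))) (replicateCol Unit v) := by
  have hmem : Function.const Unit x ∈ Submodule.span R (replicateCol Unit v '' {p}ᶜ) := by
    have h := Submodule.mem_map_of_mem (f := LinearMap.pi fun _ : Unit => LinearMap.id) hx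
    rwa [Ideal.span, Submodule.map_span, Set.image_image] at h
  convert RowEquiv.of_updateRow_add hmem using 1
  ext k l
  obtain rfl | hk := eq_or_ne k p
  · simp
  · simp [hk]

theorem rowEquiv_single_of_isUnit {i j : Fin n} (hij : i ≠ j) (hi : IsUnit (v i)) :
    RowEquiv (replicateCol Unit v) (replicateCol Unit (Pi.single j 1)) := by
  have htop : Ideal.span (v '' {j}ᶜ) = ⊤ :=
    Ideal.eq_top_of_isUnit_mem _ (Ideal.subset_span (Set.mem_image_of_mem v hij)) hi
  have hone : RowEquiv (replicateCol Unit (Function.update v j 1)) (replicateCol Unit v) := by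
    have h := rowEquiv_update_add (v := v) (p := j) (x := 1 - v j) (htop ▸ Submodule.mem_top)
    rwa [add_sub_cancel] at h
  refine hone.symm.trans ?_
  convert RowEquiv.of_add_smul_row_all (replicateCol Unit (Pi.single j 1)) j
    (Function.update v j 0) (by simp) using 1
  ext k l
  obtain rfl | hk := eq_or_ne k j
  · simp
  · simp [hk]

end Columns

section Horrocks

open Matrix (replicateCol)

variable {n : ℕ} {R : Type*} [CommRing R]

theorem exists_add_mul_degree_lt [Nontrivial R] {g : R[X]} (hg : IsUnit g.leadingCoeff)
    (f : R[X]) : ∃ q, (f + q * g).degree < g.degree := by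
  have hlt := Polynomial.degree_modByMonic_lt f
    (Polynomial.monic_of_isUnit_leadingCoeff_inv_smul hg)
  rw [Polynomial.degree_smul_of_smul_regular _ (isSMulRegular_of_group _),
    Polynomial.modByMonic_eq_sub_mul_div, sub_eq_add_neg, smul_mul_assoc, ← mul_smul_comm,
    ← mul_neg, mul_comm] at hlt
  exact ⟨_, hlt⟩

theorem natDegree_X_mul_sub_le {g f : R[X]} {d : ℕ} (hg : Polynomial.IsMonicOfDegree g (d + 1))
    (hf : f.natDegree ≤ d) : (X * f - C (f.coeff d) * g).natDegree ≤ d := by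
  refine Polynomial.natDegree_le_iff_coeff_eq_zero.2 fun N hN => ?_
  obtain ⟨N, rfl⟩ := Nat.exists_eq_succ_of_ne_zero (Nat.ne_zero_of_lt hN)
  rw [Polynomial.coeff_sub, Polynomial.coeff_X_mul, Polynomial.coeff_C_mul]
  obtain rfl | hlt := (Nat.lt_succ_iff.1 hN).eq_or_lt
  · have hlead : g.coeff (d + 1) = 1 := hg.natDegree_eq ▸ hg.monic
    rw [hlead, mul_one, sub_self]
  · rw [Polynomial.coeff_eq_zero_of_natDegree_lt (hf.trans_lt hlt),
      Polynomial.coeff_eq_zero_of_natDegree_lt (hg.natDegree_eq.trans_lt (Nat.succ_lt_succ hlt)),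
      mul_zero, sub_zero]

theorem exists_mem_span_pair_coeff_eq {g f : R[X]} {d : ℕ}
    (hg : Polynomial.IsMonicOfDegree g (d + 1)) (hf : f.natDegree ≤ d) {j : ℕ} (hj : j ≤ d) :
    ∃ h ∈ Ideal.span {g, f}, h.natDegree ≤ d ∧ h.coeff d = f.coeff (d - j) := by
  induction j generalizing f with
  | zero => exact ⟨f, Ideal.subset_span (by simp), hf, rfl⟩
  | succ j ih =>
    obtain ⟨h, hmem, hdeg, hcoeff⟩ := ih (natDegree_X_mul_sub_le hg hf) (by lia)
    have hle : Ideal.span {g, X * f - C (f.coeff d) * g} ≤ Ideal.span {g, f} := by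
      refine Ideal.span_le.2 (Set.pair_subset (Ideal.subset_span (by simp)) ?_)
      exact Ideal.mem_span_pair.2 ⟨-C (f.coeff d), X, by ring⟩
    refine ⟨h + C (g.coeff (d - j)) * f,
      add_mem (hle hmem) (Ideal.mul_mem_left _ _ (Ideal.subset_span (by simp))),
      Polynomial.natDegree_add_le_of_degree_le hdeg
        ((Polynomial.natDegree_C_mul_le _ _).trans hf), ?_⟩
    have hsucc : d - j = d - (j + 1) + 1 := by lia
    rw [Polynomial.coeff_add, hcoeff, Polynomial.coeff_sub, Polynomial.coeff_C_mul,
      Polynomial.coeff_C_mul, hsucc, Polynomial.coeff_X_mul]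
    ring

theorem exists_isMonicOfDegree_mem_span_pair [Nontrivial R] {g f : R[X]} {d k : ℕ}
    (hg : Polynomial.IsMonicOfDegree g (d + 1)) (hf : f.natDegree ≤ d)
    (hk : IsUnit (f.coeff k)) : ∃ h ∈ Ideal.span {g, f}, Polynomial.IsMonicOfDegree h d := by
  have hkd : k ≤ d := (Polynomial.le_natDegree_of_ne_zero hk.ne_zero).trans hf
  obtain ⟨h, hmem, hdeg, hcoeff⟩ := exists_mem_span_pair_coeff_eq hg hf (Nat.sub_le d k)
  rw [Nat.sub_sub_self hkd] at hcoeff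
  refine ⟨C (hk.unit⁻¹ : Rˣ).1 * h, Ideal.mul_mem_left _ _ hmem, ?_⟩
  rw [Polynomial.isMonicOfDegree_iff, Polynomial.coeff_C_mul, hcoeff]
  exact ⟨(Polynomial.natDegree_C_mul_le _ _).trans hdeg, hk.val_inv_mul⟩

theorem exists_rowEquiv_degree_lt [Nontrivial R] (v : Fin n → R[X]) {i : Fin n}
    (hi : IsUnit (v i).leadingCoeff) : ∃ w, RowEquiv (replicateCol Unit w) (replicateCol Unit v) ∧
      w i = v i ∧ ∀ k ≠ i, (w k).degree < (v i).degree := by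
  choose q hq using fun k => exists_add_mul_degree_lt hi (v k)
  refine ⟨fun k => v k + Function.update q i 0 k * v i,
    .of_add_smul_row_all _ i _ (Function.update_self ..), by simp, fun k hk => ?_⟩
  simpa only [Function.update_of_ne hk] using hq k

section Local

variable [IsLocalRing R] {v : Fin n → R[X]} {i : Fin n}

theorem exists_isUnit_coeff_of_unimodular (hv : Unimodular v) (hi : IsUnit (v i).leadingCoeff)
    (hdeg : (v i).natDegree ≠ 0) : ∃ j ≠ i, ∃ k, IsUnit ((v j).coeff k) := by
  by_contra! hcoeff
  obtain ⟨w, hw⟩ := hv.map (Polynomial.mapRingHom (IsLocalRing.residue R))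
  have hzero (j : Fin n) (hj : j ≠ i) :
      (v j).map (IsLocalRing.residue R) = 0 := by
    ext k
    rw [Polynomial.coeff_map, Polynomial.coeff_zero, IsLocalRing.residue_eq_zero_iff]
    exact hcoeff j hj k
  have hunit : IsUnit ((v i).map (IsLocalRing.residue R)) := by
    rw [dotProduct, Finset.sum_eq_single_of_mem i (Finset.mem_univ i) fun j _ hj => ?_] at hw
    · exact .of_mul_eq_one_right _ hw
    · exact mul_eq_zero_of_right _ (hzero j hj)
  refine hdeg ?_
  rw [← Polynomial.natDegree_map_eq_of_isUnit_leadingCoeff (IsLocalRing.residue R) hi]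
  exact Polynomial.natDegree_eq_zero_of_isUnit hunit

theorem exists_rowEquiv_monic_natDegree_lt (hn : 3 ≤ n) (hv : Unimodular v)
    (hi : IsUnit (v i).leadingCoeff) (hdeg : (v i).natDegree ≠ 0)
    (hlt : ∀ k ≠ i, (v k).degree < (v i).degree) :
    ∃ w p, RowEquiv (replicateCol Unit w) (replicateCol Unit v) ∧
      (w p).Monic ∧ (w p).natDegree < (v i).natDegree := by
  obtain ⟨d, hd⟩ := Nat.exists_eq_succ_of_ne_zero hdeg
  have hle (k : Fin n) (hk : k ≠ i) : (v k).natDegree ≤ d :=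
    Polynomial.natDegree_le_iff_coeff_eq_zero.2 fun N hN => Polynomial.coeff_eq_zero_of_degree_lt
      ((hlt k hk).trans_le (Polynomial.degree_le_of_natDegree_le (hd.trans_le hN)))
  obtain ⟨j, hj, k, hk⟩ := exists_isUnit_coeff_of_unimodular hv hi hdeg
  have hmonic : Polynomial.IsMonicOfDegree (hi.unit⁻¹ • v i) (d + 1) :=
    ⟨by rw [Polynomial.natDegree_smul_of_smul_regular _ (isSMulRegular_of_group _), hd],
      Polynomial.monic_of_isUnit_leadingCoeff_inv_smul hi⟩
  obtain ⟨h, hmem, hh⟩ := exists_isMonicOfDegree_mem_span_pair hmonic (hle j hj) hk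
  obtain ⟨p, hpi, hpj⟩ := Fin.exists_ne_and_ne_of_two_lt i j hn
  have hspan : h ∈ Ideal.span (v '' {p}ᶜ) := by
    refine Ideal.span_le.2 (Set.pair_subset ?_ ?_) hmem
    · exact Submodule.smul_of_tower_mem _ _
        (Ideal.subset_span (Set.mem_image_of_mem v hpi.symm))
    · exact Ideal.subset_span (Set.mem_image_of_mem v hpj.symm)
  refine ⟨_, p, rowEquiv_update_add (Ideal.mul_mem_left _ (C (1 - (v p).coeff d)) hspan), ?_⟩
  have hp : Polynomial.IsMonicOfDegree (v p + C (1 - (v p).coeff d) * h) d := by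
    rw [Polynomial.isMonicOfDegree_iff] at hh ⊢
    refine ⟨Polynomial.natDegree_add_le_of_degree_le (hle p hpi)
      ((Polynomial.natDegree_C_mul_le _ _).trans hh.1), ?_⟩
    rw [Polynomial.coeff_add, Polynomial.coeff_C_mul, hh.2]
    ring
  rw [Function.update_self]
  exact ⟨hp.monic, by rw [hp.natDegree_eq, hd]; exact d.lt_succ_self⟩

theorem exists_rowEquiv_constant_column (hn : 3 ≤ n) (hv : Unimodular v)
    (hi : IsUnit (v i).leadingCoeff) :
    ∃ w : Fin n → R, RowEquiv (replicateCol Unit v) (replicateCol Unit (C ∘ w)) := by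
  induction hd : (v i).natDegree using Nat.strong_induction_on generalizing v i with
  | _ d ih =>
    subst hd
    obtain ⟨v', hv', hvi, hlt⟩ := exists_rowEquiv_degree_lt v hi
    by_cases hdeg : (v i).natDegree = 0
    · have hconst (k : Fin n) : v' k = C ((v' k).coeff 0) := by
        refine Polynomial.eq_C_of_degree_le_zero
          (le_trans ?_ (Polynomial.natDegree_eq_zero_iff_degree_le_zero.1 hdeg))
        obtain rfl | hk := eq_or_ne k i
        · rw [hvi]
        · exact (hlt k hk).le
      exact ⟨_, funext hconst ▸ hv'.symm⟩
    · rw [← hvi] at hi hdeg hlt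
      obtain ⟨v'', p, hv'', hp, hlt'⟩ := exists_rowEquiv_monic_natDegree_lt hn
        (hv.of_rowEquiv hv') hi hdeg hlt
      obtain ⟨w, hw⟩ := ih _ (hvi ▸ hlt') ((hv.of_rowEquiv hv').of_rowEquiv hv'')
        (hp.leadingCoeff ▸ isUnit_one) rfl
      exact ⟨w, hv'.symm.trans (hv''.symm.trans hw)⟩

end Local

theorem rowEquiv_constant_of_isUnit_leadingCoeff [IsDomain R] (hn : 3 ≤ n) {v : Fin n → R[X]}
    (hv : Unimodular v) {i : Fin n} (hi : IsUnit (v i).leadingCoeff) :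
    RowEquiv (replicateCol Unit v) (replicateCol Unit fun k => C ((v k).eval 0)) := by
  refine rowEquiv_constant_of_localization hn _ fun m _ => ?_
  set φ := algebraMap R (Localization.AtPrime m)
  have hlead : IsUnit ((v i).map φ).leadingCoeff := by
    rw [Polynomial.leadingCoeff_map_eq_of_isUnit_leadingCoeff φ hi]
    exact hi.map φ
  obtain ⟨w, hw⟩ := exists_rowEquiv_constant_column hn (hv.map (Polynomial.mapRingHom φ)) hlead
  exact ⟨replicateCol Unit w, hw⟩

end Horrocks

section ChangeOfVariables

theorem degree_eval₂_lt {A T : Type*} [CommRing A] [CommRing T] (φ : A →+* T[X]) {q : T[X]}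
    {f : A[X]} {N D : ℕ} (hq : q.degree ≤ N) (hf : f.degree < D)
    (hφ : ∀ j, (φ (f.coeff j)).degree < N) : (f.eval₂ φ q).degree < (N * D : ℕ) := by
  rw [Polynomial.eval₂_eq_sum, ← Polynomial.mem_degreeLT]
  refine Submodule.sum_mem _ fun j hj => Polynomial.mem_degreeLT.2 ?_
  have hjD : j < D :=
    WithBot.coe_lt_coe.1 ((Polynomial.le_degree_of_mem_supp j hj).trans_lt hf)
  calc (φ (f.coeff j) * q ^ j).degree
      ≤ (φ (f.coeff j)).degree + (q ^ j).degree := Polynomial.degree_mul_le _ _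
    _ ≤ (φ (f.coeff j)).degree + j • (N : WithBot ℕ) := by
      gcongr
      exact (Polynomial.degree_pow_le _ _).trans (nsmul_le_nsmul_right hq j)
    _ < N + j • (N : WithBot ℕ) :=
      WithBot.add_lt_add_right (by exact_mod_cast WithBot.coe_ne_bot) (hφ j)
    _ ≤ (N * D : ℕ) := by
      rw [nsmul_eq_mul]
      exact_mod_cast (show N + j * N ≤ N * D by nlinarith)

theorem isUnit_leadingCoeff_eval₂ {B : Type*} [CommRing B] [Nontrivial B] {f : B[X][X]}
    (hf : IsUnit f.leadingCoeff.leadingCoeff) {N : ℕ} (hN : ∀ j, (f.coeff j).degree < N) :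
    IsUnit (f.eval₂ (Polynomial.mapRingHom C) (X ^ N + C X)).leadingCoeff := by
  set φ : B[X] →+* B[X][X] := Polynomial.mapRingHom C
  set q : B[X][X] := X ^ N + C X
  have hφ (a : B[X]) : (φ a).degree = a.degree :=
    Polynomial.degree_map_eq_of_injective Polynomial.C_injective a
  have hf₀ : f.leadingCoeff ≠ 0 := Polynomial.leadingCoeff_ne_zero.1 hf.ne_zero
  have hN₀ : N ≠ 0 := by
    rintro rfl
    exact hf₀ (Polynomial.degree_eq_bot.1 (Nat.WithBot.lt_zero_iff.1 (hN f.natDegree)))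
  have hq : Polynomial.IsMonicOfDegree q N :=
    ⟨Polynomial.natDegree_X_pow_add_C, Polynomial.monic_X_pow_add_C _ hN₀⟩
  have hqD := hq.pow f.natDegree
  have hlead : (φ f.leadingCoeff * q ^ f.natDegree).leadingCoeff =
      C f.leadingCoeff.leadingCoeff := by
    rw [Polynomial.leadingCoeff_mul_monic hqD.monic]
    exact Polynomial.leadingCoeff_map_of_injective Polynomial.C_injective _
  rw [← f.eraseLead_add_C_mul_X_pow, Polynomial.eval₂_add, Polynomial.eval₂_mul,
    Polynomial.eval₂_C, Polynomial.eval₂_X_pow, Polynomial.leadingCoeff_add_of_degree_lt, hlead]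
  · exact hf.map C
  · rw [hqD.monic.degree_mul, hφ, Polynomial.degree_eq_natDegree hqD.ne_zero, hqD.natDegree_eq]
    refine (degree_eval₂_lt φ
      (Polynomial.degree_le_of_natDegree_le hq.natDegree_eq.le) ?_ fun j => ?_).trans_le
        (le_add_of_nonneg_left ?_)
    · have hf' := Polynomial.leadingCoeff_ne_zero.1 hf₀
      exact (Polynomial.degree_eraseLead_lt hf').trans_eq (Polynomial.degree_eq_natDegree hf')
    · rw [hφ, Polynomial.eraseLead_coeff]
      split_ifs
      · exact WithBot.bot_lt_coe N
      · exact hN j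
    · exact Polynomial.zero_le_degree_iff.2 hf₀

/-- For large `N`, the automorphism given by `Y ↦ Y + X ^ N` followed by exchanging `X` and `Y`
does this. -/
theorem exists_ringEquiv_isUnit_leadingCoeff_bivariate {B : Type*} [CommRing B] (f : B[X][X])
    (hf : IsUnit f.leadingCoeff.leadingCoeff) :
    ∃ σ : B[X][X] ≃+* B[X][X], IsUnit (σ f).leadingCoeff := by
  nontriviality B
  obtain ⟨N, hN⟩ : ∃ N : ℕ, ∀ j, (f.coeff j).degree < N := by
    refine ⟨f.support.sup (fun j => (f.coeff j).natDegree) + 1, fun j => ?_⟩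
    by_cases hj : j ∈ f.support
    · refine Polynomial.degree_le_natDegree.trans_lt ?_
      exact_mod_cast Nat.lt_succ_of_le (Finset.le_sup (f := fun j => (f.coeff j).natDegree) hj)
    · rw [Polynomial.notMem_support_iff.1 hj, Polynomial.degree_zero]
      exact WithBot.bot_lt_coe _
  let σ : B[X][X] ≃+* B[X][X] := (Polynomial.algEquivAevalXAddC (X ^ N : B[X])).toRingEquiv.trans
    (Polynomial.Bivariate.swap (R := B)).toRingEquiv
  have hσ : (σ : B[X][X] →+* B[X][X]) =
      Polynomial.eval₂RingHom (Polynomial.mapRingHom C) (X ^ N + C X) := by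
    refine Polynomial.ringHom_ext (fun a => ?_) ?_
    · simp [σ, Polynomial.Bivariate.swap_C]
    · simp [σ, Polynomial.Bivariate.swap_C, Polynomial.Bivariate.swap_Y, add_comm]
  refine ⟨σ, ?_⟩
  rw [show σ f = _ from congrArg (fun φ => φ f) hσ]
  exact isUnit_leadingCoeff_eval₂ hf hN

theorem isUnit_of_ne_zero_of_isEmpty {K ι : Type*} [Field K] [IsEmpty ι] {f : MvPolynomial ι K}
    (hf : f ≠ 0) : IsUnit f := by
  rw [← MulEquiv.isUnit_map (MvPolynomial.isEmptyRingEquiv K ι), isUnit_iff_ne_zero]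
  exact (map_ne_zero_iff _ (MvPolynomial.isEmptyRingEquiv K ι).injective).2 hf

theorem exists_ringEquiv_isUnit_leadingCoeff {K : Type*} [Field K] {m : ℕ}
    {f : MvPolynomial (Fin (m + 1)) K} (hf : f ≠ 0) :
    ∃ σ : MvPolynomial (Fin (m + 1)) K ≃+* (MvPolynomial (Fin m) K)[X],
      IsUnit (σ f).leadingCoeff := by
  induction m with
  | zero =>
    refine ⟨(MvPolynomial.finSuccEquiv K 0).toRingEquiv, isUnit_of_ne_zero_of_isEmpty ?_⟩
    exact Polynomial.leadingCoeff_ne_zero.2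
      ((map_ne_zero_iff _ (MvPolynomial.finSuccEquiv K 0).injective).2 hf)
  | succ m ih =>
    set e := (MvPolynomial.finSuccEquiv K (m + 1)).toRingEquiv
    have he : (e f).leadingCoeff ≠ 0 :=
      Polynomial.leadingCoeff_ne_zero.2 ((map_ne_zero_iff _ e.injective).2 hf)
    obtain ⟨τ, hτ⟩ := ih he
    set g := Polynomial.mapEquiv τ (e f)
    have hg : g.leadingCoeff = τ (e f).leadingCoeff :=
      Polynomial.leadingCoeff_map_of_injective (f := τ.toRingHom) τ.injective _
    obtain ⟨σ, hσ⟩ := exists_ringEquiv_isUnit_leadingCoeff_bivariate g (hg ▸ hτ)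
    set ρ := (MvPolynomial.finSuccEquiv K m).toRingEquiv.symm
    refine ⟨((e.trans (Polynomial.mapEquiv τ)).trans σ).trans (Polynomial.mapEquiv ρ), ?_⟩
    have hρ : (Polynomial.mapEquiv ρ (σ g)).leadingCoeff = ρ (σ g).leadingCoeff :=
      Polynomial.leadingCoeff_map_of_injective (f := ρ.toRingHom) ρ.injective _
    change IsUnit (Polynomial.mapEquiv ρ (σ g)).leadingCoeff
    rw [hρ]
    exact hσ.map ρ

end ChangeOfVariables

section Columns

open Matrix (replicateCol)

theorem map_replicateCol_single {n : ℕ} {R S : Type*} [CommRing R] [CommRing S] (f : R →+* S)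
    (j : Fin n) :
    (replicateCol Unit (Pi.single j 1)).map f = replicateCol Unit (Pi.single j 1) := by
  ext k l
  simp [Pi.single_apply, apply_ite f]

theorem rowEquiv_single_of_unimodular {K : Type*} [Field K] {m n : ℕ} (hn : 3 ≤ n) (j : Fin n)
    {v : Fin n → MvPolynomial (Fin m) K} (hv : Unimodular v) :
    RowEquiv (replicateCol Unit v) (replicateCol Unit (Pi.single j 1)) := by
  obtain ⟨i, hi⟩ := hv.exists_ne_zero
  induction m generalizing i with
  | zero =>
    obtain ⟨k, hki, hkj⟩ := Fin.exists_ne_and_ne_of_two_lt i j hn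
    exact (rowEquiv_single_of_isUnit hki.symm (isUnit_of_ne_zero_of_isEmpty hi)).trans
      (rowEquiv_single_of_isUnit hkj (by simp))
  | succ m ih =>
    obtain ⟨σ, hσ⟩ := exists_ringEquiv_isUnit_leadingCoeff hi
    have hσv := hv.map σ.toRingHom
    have hconst := rowEquiv_constant_of_isUnit_leadingCoeff hn hσv hσ
    have hσv₀ := hσv.map (Polynomial.evalRingHom (0 : MvPolynomial (Fin m) K))
    obtain ⟨i₀, hi₀⟩ := hσv₀.exists_ne_zero
    have hsingle := (ih hσv₀ i₀ hi₀).map C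
    rw [map_replicateCol_single] at hsingle
    have hback := (hconst.trans hsingle).map σ.symm.toRingHom
    rw [map_replicateCol_single] at hback
    convert hback using 1
    ext k l
    simp

end Columns

section Stabilization

open Matrix (replicateCol)

variable {n : ℕ} {R S : Type*} [CommRing R] [CommRing S]

/-- The block matrix `1 ⊕ A`. -/
def oneSum (A : Matrix (Fin n) (Fin n) R) : Matrix (Fin (n + 1)) (Fin (n + 1)) R :=
  Matrix.of (Matrix.vecCons (Pi.single 0 1) fun i => Matrix.vecCons 0 (A i))

theorem oneSum_one : oneSum (1 : Matrix (Fin n) (Fin n) R) = 1 := by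
  ext i j
  cases i using Fin.cases <;> cases j using Fin.cases <;>
    simp [oneSum, Matrix.one_apply, (Fin.succ_ne_zero _).symm]

theorem oneSum_mul (A B : Matrix (Fin n) (Fin n) R) : oneSum (A * B) = oneSum A * oneSum B := by
  ext i j
  cases i using Fin.cases <;> cases j using Fin.cases <;>
    simp [oneSum, Matrix.mul_apply, Fin.sum_univ_succ]

theorem det_oneSum (A : Matrix (Fin n) (Fin n) R) : (oneSum A).det = A.det := by
  have hA : (oneSum A).submatrix Fin.succ Fin.succ = A := rfl
  rw [Matrix.det_succ_column_zero, Fin.sum_univ_succ, Fin.succAbove_zero, hA]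
  simp [oneSum]

/-- The embedding `SL_n(R) → SL_{n+1}(R)`, `A ↦ 1 ⊕ A`. -/
def stabilize : SL(n, R) →* SL(n + 1, R) where
  toFun A := ⟨oneSum A, by rw [det_oneSum, A.det_coe]⟩
  map_one' := Subtype.ext oneSum_one
  map_mul' A B := Subtype.ext (oneSum_mul A.1 B.1)

@[simp]
theorem stabilize_zero (A : SL(n, R)) : stabilize A 0 = Pi.single 0 1 := rfl

@[simp]
theorem stabilize_succ_zero (A : SL(n, R)) (i : Fin n) : stabilize A i.succ 0 = 0 := rfl

@[simp]
theorem stabilize_succ_succ (A : SL(n, R)) (i j : Fin n) :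
    stabilize A i.succ j.succ = A i j := rfl

theorem stabilize_transvection {i j : Fin n} (h : i ≠ j) (a : R) :
    stabilize (transvection h a) = transvection ((Fin.succ_injective n).ne h) a := by
  ext k l
  cases k using Fin.cases <;> cases l using Fin.cases <;>
    simp [transvection_coe, Matrix.one_apply, Matrix.single_apply, (Fin.succ_ne_zero _).symm]

theorem map_stabilize (f : R →+* S) (A : SL(n, R)) :
    map f (stabilize A) = stabilize (map f A) := by
  ext i j
  cases i using Fin.cases <;> cases j using Fin.cases <;> simp

theorem stabilize_mem {A : SL(n, R)} (hA : A ∈ elemSL n R) : stabilize A ∈ elemSL (n + 1) R := by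
  have hle : elemSL n R ≤ (elemSL (n + 1) R).comap stabilize := le_iff.2 fun i j h a => by
    rw [Subgroup.mem_comap, stabilize_transvection]
    exact transvection_mem _ a
  exact hle hA

theorem mem_of_rowEquiv {g h : SL(n, R)} (hgh : RowEquiv g.1 h.1) (hh : h ∈ elemSL n R) :
    g ∈ elemSL n R := by
  obtain ⟨e, he, heq⟩ := hgh
  rw [show g = e * h from Subtype.ext heq]
  exact mul_mem he hh

theorem exists_rowEquiv_stabilize {g : SL(n + 1, R)} (hg₀ : g 0 0 = 1)
    (hg : ∀ i : Fin n, g i.succ 0 = 0) : ∃ A : SL(n, R), RowEquiv g.1 (stabilize A).1 := by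
  have hdet : (g.1.submatrix Fin.succ Fin.succ).det = 1 := by
    have h := g.det_coe
    rw [Matrix.det_succ_column_zero, Fin.sum_univ_succ] at h
    simpa [hg₀, hg] using h
  set A : SL(n, R) := ⟨_, hdet⟩
  set c := (fun j : Fin n => g 0 j.succ) ᵥ* A⁻¹.1 with hc
  have hx : ∑ i, c i • stabilize A i.succ ∈ Submodule.span R ((stabilize A).1 '' {0}ᶜ) :=
    sum_mem fun i _ => Submodule.smul_mem _ _ <|
      Submodule.subset_span (Set.mem_image_of_mem _ (Fin.succ_ne_zero i))
  have hcA (j : Fin n) : ∑ i, c i * A i j = g 0 j.succ := by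
    have h : c ᵥ* A.1 = fun j => g 0 j.succ := by
      rw [hc, Matrix.vecMul_vecMul, ← Matrix.SpecialLinearGroup.coe_mul, inv_mul_cancel,
        Matrix.SpecialLinearGroup.coe_one, Matrix.vecMul_one]
    exact congrFun h j
  refine ⟨A, ?_⟩
  convert RowEquiv.of_updateRow_add hx using 1
  ext i j
  cases i using Fin.cases <;> cases j using Fin.cases <;> simp [hg₀, hg, hcA]
  rfl

theorem mem_of_unimodular_of_stabilize_mem
    (hcol : ∀ v : Fin (n + 1) → R, Unimodular v →
      RowEquiv (replicateCol Unit v) (replicateCol Unit (Pi.single 0 1)))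
    (hstab : ∀ A : SL(n, R), stabilize A ∈ elemSL (n + 1) R) (g : SL(n + 1, R)) :
    g ∈ elemSL (n + 1) R := by
  obtain ⟨e, he, hcol⟩ := (hcol _ (unimodular_col g 0)).symm
  have hcol_zero (i) : (e * g) i 0 = replicateCol Unit (Pi.single 0 1) i () :=
    (congrFun (congrFun hcol i) ()).symm
  obtain ⟨A, hA⟩ := exists_rowEquiv_stabilize (g := e * g) (by simpa using hcol_zero 0)
    fun i => by simpa using hcol_zero i.succ
  exact (Subgroup.mul_mem_cancel_left _ he).1 (mem_of_rowEquiv hA (hstab A))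

end Stabilization

section MennickeSymbol

variable {R S : Type*} [CommRing R] [CommRing S]

/-- The Mennicke symbol of `(a, b)` is trivial if the matrices in `SL_2(R)` with first row
`(a, b)` become elementary in `SL_3(R)`. -/
def MennickeTrivial (a b : R) : Prop :=
  ∀ A : SL(2, R), A 0 0 = a → A 0 1 = b → stabilize A ∈ elemSL 3 R

theorem stabilize_mul_transvection_mem_iff {n : ℕ} {A : SL(n, R)} {i j : Fin n} (h : i ≠ j)
    (t : R) : stabilize (A * transvection h t) ∈ elemSL (n + 1) R ↔
      stabilize A ∈ elemSL (n + 1) R := by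
  rw [_root_.map_mul, Subgroup.mul_mem_cancel_right _ (stabilize_mem (transvection_mem h t))]

theorem stabilize_transvection_mul_mem_iff {n : ℕ} {A : SL(n, R)} {i j : Fin n} (h : i ≠ j)
    (t : R) : stabilize (transvection h t * A) ∈ elemSL (n + 1) R ↔
      stabilize A ∈ elemSL (n + 1) R := by
  rw [_root_.map_mul, Subgroup.mul_mem_cancel_left _ (stabilize_mem (transvection_mem h t))]

theorem eq_transvection_of_row_zero_eq_single {g : SL(2, R)} (hg : g 0 = Pi.single 0 1) :
    g = transvection one_ne_zero (g 1 0) := by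
  have hdet : g 1 1 = 1 := by simpa [hg] using g.1.det_fin_two.symm.trans g.det_coe
  ext i j
  fin_cases i <;> fin_cases j <;> simp [transvection_coe, hg, hdet]

theorem mennickeTrivial_of_mem {A : SL(2, R)} (hA : stabilize A ∈ elemSL 3 R) :
    MennickeTrivial (A 0 0) (A 0 1) := by
  intro B h₀ h₁
  have hrow : B 0 = A 0 := by
    ext j
    fin_cases j
    exacts [h₀, h₁]
  have hrow_inv : (B * A⁻¹) 0 = Pi.single 0 1 := calc
    (B * A⁻¹) 0 = (A * A⁻¹) 0 := by
      rw [Matrix.SpecialLinearGroup.coe_mul, Matrix.SpecialLinearGroup.coe_mul,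
        Matrix.mul_apply_eq_vecMul, Matrix.mul_apply_eq_vecMul, hrow]
    _ = Pi.single 0 1 := by
      ext j
      simp [Matrix.one_apply, Pi.single_apply, eq_comm]
  rw [← inv_mul_cancel_right B A, eq_transvection_of_row_zero_eq_single hrow_inv]
  exact (stabilize_transvection_mul_mem_iff _ _).2 hA

theorem mennickeTrivial_of_row_add {A : SL(2, R)} (t : R)
    (h : MennickeTrivial (A 0 0 + t * A 1 0) (A 0 1 + t * A 1 1)) :
    MennickeTrivial (A 0 0) (A 0 1) := by
  refine mennickeTrivial_of_mem ((stabilize_transvection_mul_mem_iff zero_ne_one t).1 (h _ ?_ ?_))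
  all_goals simp [transvection_coe, Matrix.mul_apply, Matrix.one_apply]

theorem mennickeTrivial_one_left (b : R) : MennickeTrivial 1 b := by
  have h := mennickeTrivial_of_mem (stabilize_mem (transvection_mem (zero_ne_one (α := Fin 2)) b))
  simpa [transvection_coe] using h

namespace MennickeTrivial

variable {a a' b : R}

theorem add_mul_left (h : MennickeTrivial a b) (t : R) : MennickeTrivial (a + t * b) b := by
  rintro A h₀ rfl
  refine (stabilize_mul_transvection_mem_iff one_ne_zero (-t)).1 (h _ ?_ ?_)
  all_goals simp [transvection_coe, Matrix.mul_apply, Matrix.one_apply, h₀, mul_comm]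

theorem add_mul_right (h : MennickeTrivial a b) (t : R) : MennickeTrivial a (b + t * a) := by
  rintro A rfl h₁
  refine (stabilize_mul_transvection_mem_iff zero_ne_one (-t)).1 (h _ ?_ ?_)
  all_goals simp [transvection_coe, Matrix.mul_apply, Matrix.one_apply, h₁, mul_comm]

theorem of_isUnit_right (a : R) (hb : IsUnit b) : MennickeTrivial a b := by
  obtain ⟨u, rfl⟩ := hb
  simpa [mul_assoc] using (mennickeTrivial_one_left (u : R)).add_mul_left ((a - 1) * ↑u⁻¹)

theorem of_isUnit_left (b : R) (ha : IsUnit a) : MennickeTrivial a b := by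
  obtain ⟨u, rfl⟩ := ha
  simpa [mul_assoc] using (of_isUnit_right (u : R) isUnit_one).add_mul_right ((b - 1) * ↑u⁻¹)

theorem zero_left (b : R) : MennickeTrivial 0 b := by
  rintro A h₀ rfl
  have hdet := A.1.det_fin_two.symm.trans A.det_coe
  have hunit : IsUnit (A 0 1) := .of_mul_eq_one (-A 1 0) (by linear_combination hdet - A 1 1 * h₀)
  exact of_isUnit_right 0 hunit A h₀ rfl

theorem of_ringEquiv (σ : R ≃+* S) (h : MennickeTrivial (σ a) (σ b)) : MennickeTrivial a b := by
  rintro A rfl rfl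
  have hA := map_mem σ.symm.toRingHom (h (map σ.toRingHom A) rfl rfl)
  rw [map_stabilize] at hA
  convert hA
  ext i j
  simp

end MennickeTrivial

end MennickeSymbol

section MennickeMul

variable {R : Type*} [CommRing R]

theorem coe_stabilize_two (A : SL(2, R)) :
    (stabilize A).1 = !![1, 0, 0; 0, A 0 0, A 0 1; 0, A 1 0, A 1 1] := by
  ext i j
  fin_cases i <;> fin_cases j <;> rfl

theorem exists_mem_coe_eq_of_stabilize_mem {A : SL(2, R)} (hA : stabilize A ∈ elemSL 3 R) :
    ∃ g ∈ elemSL 3 R, g.1 = !![A 1 1, A 1 0, 0; A 0 1, A 0 0, 0; 0, 0, 1] := by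
  have h₀₂ : (0 : Fin 3) ≠ 2 := by decide
  have h₂₀ : (2 : Fin 3) ≠ 0 := by decide
  set w : SL(3, R) := transvection h₀₂ 1 * transvection h₂₀ (-1) * transvection h₀₂ 1 with hw
  have hwmem : w ∈ elemSL 3 R :=
    mul_mem (mul_mem (transvection_mem _ _) (transvection_mem _ _)) (transvection_mem _ _)
  have hwcoe : w.1 = !![0, 0, 1; 0, 1, 0; -1, 0, 0] := by
    ext i j
    fin_cases i <;> fin_cases j <;>
      simp [hw, transvection_coe, Matrix.mul_apply, Fin.sum_univ_three]
  refine ⟨w * stabilize A * w⁻¹, mul_mem (mul_mem hwmem hA) (inv_mem hwmem), ?_⟩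
  simp only [Matrix.SpecialLinearGroup.coe_mul, coe_stabilize_two, hwcoe,
    Matrix.SpecialLinearGroup.coe_inv, Matrix.adjugate_fin_three_of]
  simp

theorem mem_of_row_one_eq_single {g : SL(3, R)} (hrow : g 1 = Pi.single 1 1) (h₂₂ : g 2 2 = 1) :
    g ∈ elemSL 3 R := by
  have hdet : g 0 0 - g 0 2 * g 2 0 = 1 := by
    simpa [hrow, h₂₂] using g.1.det_fin_three.symm.trans g.det_coe
  have hg : g = transvection (show (2 : Fin 3) ≠ 1 by decide) (g 2 1) *
      transvection (show (0 : Fin 3) ≠ 1 by decide) (g 0 1) *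
      transvection (show (0 : Fin 3) ≠ 2 by decide) (g 0 2) *
      transvection (show (2 : Fin 3) ≠ 0 by decide) (g 2 0) := by
    ext i j
    fin_cases i <;> fin_cases j <;>
      simp [transvection_coe, Matrix.mul_apply, Fin.sum_univ_three, hrow, h₂₂]
    linear_combination hdet
  rw [hg]
  exact mul_mem (mul_mem (mul_mem (transvection_mem _ _) (transvection_mem _ _))
    (transvection_mem _ _)) (transvection_mem _ _)

namespace MennickeTrivial

variable {a a' b : R}

theorem stabilize_mem_of_col (h : MennickeTrivial a b) {A : SL(2, R)} (h₀₁ : A 0 1 = -b)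
    (h₁₁ : A 1 1 = a) : stabilize A ∈ elemSL 3 R := by
  rw [← inv_mem_iff, ← _root_.map_inv]
  exact h _ (by simp [Matrix.adjugate_fin_two, h₁₁]) (by simp [Matrix.adjugate_fin_two, h₀₁])

/-- Right multiplication by elementary matrices built from the factors `a` and `a'` turns the
middle row of `stabilize A` into `(0, 1, 0)`. -/
theorem mul (h : MennickeTrivial a b) (h' : MennickeTrivial a' b) :
    MennickeTrivial (a * a') b := by
  rintro A h₀ rfl
  have hdet : a * a' * A 1 1 - A 0 1 * A 1 0 = 1 :=
    h₀ ▸ A.1.det_fin_two.symm.trans A.det_coe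
  let B : SL(2, R) := ⟨!![a' * A 1 1, -A 0 1; -A 1 0, a], by
    rw [Matrix.det_fin_two_of]; linear_combination hdet⟩
  let B' : SL(2, R) := ⟨!![a * A 1 1, -A 0 1; -A 1 0, a'], by
    rw [Matrix.det_fin_two_of]; linear_combination hdet⟩
  have hB : stabilize B ∈ elemSL 3 R := h.stabilize_mem_of_col rfl rfl
  have hB' : stabilize B' ∈ elemSL 3 R := h'.stabilize_mem_of_col rfl rfl
  have hBcoe : (stabilize B).1 = !![1, 0, 0; 0, a' * A 1 1, -A 0 1; 0, -A 1 0, a] :=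
    coe_stabilize_two B
  obtain ⟨g, hg, hgcoe⟩ :
      ∃ g ∈ elemSL 3 R, g.1 = !![a', -A 1 0, 0; -A 0 1, a * A 1 1, 0; 0, 0, 1] :=
    exists_mem_coe_eq_of_stabilize_mem hB'
  have hmem : transvection (show (2 : Fin 3) ≠ 0 by decide) 1 *
      transvection (show (0 : Fin 3) ≠ 2 by decide) (a' - 1) * stabilize B * g ∈ elemSL 3 R :=
    mul_mem (mul_mem (mul_mem (transvection_mem _ _) (transvection_mem _ _)) hB) hg
  refine (Subgroup.mul_mem_cancel_right _ hmem).1 (mem_of_row_one_eq_single ?_ ?_)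
  · ext j
    fin_cases j <;>
      simp [hgcoe, hBcoe, coe_stabilize_two, transvection_coe, Matrix.mul_apply,
        Fin.sum_univ_three, h₀]
    · linear_combination (-a' * A 0 1) * hdet
    · linear_combination (a * a' * A 1 1 + 1) * hdet
    · ring
  · simp [hgcoe, hBcoe, coe_stabilize_two, transvection_coe, Matrix.mul_apply,
      Fin.sum_univ_three]
    linear_combination hdet

end MennickeTrivial

end MennickeMul

section MennickeLocal

open Polynomial (IsMonicOfDegree)

variable {R : Type*} [CommRing R]

theorem natDegree_modByMonic_le {d : ℕ} {p : R[X]}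
    (hp : IsMonicOfDegree p (d + 1)) (f : R[X]) : (f %ₘ p).natDegree ≤ d := by
  have hp_one : p ≠ 1 := fun h => by simpa [h] using hp.natDegree_eq
  have hlt := Polynomial.natDegree_modByMonic_lt f hp.monic hp_one
  rwa [hp.natDegree_eq, Nat.lt_succ_iff] at hlt

theorem mennickeTrivial_X {q : R[X]} (hq : IsUnit (q.coeff 0)) : MennickeTrivial X q := by
  have h := (MennickeTrivial.of_isUnit_right X (hq.map C)).add_mul_right q.divX
  rwa [add_comm, Polynomial.divX_mul_X_add] at h

/-- The constant coefficient of `p` can be cleared with `q`, so that `p` becomes divisible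
by `X`. -/
theorem mennickeTrivial_of_isUnit_coeff_zero [Nontrivial R] {d : ℕ} {p q : R[X]}
    (ih : ∀ p' : R[X], IsMonicOfDegree p' d → MennickeTrivial p' q)
    (hp : IsMonicOfDegree p (d + 1)) (hq : q.natDegree ≤ d) (hunit : IsUnit (q.coeff 0)) :
    MennickeTrivial p q := by
  obtain ⟨t, ht⟩ : ∃ t, p.coeff 0 + t * q.coeff 0 = 0 := by
    obtain ⟨u, hu⟩ := hunit
    exact ⟨-p.coeff 0 * ↑u⁻¹, by rw [← hu, Units.inv_mul_cancel_right, add_neg_cancel]⟩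
  have hdiv : X * (p + C t * q).divX = p + C t * q := by
    conv_rhs => rw [← Polynomial.X_mul_divX_add (p + C t * q)]
    simp [ht]
  have hmonic : IsMonicOfDegree (p + C t * q).divX d := by
    refine (Polynomial.isMonicOfDegree_X R).of_mul_left ?_
    rw [hdiv, add_comm 1 d]
    exact hp.add_right (((Polynomial.natDegree_C_mul_le t q).trans hq).trans_lt d.lt_succ_self)
  have hadd : MennickeTrivial (p + C t * q) q := hdiv ▸ (mennickeTrivial_X hunit).mul (ih _ hmonic)
  simpa using hadd.add_mul_left (-C t)

theorem exists_same_row_natDegree_le {d : ℕ} {A : SL(2, R[X])}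
    (hp : IsMonicOfDegree (A 0 0) (d + 1)) (hq : (A 0 1).natDegree ≤ d) :
    ∃ B : SL(2, R[X]), B 0 = A 0 ∧ (B 1 0).natDegree ≤ d ∧ (B 1 1).natDegree ≤ d := by
  set B := transvection one_ne_zero (-(A 1 0 /ₘ A 0 0)) * A with hB
  have hrow : B 0 = A 0 := by
    ext j
    simp [hB, transvection_coe, Matrix.mul_apply]
  have hr : B 1 0 = A 1 0 %ₘ A 0 0 := by
    have hadd : B 1 0 = A 1 0 + -(A 1 0 /ₘ A 0 0) * A 0 0 := by
      simp [hB, transvection_coe, Matrix.mul_apply, add_comm]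
    rw [hadd, Polynomial.modByMonic_eq_sub_mul_div]
    ring
  have hrdeg : (B 1 0).natDegree ≤ d := hr ▸ natDegree_modByMonic_le hp _
  refine ⟨B, hrow, hrdeg, ?_⟩
  have hdet : A 0 0 * B 1 1 = 1 + A 0 1 * B 1 0 := by
    rw [← hrow]
    linear_combination B.1.det_fin_two.symm.trans B.det_coe
  obtain hs | hs := eq_or_ne (B 1 1) 0
  · simp [hs]
  have hdeg : (1 + A 0 1 * B 1 0).natDegree ≤ d + d :=
    Polynomial.natDegree_add_le_of_degree_le (by simp) (Polynomial.natDegree_mul_le_of_le hq hrdeg)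
  rw [← hdet, hp.monic.natDegree_mul' hs, hp.natDegree_eq] at hdeg
  lia

theorem mennickeTrivial_of_natDegree_le [IsLocalRing R] {d : ℕ} {p q : R[X]}
    (ih : ∀ p' q' : R[X], IsMonicOfDegree p' d → MennickeTrivial p' q')
    (hp : IsMonicOfDegree p (d + 1)) (hq : q.natDegree ≤ d) : MennickeTrivial p q := by
  by_cases hunit : IsUnit (q.coeff 0)
  · exact mennickeTrivial_of_isUnit_coeff_zero (fun p' => ih p' q) hp hq hunit
  rintro A rfl rfl
  obtain ⟨B, hrow, hr, hs⟩ := exists_same_row_natDegree_le hp hq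
  rw [← hrow] at hp hq hunit
  have hdet : (B 0 0).coeff 0 * (B 1 1).coeff 0 - (B 0 1).coeff 0 * (B 1 0).coeff 0 = 1 := by
    simpa [Polynomial.mul_coeff_zero] using
      congrArg (Polynomial.coeff · 0) (B.1.det_fin_two.symm.trans B.det_coe)
  have hsunit : IsUnit ((B 1 1).coeff 0) := by
    rw [sub_eq_add_neg] at hdet
    refine isUnit_of_mul_isUnit_right
      ((IsLocalRing.isUnit_or_isUnit_of_add_one hdet).resolve_right fun h => hunit ?_)
    exact isUnit_of_mul_isUnit_left ((IsUnit.neg_iff _).1 h)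
  have hqunit : IsUnit ((B 0 1 + 1 * B 1 1).coeff 0) := by
    by_contra h
    refine IsLocalRing.nonunits_add h (mt (IsUnit.neg_iff _).1 hunit) ?_
    simpa using hsunit
  refine mennickeTrivial_of_row_add (A := B) 1 (mennickeTrivial_of_isUnit_coeff_zero
    (fun p' => ih p' _) (hp.add_right ?_) ?_ hqunit) A ?_ ?_
  · rwa [one_mul, Nat.lt_succ_iff]
  · rw [one_mul]
    exact Polynomial.natDegree_add_le_of_degree_le hq hs
  all_goals rw [hrow]

/-- The case of a local coefficient ring, due to Murthy. -/
theorem mennickeTrivial_of_isMonicOfDegree [IsLocalRing R] {d : ℕ} {p : R[X]}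
    (hp : IsMonicOfDegree p d) (q : R[X]) : MennickeTrivial p q := by
  induction d generalizing p q with
  | zero =>
    rw [Polynomial.isMonicOfDegree_zero_iff.1 hp]
    exact mennickeTrivial_one_left q
  | succ d ih =>
    have h := (mennickeTrivial_of_natDegree_le (fun p' q' hp' => ih hp' q') hp
      (natDegree_modByMonic_le hp q)).add_mul_right (q /ₘ p)
    rwa [mul_comm, Polynomial.modByMonic_add_div] at h

end MennickeLocal

section SpecialLinear

theorem mem_of_localization {R : Type*} [CommRing R] [IsDomain R] {n : ℕ} (hn : 3 ≤ n)
    {g : SL(n, R[X])}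
    (hlocal : ∀ (m : Ideal R) [m.IsMaximal],
      map (Polynomial.mapRingHom (algebraMap R (Localization.AtPrime m))) g ∈ elemSL n _)
    (hzero : map (Polynomial.evalRingHom 0) g ∈ elemSL n R) : g ∈ elemSL n R[X] := by
  have hrow : RowEquiv g.1 (map C (map (Polynomial.evalRingHom 0) g)).1 := by
    refine rowEquiv_constant_of_localization hn g.1 fun m _ => ⟨1, _, hlocal m, ?_⟩
    rw [Matrix.map_one _ C.map_zero C.map_one, Matrix.mul_one]
    rfl
  exact mem_of_rowEquiv hrow (map_mem C hzero)

theorem mennickeTrivial_of_monic {R : Type*} [CommRing R] [IsDomain R]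
    (h : ∀ a b : R, MennickeTrivial a b) {p : R[X]} (hp : p.Monic) (q : R[X]) :
    MennickeTrivial p q := by
  rintro A rfl rfl
  refine mem_of_localization le_rfl (fun m _ => ?_) ?_
  · rw [map_stabilize]
    exact mennickeTrivial_of_isMonicOfDegree ⟨rfl, hp.map _⟩ _ _ rfl rfl
  · rw [map_stabilize]
    exact h _ _ _ rfl rfl

theorem mennickeTrivial_of_isUnit_leadingCoeff {R : Type*} [CommRing R] [IsDomain R]
    (h : ∀ a b : R, MennickeTrivial a b) {p : R[X]} (hp : IsUnit p.leadingCoeff) (q : R[X]) :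
    MennickeTrivial p q := by
  have hmonic := Polynomial.monic_of_isUnit_leadingCoeff_inv_smul hp
  have hunit : IsUnit (C (hp.unit : R)) := hp.unit.isUnit.map C
  have hmul := (MennickeTrivial.of_isUnit_left q hunit).mul (mennickeTrivial_of_monic h hmonic q)
  rwa [← Polynomial.smul_eq_C_mul, ← Units.smul_def, smul_inv_smul] at hmul

theorem mennickeTrivial_mvPolynomial {K : Type*} [Field K] {m : ℕ}
    (p q : MvPolynomial (Fin m) K) : MennickeTrivial p q := by
  induction m with
  | zero =>
    obtain rfl | hp := eq_or_ne p 0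
    · exact .zero_left q
    · exact .of_isUnit_left q (isUnit_of_ne_zero_of_isEmpty hp)
  | succ m ih =>
    obtain rfl | hp := eq_or_ne p 0
    · exact .zero_left q
    obtain ⟨σ, hσ⟩ := exists_ringEquiv_isUnit_leadingCoeff hp
    exact .of_ringEquiv σ (mennickeTrivial_of_isUnit_leadingCoeff ih hσ _)

theorem eq_top_of_three_le {K : Type*} [Field K] {m n : ℕ} (hn : 3 ≤ n) :
    elemSL n (MvPolynomial (Fin m) K) = ⊤ := by
  induction n, hn using Nat.le_induction with
  | base =>
    refine (Subgroup.eq_top_iff' _).2 (mem_of_unimodular_of_stabilize_mem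
      (fun v => rowEquiv_single_of_unimodular le_rfl 0) fun A => ?_)
    exact mennickeTrivial_mvPolynomial _ _ A rfl rfl
  | succ n hn ih =>
    refine (Subgroup.eq_top_iff' _).2 (mem_of_unimodular_of_stabilize_mem
      (fun v => rowEquiv_single_of_unimodular (hn.trans n.le_succ) 0) fun A => ?_)
    exact stabilize_mem (ih ▸ Subgroup.mem_top A)

end SpecialLinear

end elemSL

/-- Suslin's structure theorem: `SL_n(K[x₁,…,x_m]) = E_n(K[x₁,…,x_m])` for a field `K`
and `n ≥ 3`; in particular `K₁^{SL_n}` of a polynomial ring over a field is trivial. -/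
theorem SL_poly_eq_elementary (n : ℕ) (hn : 3 ≤ n) (K : Type*) [Field K] (m : ℕ) :
    ∀ g : Matrix.SpecialLinearGroup (Fin n) (MvPolynomial (Fin m) K),
      g ∈ elemSL n (MvPolynomial (Fin m) K) :=
  (Subgroup.eq_top_iff' _).1 (elemSL.eq_top_of_three_le hn)
end
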